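/- Let K be a finite 2-dimensional geometric simplicial complex in ℝⁿ with at least one face. Then the space |K| is homeomorphic to the unit sphere S² = {x ∈ ℝ³ : ‖x‖ = 1} if and only if |K| is connected, K is locally planar, and χ(K) = 2. -/

import Mathlib

open Geometry

namespace PaperAlg

/-- Points of `ℝⁿ`. -/
abbrev Pt (n : ℕ) := EuclideanSpace ℝ (Fin n)

variable {n : ℕ}

/-- The 1-skeleton graph of a geometric simplicial complex `K`: its vertex set is the set of
vertices of `K`, and two vertices are adjacent iff they form an edge (a two-element face) of `K`. -/
def skeletonGraph (K : SimplicialComplex ℝ (Pt n)) : SimpleGraph K.vertices where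
  Adj u v := (u : Pt n) ≠ (v : Pt n) ∧
    ∃ s ∈ K.faces, (s : Set (Pt n)) = {(u : Pt n), (v : Pt n)}
  symm := by
    constructor
    rintro u v ⟨hne, s, hs, hset⟩
    exact ⟨fun h => hne h.symm, s, hs, by rw [hset, Set.pair_comm]⟩
  loopless := by constructor; rintro u ⟨hne, -⟩; exact hne rfl

/-- `K` is 2-dimensional: every face has at most three elements. -/
def TwoDimensional (K : SimplicialComplex ℝ (Pt n)) : Prop :=
  ∀ s ∈ K.faces, s.card ≤ 3

/-- The set of triangles (three-element faces) of `K` containing the finset `e`. -/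
def trianglesContaining (K : SimplicialComplex ℝ (Pt n)) (e : Finset (Pt n)) :
    Set (Finset (Pt n)) :=
  {t | t ∈ K.faces ∧ t.card = 3 ∧ e ⊆ t}

/-- An edge of `K` contained in exactly one triangle. -/
def IsBoundaryEdge (K : SimplicialComplex ℝ (Pt n)) (e : Finset (Pt n)) : Prop :=
  e ∈ K.faces ∧ e.card = 2 ∧ (trianglesContaining K e).ncard = 1

/-- An edge of `K` contained in exactly two triangles. -/
def IsInteriorEdge (K : SimplicialComplex ℝ (Pt n)) (e : Finset (Pt n)) : Prop :=
  e ∈ K.faces ∧ e.card = 2 ∧ (trianglesContaining K e).ncard = 2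

/-- The closed upper half-plane `{(a, b) ∈ ℝ² : b ≥ 0}`. -/
def HalfPlane : Set (ℝ × ℝ) := {p | 0 ≤ p.2}

/-- `x` has a neighborhood in `|K|` homeomorphic to an open subset of `ℝ²`. -/
def HasPlanarNbhd (K : SimplicialComplex ℝ (Pt n)) (x : Pt n) : Prop :=
  ∃ U : Set (Pt n), U ⊆ K.space ∧ U ∈ nhdsWithin x K.space ∧
    ∃ V : Set (ℝ × ℝ), IsOpen V ∧ Nonempty (↥U ≃ₜ ↥V)

/-- `x` has a neighborhood in `|K|` homeomorphic to an open subset of the closed half-plane. -/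
def HasHalfPlanarNbhd (K : SimplicialComplex ℝ (Pt n)) (x : Pt n) : Prop :=
  ∃ U : Set (Pt n), U ⊆ K.space ∧ U ∈ nhdsWithin x K.space ∧
    ∃ V : Set ↥HalfPlane, IsOpen V ∧ Nonempty (↥U ≃ₜ ↥V)

/-- `x` is a locally planar point of `|K|`. -/
def IsLocallyPlanarPt (K : SimplicialComplex ℝ (Pt n)) (x : Pt n) : Prop :=
  x ∈ K.space ∧ (HasPlanarNbhd K x ∨ HasHalfPlanarNbhd K x)

/-- `K` is locally planar if every point of `|K|` is locally planar. -/
def LocallyPlanar (K : SimplicialComplex ℝ (Pt n)) : Prop :=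
  ∀ x ∈ K.space, IsLocallyPlanarPt K x

/-- The vertices `a` of `K` such that `{v, a}` is an edge of `K`. -/
def linkVertices (K : SimplicialComplex ℝ (Pt n)) (v : Pt n) : Set (Pt n) :=
  {a | a ≠ v ∧ ∃ s ∈ K.faces, (s : Set (Pt n)) = {v, a}}

/-- The link graph `L(v)`: vertices are the `a` with `{v, a}` an edge of `K`, and `a`, `b`
are adjacent iff `{v, a, b}` is a triangle of `K`. -/
def linkGraph (K : SimplicialComplex ℝ (Pt n)) (v : Pt n) :
    SimpleGraph (linkVertices K v) where
  Adj a b := (a : Pt n) ≠ (b : Pt n) ∧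
    ∃ t ∈ K.faces, t.card = 3 ∧ (t : Set (Pt n)) = {v, (a : Pt n), (b : Pt n)}
  symm := by
    constructor
    rintro a b ⟨hne, t, ht, hc, hset⟩
    exact ⟨fun h => hne h.symm, t, ht, hc, by rw [hset, Set.pair_comm]⟩
  loopless := by constructor; rintro a ⟨hne, -⟩; exact hne rfl

/-- The vertices of `K` lying on some boundary edge. -/
def boundaryVertices (K : SimplicialComplex ℝ (Pt n)) : Set (Pt n) :=
  {v | ∃ e, IsBoundaryEdge K e ∧ v ∈ e}

/-- The boundary graph of `K`: the simple graph formed by the boundary edges of `K`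
and their endpoints. -/
def boundaryGraph (K : SimplicialComplex ℝ (Pt n)) :
    SimpleGraph (boundaryVertices K) where
  Adj u v := (u : Pt n) ≠ (v : Pt n) ∧
    ∃ e, IsBoundaryEdge K e ∧ (e : Set (Pt n)) = {(u : Pt n), (v : Pt n)}
  symm := by
    constructor
    rintro u v ⟨hne, e, he, hset⟩
    exact ⟨fun h => hne h.symm, e, he, by rw [hset, Set.pair_comm]⟩
  loopless := by constructor; rintro u ⟨hne, -⟩; exact hne rfl

/-- The Euler characteristic `χ(K) = V - E + F`. -/
noncomputable def eulerChar (K : SimplicialComplex ℝ (Pt n)) : ℤ :=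
  (K.vertices.ncard : ℤ)
    - ({e : Finset (Pt n) | e ∈ K.faces ∧ e.card = 2}.ncard : ℤ)
    + ({t : Finset (Pt n) | t ∈ K.faces ∧ t.card = 3}.ncard : ℤ)

/-- The three directed edges induced on its boundary by the cyclic ordering `(a, b, c)`. -/
def triDirs (o : Pt n × Pt n × Pt n) : Set (Pt n × Pt n) :=
  {(o.1, o.2.1), (o.2.1, o.2.2), (o.2.2, o.1)}

/-- `K` is orientable: one can assign to each triangle a cyclic ordering of its vertices so
that the two triangles containing any interior edge induce opposite directions on it. -/
def Orientable (K : SimplicialComplex ℝ (Pt n)) : Prop :=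
  ∃ ori : Finset (Pt n) → Pt n × Pt n × Pt n,
    (∀ t ∈ K.faces, t.card = 3 →
      (t : Set (Pt n)) = {(ori t).1, (ori t).2.1, (ori t).2.2}) ∧
    (∀ t₁ ∈ K.faces, ∀ t₂ ∈ K.faces, t₁.card = 3 → t₂.card = 3 → t₁ ≠ t₂ →
      ∀ e ∈ K.faces, e.card = 2 → e ⊆ t₁ → e ⊆ t₂ →
      ∀ x y : Pt n, x ∈ e → y ∈ e → x ≠ y →
        (x, y) ∈ triDirs (ori t₁) → (y, x) ∈ triDirs (ori t₂))

/-- The genus of a topological space `X`: the supremum of the numbers `m` for which there exist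
`m` pairwise disjoint subsets of `X`, each homeomorphic to the circle `S¹`, whose union has
connected complement. -/
noncomputable def genus (X : Type*) [TopologicalSpace X] : ℕ :=
  sSup {m : ℕ | ∃ C : Fin m → Set X,
    (Pairwise fun i j => Disjoint (C i) (C j)) ∧
    (∀ i, Nonempty (↥(C i) ≃ₜ ↥(Metric.sphere (0 : EuclideanSpace ℝ (Fin 2)) 1))) ∧
    IsConnected (⋃ i, C i)ᶜ}

section PartA
open Topology Metric Set

theorem hasLog_homotopy {A : Type*} [TopologicalSpace A] (H : unitInterval × A → ℂ)
    (hc : Continuous H) (h0 : ∀ p, H p ≠ 0)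
    (hl : ∃ L : C(A, ℂ), ∀ z, Complex.exp (L z) = H (0, z)) :
    ∃ L : C(A, ℂ), ∀ z, Complex.exp (L z) = H (1, z) := by
  obtain ⟨L, hL⟩ := hl
  let H' : C(unitInterval × A, {z : ℂ // z ≠ 0}) := ⟨fun p => ⟨H p, h0 p⟩, by fun_prop⟩
  have hH0 : ∀ a, H' (0, a) = (fun z : ℂ ↦ (⟨_, z.exp_ne_zero⟩ : {z : ℂ // z ≠ 0})) (L a) := by
    intro a
    apply Subtype.ext
    exact (hL a).symm
  let G := Complex.isCoveringMap_exp.liftHomotopy H' L hH0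
  have hG := Complex.isCoveringMap_exp.liftHomotopy_lifts H' L hH0
  refine ⟨⟨fun z => G (1, z), by fun_prop⟩, fun z => ?_⟩
  have := congrFun hG (1, z)
  exact congrArg Subtype.val this

theorem not_log_odd (L : C(sphere (0 : ℂ) 1, ℂ)) (g : ℂ → ℂ) (hg : ∀ z, g (-z) = - g z)
    (hL : ∀ z, Complex.exp (L z) = g z) : False := by
  have hneg : ∀ z : sphere (0 : ℂ) 1, -(z : ℂ) ∈ sphere (0 : ℂ) 1 := by intro z; simp
  let φ : sphere (0 : ℂ) 1 → ℂ := fun z => L ⟨-z, hneg z⟩ - L z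
  have hφ : Continuous φ := by fun_prop
  have he : ∀ z, Complex.exp (φ z) = -1 := by
    intro z
    have h1 := hL ⟨-z, hneg z⟩
    have h2 := hL z
    have : g z ≠ 0 := by rw [← h2]; exact Complex.exp_ne_zero _
    simp only [φ, Complex.exp_sub, h1, h2, hg]
    field_simp
  have hconn : IsPreconnected (sphere (0 : ℂ) 1) :=
    isPreconnected_sphere (by simp [Complex.rank_real_complex]) 0 1
  have : PreconnectedSpace (sphere (0 : ℂ) 1) := isPreconnected_iff_preconnectedSpace.1 hconn
  let z1 : sphere (0 : ℂ) 1 := ⟨1, by simp⟩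
  have hcst := Complex.isCoveringMap_exp.const_of_comp hφ
    (fun a a' => Subtype.ext ((he a).trans (he a').symm)) z1 ⟨-z1, hneg z1⟩
  have : φ ⟨-z1, hneg z1⟩ = - φ z1 := by
    simp [φ]
  rw [this] at hcst
  have h0 : φ z1 = 0 := by
    have : (2 : ℂ) * φ z1 = 0 := by linear_combination hcst
    simpa using this
  have := he z1
  rw [h0] at this
  norm_num at this

theorem iod_complex (f : ℂ → ℂ) (hf : ContinuousOn f (closedBall 0 1))
    (hinj : InjOn f (closedBall 0 1)) : f '' closedBall 0 1 ∈ 𝓝 (f 0) := by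
  by_contra hcon
  have hcomp : IsCompact (f '' sphere 0 1) :=
    (isCompact_sphere _ _).image_of_continuousOn (hf.mono sphere_subset_closedBall)
  have h0 : f 0 ∉ f '' sphere 0 1 := by
    rintro ⟨z, hz, hz'⟩
    have := hinj (sphere_subset_closedBall hz) (by simp) hz'
    subst this
    simp at hz
  obtain ⟨δ, hδ, hball⟩ := Metric.mem_nhds_iff.1 (hcomp.isClosed.isOpen_compl.mem_nhds h0)
  have : ∃ w ∈ ball (f 0) δ, w ∉ f '' closedBall 0 1 := by
    by_contra! h
    exact hcon (Filter.mem_of_superset (ball_mem_nhds _ hδ) h)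
  obtain ⟨w, hw, hwn⟩ := this
  have hcl : ∀ (z : sphere (0 : ℂ) 1) (c : ℂ), ‖c‖ ≤ 1 → c * (z : ℂ) ∈ closedBall (0 : ℂ) 1 := by
    intro z c hc
    have : ‖(z : ℂ)‖ = 1 := by simpa using z.2
    simp [this, hc]
  have hreal : ∀ s : unitInterval, ‖((s : ℝ) : ℂ)‖ ≤ 1 := by
    intro s
    rw [Complex.norm_real, Real.norm_of_nonneg s.2.1]; exact s.2.2
  have hcont : ∀ (φ : unitInterval → ℂ), Continuous φ → (∀ s, ‖φ s‖ ≤ 1) →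
      Continuous (fun p : unitInterval × sphere (0 : ℂ) 1 => f (φ p.1 * p.2)) := by
    intro φ hφ hn
    exact hf.comp_continuous (by fun_prop) (fun p => hcl p.2 _ (hn p.1))
  have step0 := hasLog_homotopy (A := sphere (0 : ℂ) 1)
    (fun p => f (((p.1 : ℝ) : ℂ) * p.2) - w)
    ((hcont (fun s => ((s : ℝ) : ℂ)) (by fun_prop) hreal).sub continuous_const)
    (fun p h => hwn ⟨_, hcl p.2 _ (hreal p.1), sub_eq_zero.1 h⟩)
    ⟨ContinuousMap.const _ (Complex.log (f 0 - w)), fun z => by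
      have : f 0 - w ≠ 0 := fun h => hwn ⟨0, by simp, sub_eq_zero.1 h⟩
      simp [Complex.exp_log this]⟩
  have step1 := hasLog_homotopy (A := sphere (0 : ℂ) 1)
    (fun p => f ((1 : ℂ) * p.2) - (w + ((p.1 : ℝ) : ℂ) * (f 0 - w)))
    ((hcont (fun s => 1) (by fun_prop) (by simp)).sub (by fun_prop))
    (fun p h => by
      have h1 : f p.2 ∈ ball (f 0) δ := by
        have e : f p.2 = w + ((p.1 : ℝ) : ℂ) * (f 0 - w) := by
          have := sub_eq_zero.1 h; rwa [one_mul] at this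
        rw [e]
        refine (convex_ball (f 0) δ).add_smul_sub_mem hw (mem_ball_self hδ) p.1.2
      exact hball h1 ⟨_, p.2.2, rfl⟩)
    (by
      obtain ⟨L, hL⟩ := step0
      exact ⟨L, fun z => by simpa using hL z⟩)
  have e1 : ∀ s : unitInterval, (0 : ℝ) < 1 + s := fun s => by have := s.2.1; linarith
  have e2 : ∀ s : unitInterval, ((1 + (s : ℝ) : ℝ) : ℂ) ≠ 0 := fun s => by
    exact_mod_cast (e1 s).ne'
  have c1 : Continuous (fun s : unitInterval => (((1 + (s : ℝ)) : ℝ) : ℂ)⁻¹) :=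
    Continuous.inv₀ (by fun_prop) e2
  have c2 : Continuous (fun s : unitInterval => -(((s : ℝ)) : ℂ) * (((1 + (s : ℝ)) : ℝ) : ℂ)⁻¹) :=
    Continuous.mul (by fun_prop) c1
  have n1 : ∀ s : unitInterval, ‖(((1 + (s : ℝ)) : ℝ) : ℂ)⁻¹‖ ≤ 1 := by
    intro s
    rw [norm_inv, Complex.norm_real, Real.norm_of_nonneg (e1 s).le]
    exact inv_le_one_of_one_le₀ (by linarith [s.2.1])
  have n2 : ∀ s : unitInterval, ‖-(((s : ℝ)) : ℂ) * (((1 + (s : ℝ)) : ℝ) : ℂ)⁻¹‖ ≤ 1 := by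
    intro s
    rw [norm_mul, norm_neg]
    exact mul_le_one₀ (hreal s) (norm_nonneg _) (n1 s)
  have step2 := hasLog_homotopy (A := sphere (0 : ℂ) 1)
    (fun p => f ((((1 + (p.1 : ℝ)) : ℝ) : ℂ)⁻¹ * p.2) -
      f ((-(((p.1 : ℝ)) : ℂ) * (((1 + (p.1 : ℝ)) : ℝ) : ℂ)⁻¹) * p.2))
    ((hcont _ c1 n1).sub (hcont _ c2 n2))
    (fun p h => by
      have := hinj (hcl p.2 _ (n1 p.1)) (hcl p.2 _ (n2 p.1)) (sub_eq_zero.1 h)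
      have hz : (p.2 : ℂ) ≠ 0 := by
        intro h0
        have := p.2.2
        simp [h0] at this
      have := mul_right_cancel₀ hz this
      have h4 : (1 : ℂ) = -((p.1 : ℝ) : ℂ) := by
        refine mul_right_cancel₀ (inv_ne_zero (e2 p.1)) ?_
        rw [one_mul]; exact this
      have h3 : (1 : ℝ) = -(p.1 : ℝ) := by exact_mod_cast h4
      linarith [p.1.2.1])
    (by
      obtain ⟨L, hL⟩ := step1
      exact ⟨L, fun z => by simpa using hL z⟩)
  obtain ⟨L, hL⟩ := step2
  refine not_log_odd L (fun z => f ((2 : ℂ)⁻¹ * z) - f (-((2 : ℂ)⁻¹ * z))) ?_ ?_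
  · intro z; simp
  · intro z
    rw [hL z]
    norm_num

theorem iod (f : ℝ × ℝ → ℝ × ℝ) (x : ℝ × ℝ) (U : Set (ℝ × ℝ)) (hU : U ∈ 𝓝 x)
    (hf : ContinuousOn f U) (hinj : InjOn f U) : f '' U ∈ 𝓝 (f x) := by
  let e := Complex.equivRealProdCLM.toHomeomorph
  obtain ⟨r, hr, hrU⟩ := Metric.nhds_basis_closedBall.mem_iff.1
    ((e.continuous.continuousAt (x := e.symm x)).preimage_mem_nhds (by simpa using hU))
  let g : ℂ → ℂ := fun z => e.symm (f (e (e.symm x + r * z)))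
  have hm : ∀ z ∈ closedBall (0 : ℂ) 1, e (e.symm x + r * z) ∈ U := by
    intro z hz
    apply hrU
    simp only [mem_closedBall, dist_self_add_left, norm_mul, Complex.norm_real, Real.norm_of_nonneg hr.le]
    have : ‖z‖ ≤ 1 := by simpa using hz
    nlinarith
  have hg := iod_complex g
    (e.symm.continuous.comp_continuousOn (hf.comp (by fun_prop) hm))
    (by
      intro z hz w hw h
      have := hinj (hm z hz) (hm w hw) (e.symm.injective h)
      have := e.injective this
      have hr' : (r : ℂ) ≠ 0 := by exact_mod_cast hr.ne'
      simpa [hr'] using this)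
  have hg0 : g 0 = e.symm (f x) := by simp [g]
  rw [hg0] at hg
  have h2 := e.symm.continuous.continuousAt.preimage_mem_nhds hg
  refine Filter.mem_of_superset h2 ?_
  rintro y ⟨z, hz, hzy⟩
  exact ⟨_, hm z hz, e.symm.injective hzy⟩

end PartA

section PartB
section Comb
variable {α : Type*} [DecidableEq α]

def edgesOf (T : Finset (Finset α)) : Finset (Finset α) := T.biUnion (fun t => t.powersetCard 2)
def vertsOf (T : Finset (Finset α)) : Finset α := T.biUnion id
def bd (S : Finset (Finset α)) (e : Finset α) : ZMod 2 := ((S.filter (fun t => e ⊆ t)).card : ZMod 2)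

structure Surf (T : Finset (Finset α)) : Prop where
  card3 : ∀ t ∈ T, t.card = 3
  le2 : ∀ e : Finset α, e.card = 2 → (T.filter (fun t => e ⊆ t)).card ≤ 2
  link : ∀ v, ∀ A ⊆ T, (∀ t ∈ A, ∀ t' ∈ T, v ∈ t → v ∈ t' → 2 ≤ (t ∩ t').card → t' ∈ A) →
    (∃ t ∈ A, v ∈ t) → ∀ t ∈ T, v ∈ t → t ∈ A
  conn : ∀ W ⊆ vertsOf T, W.Nonempty → (∀ t ∈ T, ∀ u ∈ t, u ∈ W → t ⊆ W) → W = vertsOf T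

def ClosedS (T : Finset (Finset α)) : Prop :=
  ∀ e ∈ edgesOf T, (T.filter (fun t => e ⊆ t)).card = 2

theorem mem_edgesOf {T : Finset (Finset α)} {e : Finset α} :
    e ∈ edgesOf T ↔ e.card = 2 ∧ ∃ t ∈ T, e ⊆ t := by
  simp only [edgesOf, Finset.mem_biUnion, Finset.mem_powersetCard]
  grind

theorem mem_vertsOf {T : Finset (Finset α)} {v : α} :
    v ∈ vertsOf T ↔ ∃ t ∈ T, v ∈ t := by
  simp [vertsOf]

theorem zmod2_cases (x : ZMod 2) : x = 0 ∨ x = 1 := by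
  revert x; decide

theorem bd_adj {T : Finset (Finset α)} (hT : Surf T) {A : Finset (Finset α)} (hA : A ⊆ T)
    {e t t' : Finset α} (he : e.card = 2) (ht : t ∈ A) (het : e ⊆ t) (ht' : t' ∈ T) (het' : e ⊆ t')
    (h0 : bd A e = 0) : t' ∈ A := by
  have h1 : Even (A.filter (fun t => e ⊆ t)).card := (ZMod.natCast_eq_zero_iff_even).1 h0
  have h2 : 0 < (A.filter (fun t => e ⊆ t)).card :=
    Finset.card_pos.2 ⟨t, by simp [ht, het]⟩
  have h3 : A.filter (fun t => e ⊆ t) ⊆ T.filter (fun t => e ⊆ t) := Finset.filter_subset_filter _ hA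
  have h4 := hT.le2 e he
  have h5 : 2 ≤ (A.filter (fun t => e ⊆ t)).card := by
    obtain ⟨k, hk⟩ := h1; omega
  have h6 := Finset.eq_of_subset_of_card_le h3 (by omega)
  have : t' ∈ T.filter (fun t => e ⊆ t) := by simp [ht', het']
  rw [← h6] at this
  exact (Finset.mem_filter.1 this).1

theorem link_exists {T : Finset (Finset α)} (hT : Surf T) {S : Finset (Finset α)} (hS : S ⊆ T)
    {v : α} {t1 t2 : Finset α} (h1 : t1 ∈ S) (hv1 : v ∈ t1) (h2 : t2 ∈ T) (hv2 : v ∈ t2)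
    (h2' : t2 ∉ S) : ∃ e : Finset α, e.card = 2 ∧ v ∈ e ∧ e ∈ edgesOf T ∧ bd S e ≠ 0 := by
  by_contra! hcon
  apply h2'
  refine hT.link v S hS ?_ ⟨t1, h1, hv1⟩ t2 h2 hv2
  intro t ht t' ht' hvt hvt' hc
  obtain ⟨e, he1, he2, he3⟩ := Finset.exists_subsuperset_card_eq (s := {v}) (t := t ∩ t') (n := 2)
    (by simp [hvt, hvt']) (by simp) hc
  have hee : e ⊆ t := he2.trans Finset.inter_subset_left
  refine bd_adj hT hS he3 ht hee ht' (he2.trans Finset.inter_subset_right)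
    (hcon e he3 (he1 (by simp)) (mem_edgesOf.2 ⟨he3, t, hS ht, hee⟩))

theorem ker2 {T : Finset (Finset α)} (hT : Surf T) {A : Finset (Finset α)} (hA : A ⊆ T)
    (h0 : ∀ e ∈ edgesOf T, bd A e = 0) : A = ∅ ∨ A = T := by
  by_cases hne : A = ∅
  · exact Or.inl hne
  right
  have key : ∀ t ∈ A, ∀ t' ∈ T, ∀ v, v ∈ t → v ∈ t' → t' ∈ A := by
    intro t ht t' ht' v hv hv'
    by_contra h
    obtain ⟨e, -, -, he, hb⟩ := link_exists hT hA ht hv ht' hv' h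
    exact hb (h0 e he)
  have hW := hT.conn (vertsOf A) (Finset.biUnion_subset_biUnion_of_subset_left _ hA) (by
    obtain ⟨t, ht⟩ := Finset.nonempty_iff_ne_empty.2 hne
    obtain ⟨v, hv⟩ := Finset.card_pos.1 (by rw [hT.card3 t (hA ht)]; norm_num : 0 < t.card)
    exact ⟨v, mem_vertsOf.2 ⟨t, ht, hv⟩⟩) (by
    intro t ht u hu huW w hw
    obtain ⟨t1, ht1, hut1⟩ := mem_vertsOf.1 huW
    exact mem_vertsOf.2 ⟨t, key t1 ht1 t ht u hut1 hu, hw⟩)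
  apply Finset.Subset.antisymm hA
  intro t ht
  obtain ⟨v, hv⟩ := Finset.card_pos.1 (by rw [hT.card3 t ht]; norm_num : 0 < t.card)
  have : v ∈ vertsOf A := by rw [hW]; exact mem_vertsOf.2 ⟨t, ht, hv⟩
  obtain ⟨t1, ht1, hut1⟩ := mem_vertsOf.1 this
  exact key t1 ht1 t ht v hut1 hv

def M1 (T : Finset (Finset α)) : Matrix (vertsOf T) (edgesOf T) (ZMod 2) :=
  fun v e => if (v : α) ∈ (e : Finset α) then 1 else 0
def M2 (T : Finset (Finset α)) : Matrix (edgesOf T) T (ZMod 2) :=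
  fun e t => if (e : Finset α) ⊆ (t : Finset α) then 1 else 0

theorem sum_edges_vert {T : Finset (Finset α)} (hT : Surf T) {t : Finset α} (ht : t ∈ T) (v : α) :
    (∑ e ∈ edgesOf T, (if v ∈ e then (1 : ZMod 2) else 0) * (if e ⊆ t then 1 else 0)) = 0 := by
  have h1 : ∀ e ∈ edgesOf T, (if v ∈ e then (1 : ZMod 2) else 0) * (if e ⊆ t then 1 else 0)
      = if v ∈ e ∧ e ⊆ t then 1 else 0 := by
    intro e _; split_ifs <;> simp_all
  rw [Finset.sum_congr rfl h1, Finset.sum_boole]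
  have h2 : (edgesOf T).filter (fun e => v ∈ e ∧ e ⊆ t) =
      if v ∈ t then (t.erase v).image (fun w => {v, w}) else ∅ := by
    ext e
    split_ifs with hv
    · simp only [Finset.mem_filter, mem_edgesOf, Finset.mem_image, Finset.mem_erase]
      constructor
      · rintro ⟨⟨hc, -⟩, hve, het⟩
        obtain ⟨a, b, hab, rfl⟩ := Finset.card_eq_two.1 hc
        simp only [Finset.mem_insert, Finset.mem_singleton] at hve
        rcases hve with rfl | rfl
        · exact ⟨b, ⟨hab.symm, het (by simp)⟩, rfl⟩
        · exact ⟨a, ⟨hab, het (by simp)⟩, Finset.pair_comm _ _⟩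
      · rintro ⟨w, ⟨hw, hwt⟩, rfl⟩
        have : ({v, w} : Finset α) ⊆ t := by grind
        exact ⟨⟨Finset.card_pair hw.symm, t, ht, this⟩, by simp, this⟩
    · simp only [Finset.mem_filter, Finset.notMem_empty, iff_false]
      rintro ⟨-, h, h'⟩
      exact hv (h' h)
  rw [h2]
  split_ifs with hv
  · rw [Finset.card_image_of_injOn, Finset.card_erase_of_mem hv, hT.card3 t ht]
    · rfl
    · intro a ha b hb hab
      simp only [Finset.coe_erase, Set.mem_sdiff, Finset.mem_coe, Set.mem_singleton_iff] at ha hb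
      have : a ∈ ({v, b} : Finset α) := by
        have hab' : ({v, a} : Finset α) = {v, b} := hab
        rw [← hab']; simp
      grind
  · simp

theorem bd_vert {T : Finset (Finset α)} (hT : Surf T) {A : Finset (Finset α)} (hA : A ⊆ T) (v : α) :
    (∑ e ∈ edgesOf T, (if v ∈ e then (1 : ZMod 2) else 0) * bd A e) = 0 := by
  have : ∀ e, bd A e = ∑ t ∈ A, if e ⊆ t then (1 : ZMod 2) else 0 := by
    intro e; rw [bd, Finset.sum_boole]
  simp_rw [this, Finset.mul_sum]
  rw [Finset.sum_comm]
  exact Finset.sum_eq_zero fun t ht => sum_edges_vert hT (hA ht) v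

theorem M1_mul_M2 {T : Finset (Finset α)} (hT : Surf T) : M1 T * M2 T = 0 := by
  ext v t
  rw [Matrix.mul_apply, Matrix.zero_apply, ← sum_edges_vert hT t.2 v.1]
  exact Finset.sum_coe_sort (edgesOf T)
    (fun e => (if v.1 ∈ e then (1 : ZMod 2) else 0) * (if e ⊆ t.1 then 1 else 0))

def toSet (T : Finset (Finset α)) (a : T → ZMod 2) : Finset (Finset α) :=
  (Finset.univ.filter (fun t => a t = 1)).map (Function.Embedding.subtype _)

theorem toSet_subset (T : Finset (Finset α)) (a : T → ZMod 2) : toSet T a ⊆ T := by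
  intro t ht
  simp [toSet] at ht
  exact ht.1

theorem mem_toSet (T : Finset (Finset α)) (a : T → ZMod 2) (t : T) : t.1 ∈ toSet T a ↔ a t = 1 := by
  simp [toSet]

theorem M2_mulVec (T : Finset (Finset α)) (a : T → ZMod 2) (e : edgesOf T) :
    (M2 T).mulVec a e = bd (toSet T a) e := by
  rw [bd, ← Finset.sum_boole, toSet, Finset.sum_map, Finset.sum_filter]
  simp only [Matrix.mulVec, dotProduct, M2]
  refine Finset.sum_congr rfl fun t _ => ?_
  rcases zmod2_cases (a t) with h | h <;> simp [h] <;> congr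

theorem rank_M1 {T : Finset (Finset α)} (hT : Surf T) (hne : T.Nonempty) :
    (M1 T).rank + 1 = (vertsOf T).card := by
  have h1 := (M1 T).transpose.mulVecLin.finrank_range_add_finrank_ker
  rw [← Matrix.rank, Matrix.rank_transpose, Module.finrank_pi, Fintype.card_coe] at h1
  suffices h : Module.finrank (ZMod 2) (LinearMap.ker (M1 T).transpose.mulVecLin) = 1 by omega
  obtain ⟨t0, ht0⟩ := hne
  obtain ⟨v0, hv0⟩ := Finset.card_pos.1 (by rw [hT.card3 t0 ht0]; norm_num : 0 < t0.card)
  have hv0' : v0 ∈ vertsOf T := mem_vertsOf.2 ⟨t0, ht0, hv0⟩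
  have hmv : ∀ (g : vertsOf T → ZMod 2) (u v : vertsOf T) (huv : u ≠ v)
      (he : ({u.1, v.1} : Finset α) ∈ edgesOf T),
      (M1 T).transpose.mulVec g ⟨_, he⟩ = g u + g v := by
    intro g u v huv he
    simp only [Matrix.mulVec, dotProduct, M1, Matrix.transpose_apply, ite_mul, one_mul, zero_mul]
    rw [← Finset.sum_filter]
    have : (Finset.univ.filter (fun x : vertsOf T => x.1 ∈ ({u.1, v.1} : Finset α))) = {u, v} := by
      ext x; simp only [Finset.mem_filter, Finset.mem_univ, true_and, Finset.mem_insert, Finset.mem_singleton, Subtype.ext_iff]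
    rw [this, Finset.sum_pair huv]
  have hone : (fun _ => 1 : vertsOf T → ZMod 2) ∈ LinearMap.ker (M1 T).transpose.mulVecLin := by
    rw [LinearMap.mem_ker]
    ext ⟨e, he⟩
    obtain ⟨hc, t, ht, het⟩ := mem_edgesOf.1 he
    obtain ⟨a, b, hab, rfl⟩ := Finset.card_eq_two.1 hc
    have := hmv (fun _ => 1) ⟨a, mem_vertsOf.2 ⟨t, ht, het (by simp)⟩⟩
      ⟨b, mem_vertsOf.2 ⟨t, ht, het (by simp)⟩⟩ (by simpa using hab) he
    rw [Matrix.mulVecLin_apply, this]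
    rfl
  refine finrank_eq_one (⟨_, hone⟩ : LinearMap.ker (M1 T).transpose.mulVecLin) ?_ ?_
  · intro h
    have := congrArg Subtype.val h
    have := congrFun this ⟨v0, hv0'⟩
    simp at this
  · rintro ⟨g, hg⟩
    refine ⟨g ⟨v0, hv0'⟩, ?_⟩
    have hW := hT.conn ((Finset.univ.filter (fun x : vertsOf T => g x = g ⟨v0, hv0'⟩)).map
      (Function.Embedding.subtype _)) (by intro x hx; simp at hx; exact hx.1)
      ⟨v0, by simp [hv0']⟩ (by
        intro t ht u hu huW w hw
        have hwV := mem_vertsOf.2 ⟨t, ht, hw⟩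
        have huV := mem_vertsOf.2 ⟨t, ht, hu⟩
        simp only [Finset.mem_map, Finset.mem_filter, Finset.mem_univ, true_and,
          Function.Embedding.coe_subtype, Subtype.exists, exists_and_right, exists_eq_right] at huW ⊢
        obtain ⟨_, huW⟩ := huW
        refine ⟨hwV, ?_⟩
        rw [← huW]
        by_cases huw : u = w
        · subst huw; rfl
        have he : ({u, w} : Finset α) ∈ edgesOf T :=
          mem_edgesOf.2 ⟨Finset.card_pair huw, t, ht, by grind⟩
        have h1 := hmv g ⟨u, huV⟩ ⟨w, hwV⟩ (by simpa using huw) he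
        have h2 : (M1 T).transpose.mulVec g = 0 := hg
        rw [h2] at h1
        have h3 : g ⟨u, huV⟩ + g ⟨w, hwV⟩ = 0 := h1.symm
        rw [CharTwo.add_eq_zero] at h3
        exact h3.symm)
    apply Subtype.ext
    funext x
    have hx := (Finset.ext_iff.1 hW x.1).2 x.2
    simp only [Finset.mem_map, Finset.mem_filter, Finset.mem_univ, true_and,
          Function.Embedding.coe_subtype, Subtype.exists, exists_and_right, exists_eq_right] at hx
    obtain ⟨_, hx⟩ := hx
    simp [hx]

theorem ker_M2 {T : Finset (Finset α)} (hT : Surf T) (a : T → ZMod 2)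
    (ha : a ∈ LinearMap.ker (M2 T).mulVecLin) : a = 0 ∨ (a = 1 ∧ ∀ e ∈ edgesOf T, bd T e = 0) := by
  have h1 : ∀ e ∈ edgesOf T, bd (toSet T a) e = 0 := by
    intro e he
    have h2 : (M2 T).mulVec a = 0 := ha
    rw [← M2_mulVec T a ⟨e, he⟩, h2]; rfl
  rcases ker2 hT (toSet_subset T a) h1 with h | h
  · left
    funext t
    have := mem_toSet T a t
    rw [h] at this
    rcases zmod2_cases (a t) with h | h
    · exact h
    · simp [h] at this
  · right
    refine ⟨?_, by rwa [h] at h1⟩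
    funext t
    exact (mem_toSet T a t).1 (by rw [h]; exact t.2)

theorem ker_M2_le {T : Finset (Finset α)} (hT : Surf T) :
    Module.finrank (ZMod 2) (LinearMap.ker (M2 T).mulVecLin) ≤ 1 := by
  by_cases h : (1 : T → ZMod 2) ∈ LinearMap.ker (M2 T).mulVecLin
  · refine finrank_le_one ⟨1, h⟩ ?_
    rintro ⟨a, ha⟩
    rcases ker_M2 hT a ha with rfl | ⟨rfl, -⟩
    · exact ⟨0, by apply Subtype.ext; simp⟩
    · exact ⟨1, by simp⟩
  · have : LinearMap.ker (M2 T).mulVecLin = ⊥ := by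
      rw [eq_bot_iff]
      intro a ha
      rcases ker_M2 hT a ha with rfl | ⟨rfl, -⟩
      · simp
      · exact absurd ha h
    rw [this]; simp

theorem rank_M2 (T : Finset (Finset α)) :
    (M2 T).rank + Module.finrank (ZMod 2) (LinearMap.ker (M2 T).mulVecLin) = T.card := by
  have h1 := (M2 T).mulVecLin.finrank_range_add_finrank_ker
  rwa [← Matrix.rank, Module.finrank_pi, Fintype.card_coe] at h1

theorem closed_of_bd {T : Finset (Finset α)} (hT : Surf T) (h : ∀ e ∈ edgesOf T, bd T e = 0) :
    ClosedS T := by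
  intro e he
  have h1 : Even (T.filter (fun t => e ⊆ t)).card := (ZMod.natCast_eq_zero_iff_even).1 (h e he)
  obtain ⟨hc, t, ht, het⟩ := mem_edgesOf.1 he
  have h2 : 0 < (T.filter (fun t => e ⊆ t)).card :=
    Finset.card_pos.2 ⟨t, by simp [ht, het]⟩
  have := hT.le2 e hc
  obtain ⟨k, hk⟩ := h1
  omega

theorem ClosedS.bd_eq {T : Finset (Finset α)} (h : ClosedS T) : ∀ e ∈ edgesOf T, bd T e = 0 := by
  intro e he
  rw [bd, h e he]; rfl

theorem euler_two {T : Finset (Finset α)} (hT : Surf T) (hne : T.Nonempty)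
    (hχ : ((vertsOf T).card : ℤ) - (edgesOf T).card + T.card = 2) :
    ClosedS T ∧ ∀ z : Finset α → ZMod 2,
      (∀ v, (∑ e ∈ edgesOf T, (if v ∈ e then (1 : ZMod 2) else 0) * z e) = 0) →
      ∃ A ⊆ T, ∀ e ∈ edgesOf T, bd A e = z e := by
  have r1 := rank_M1 hT hne
  have r2 := rank_M2 T
  have k2 := ker_M2_le hT
  have k1 := (M1 T).mulVecLin.finrank_range_add_finrank_ker
  rw [← Matrix.rank, Module.finrank_pi, Fintype.card_coe] at k1
  have hle : LinearMap.range (M2 T).mulVecLin ≤ LinearMap.ker (M1 T).mulVecLin := by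
    rintro _ ⟨a, rfl⟩
    rw [LinearMap.mem_ker, Matrix.mulVecLin_apply, Matrix.mulVecLin_apply, Matrix.mulVec_mulVec,
      M1_mul_M2 hT, Matrix.zero_mulVec]
  have hle' := Submodule.finrank_mono hle
  rw [← Matrix.rank] at hle'
  have heq := Submodule.eq_of_le_of_finrank_eq hle (by rw [← Matrix.rank]; omega)
  constructor
  · have hk : 0 < Module.finrank (ZMod 2) (LinearMap.ker (M2 T).mulVecLin) := by omega
    obtain ⟨⟨a, ha⟩, hane⟩ := Module.finrank_pos_iff_exists_ne_zero.1 hk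
    rcases ker_M2 hT a ha with rfl | ⟨-, h⟩
    · exact absurd rfl hane
    · exact closed_of_bd hT h
  · intro z hz
    have : (fun e : edgesOf T => z e) ∈ LinearMap.ker (M1 T).mulVecLin := by
      rw [LinearMap.mem_ker]
      ext v
      rw [Pi.zero_apply, ← hz v, ← Finset.sum_coe_sort]
      rfl
    rw [← heq] at this
    obtain ⟨a, ha⟩ := this
    refine ⟨toSet T a, toSet_subset T a, fun e he => ?_⟩
    rw [← M2_mulVec T a ⟨e, he⟩]
    exact congrFun ha ⟨e, he⟩

theorem euler_of_cocycle {T : Finset (Finset α)} (hT : Surf T) (hne : T.Nonempty) (hcl : ClosedS T)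
    (hco : ∀ c : Finset α → ZMod 2,
      (∀ t ∈ T, (∑ e ∈ t.powersetCard 2, c e) = 0) →
      ∃ g : α → ZMod 2, ∀ e ∈ edgesOf T, c e = ∑ v ∈ e, g v) :
    ((vertsOf T).card : ℤ) - (edgesOf T).card + T.card = 2 := by
  have r1 := rank_M1 hT hne
  have r2 := rank_M2 T
  have k2 := ker_M2_le hT
  have k3 : 0 < Module.finrank (ZMod 2) (LinearMap.ker (M2 T).mulVecLin) := by
    rw [Module.finrank_pos_iff_exists_ne_zero]
    refine ⟨⟨1, ?_⟩, ?_⟩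
    · rw [LinearMap.mem_ker]
      ext e
      rw [Matrix.mulVecLin_apply, M2_mulVec]
      have : toSet T 1 = T := by ext; simp [toSet]
      rw [this]
      exact hcl.bd_eq e e.2
    · obtain ⟨t, ht⟩ := hne
      intro h
      have := congrFun (congrArg Subtype.val h) ⟨t, ht⟩
      simp at this
  have k1 := (M2 T).transpose.mulVecLin.finrank_range_add_finrank_ker
  rw [← Matrix.rank, Module.finrank_pi, Fintype.card_coe, Matrix.rank_transpose] at k1
  have heq : LinearMap.ker (M2 T).transpose.mulVecLin = LinearMap.range (M1 T).transpose.mulVecLin := by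
    apply le_antisymm
    · intro z hz
      have hz' : (M2 T).transpose.mulVec z = 0 := hz
      obtain ⟨g, hg⟩ := hco (fun e => if h : e ∈ edgesOf T then z ⟨e, h⟩ else 0) (by
        intro t ht
        have := congrFun hz' ⟨t, ht⟩
        rw [Pi.zero_apply] at this
        rw [← this]
        simp only [Matrix.mulVec, dotProduct, M2, Matrix.transpose_apply, ite_mul, one_mul, zero_mul]
        have h1 : t.powersetCard 2 = (edgesOf T).filter (fun e => e ⊆ t) := by
          ext e
          simp only [Finset.mem_powersetCard, Finset.mem_filter, mem_edgesOf]
          grind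
        rw [h1, Finset.sum_filter, ← Finset.sum_coe_sort]
        simp)
      refine ⟨fun v => g v, ?_⟩
      ext e
      have := hg e e.2
      simp only [Subtype.coe_eta, Finset.coe_mem, dite_true] at this
      rw [this]
      simp only [Matrix.mulVecLin_apply, Matrix.mulVec, dotProduct, M1, Matrix.transpose_apply,
        ite_mul, one_mul, zero_mul]
      rw [Finset.sum_coe_sort (vertsOf T) (fun v => if v ∈ e.1 then g v else 0), ← Finset.sum_filter]
      refine Finset.sum_congr ?_ fun _ _ => rfl
      ext v
      obtain ⟨hc, t, ht, het⟩ := mem_edgesOf.1 e.2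
      simp only [Finset.mem_filter, mem_vertsOf]
      grind
    · rintro _ ⟨a, rfl⟩
      rw [LinearMap.mem_ker, Matrix.mulVecLin_apply, Matrix.mulVecLin_apply, Matrix.mulVec_mulVec,
        ← Matrix.transpose_mul, M1_mul_M2 hT, Matrix.transpose_zero, Matrix.zero_mulVec]
  rw [heq, ← Matrix.rank, Matrix.rank_transpose] at k1
  omega

end Comb

end PartB

section PartC
section Comb2
variable {α : Type*} [DecidableEq α]

def pathE : List α → Finset α → ZMod 2
  | [], _ => 0
  | [_], _ => 0
  | x :: y :: l, e => (if e = {x, y} then 1 else 0) + pathE (y :: l) e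

def cyc (b : α) (N : List α) (a : α) (e : Finset α) : ZMod 2 :=
  pathE (b :: (N ++ [a])) e + if e = {a, b} then 1 else 0

theorem pathE_append (l1 : List α) (c : α) (l2 : List α) (e : Finset α) :
    pathE (l1 ++ c :: l2) e = pathE (l1 ++ [c]) e + pathE (c :: l2) e := by
  induction l1 with
  | nil => simp [pathE]
  | cons x l1 ih =>
    cases l1 with
    | nil => simp [pathE]
    | cons y l1 =>
      simp only [List.cons_append, pathE] at ih ⊢
      rw [ih]; ring

theorem pathE_reverse (l : List α) (e : Finset α) : pathE l.reverse e = pathE l e := by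
  induction l with
  | nil => rfl
  | cons x l ih =>
    cases l with
    | nil => rfl
    | cons y l =>
      simp only [List.reverse_cons, List.append_assoc, List.cons_append, List.nil_append] at ih ⊢
      rw [pathE_append, ih]
      simp only [pathE, Finset.pair_comm y x]; ring

theorem cyc_reverse (b : α) (N : List α) (a : α) (e : Finset α) : cyc a N.reverse b e = cyc b N a e := by
  have : a :: (N.reverse ++ [b]) = (b :: (N ++ [a])).reverse := by simp
  rw [cyc, cyc, this, pathE_reverse, Finset.pair_comm]

theorem pathE_mem {l : List α} {e : Finset α} (h : pathE l e ≠ 0) : ∀ v ∈ e, v ∈ l := by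
  induction l with
  | nil => simp [pathE] at h
  | cons x l ih =>
    cases l with
    | nil => simp [pathE] at h
    | cons y l =>
      by_cases he : e = {x, y}
      · subst he; simp
      · rw [pathE, if_neg he, zero_add] at h
        intro v hv
        exact List.mem_cons_of_mem _ (ih h v hv)

theorem cyc_mem {b a : α} {N : List α} {e : Finset α} (h : cyc b N a e ≠ 0) :
    ∀ v ∈ e, v = b ∨ v ∈ N ∨ v = a := by
  by_cases he : e = {a, b}
  · subst he; simp
  · rw [cyc, if_neg he, add_zero] at h
    intro v hv
    have := pathE_mem h v hv
    simpa using this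

theorem pathE_zero {l : List α} {e : Finset α} {v : α} (hv : v ∈ e) (hl : v ∉ l) : pathE l e = 0 := by
  by_contra h
  exact hl (pathE_mem h v hv)

theorem pathE_one {l1 l2 : List α} {x y : α} (h : (l1 ++ x :: y :: l2).Nodup) :
    pathE (l1 ++ x :: y :: l2) {x, y} = 1 := by
  rw [pathE_append, pathE, if_pos rfl, pathE_zero (v := y) (by simp), pathE_zero (v := x) (by simp)]
  · ring
  · intro hx; simp [List.nodup_append] at h hx; tauto
  · intro hy; simp [List.nodup_append] at h hy; grind

theorem cyc_path {b a : α} {N : List α} (hN : N ≠ []) (h : (b :: (N ++ [a])).Nodup) :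
    pathE (b :: (N ++ [a])) {a, b} = 0 := by
  obtain ⟨x, N, rfl⟩ := List.exists_cons_of_ne_nil hN
  rw [List.cons_append, pathE, pathE_zero (v := b) (by simp), add_zero, if_neg]
  · intro he
    have : a ∈ ({b, x} : Finset α) := by rw [← he]; simp
    simp at this h
    grind
  · simp at h ⊢; tauto

theorem cyc_close {b a : α} {N : List α} (hN : N ≠ []) (h : (b :: (N ++ [a])).Nodup) :
    cyc b N a {a, b} = 1 := by
  rw [cyc, cyc_path hN h, if_pos rfl, zero_add]

theorem cyc_split (b : α) (N1 : List α) (c : α) (N2 : List α) (a : α) (e : Finset α) :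
    cyc b (N1 ++ c :: N2) a e = cyc b N1 c e + cyc b (c :: N2) a e := by
  have h := pathE_append (b :: N1) c (N2 ++ [a]) e
  simp only [List.cons_append] at h
  simp only [cyc, List.append_assoc, List.cons_append, pathE, h, Finset.pair_comm c b]
  linear_combination - CharTwo.add_self_eq_zero (if e = {b, c} then (1 : ZMod 2) else 0)

theorem cyc_ext (b : α) (N : List α) (a c : α) (e : Finset α) :
    cyc c (b :: N) a e = cyc b N a e + cyc b [c] a e := by
  simp only [cyc, List.cons_append, List.nil_append, pathE, Finset.pair_comm c b, Finset.pair_comm c a]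
  linear_combination - CharTwo.add_self_eq_zero (if e = {a, b} then (1 : ZMod 2) else 0)

theorem bd_single {a b c : α} (hab : a ≠ b) (hbc : b ≠ c) (hac : a ≠ c) {e : Finset α} (he : e.card = 2) :
    bd {({a, b, c} : Finset α)} e = cyc b [c] a e := by
  obtain ⟨x, y, hxy, rfl⟩ := Finset.card_eq_two.1 he
  have key : ∀ u v : α, u ≠ v → (({x, y} : Finset α) = {u, v} ↔ (x = u ∧ y = v) ∨ (x = v ∧ y = u)) := by
    intro u v huv
    constructor
    · intro h
      have h1 : x ∈ ({u, v} : Finset α) := by rw [← h]; simp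
      have h2 : y ∈ ({u, v} : Finset α) := by rw [← h]; simp
      simp at h1 h2
      grind
    · rintro (⟨rfl, rfl⟩ | ⟨rfl, rfl⟩)
      · rfl
      · exact Finset.pair_comm _ _
  simp only [bd, cyc, List.cons_append, List.nil_append, pathE, key _ _ hab, key _ _ hbc,
    key _ _ hac.symm, Finset.filter_singleton, Finset.insert_subset_iff, Finset.singleton_subset_iff,
    Finset.mem_insert, Finset.mem_singleton]
  by_cases h1 : x = a <;> by_cases h2 : x = b <;> by_cases h3 : x = c <;>
  by_cases h4 : y = a <;> by_cases h5 : y = b <;> by_cases h6 : y = c <;>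
  simp_all

theorem bd_sdiff {S A : Finset (Finset α)} (h : A ⊆ S) (e : Finset α) : bd (S \ A) e = bd S e + bd A e := by
  have h1 : (S.filter (fun t => e ⊆ t)).card =
      ((S \ A).filter (fun t => e ⊆ t)).card + (A.filter (fun t => e ⊆ t)).card := by
    rw [← Finset.card_union_of_disjoint]
    · rw [← Finset.filter_union, Finset.sdiff_union_of_subset h]
    · exact Finset.disjoint_filter_filter Finset.sdiff_disjoint
  simp only [bd]
  rw [h1]
  push_cast
  rw [add_assoc, CharTwo.add_self_eq_zero, add_zero]

theorem bd_exists {S : Finset (Finset α)} {e : Finset α} (h : bd S e ≠ 0) : ∃ t ∈ S, e ⊆ t := by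
  by_contra! hc
  apply h
  rw [bd, Finset.filter_false_of_mem hc]; simp

def Ph (E : Finset (Finset α)) (v : α) (z : Finset α → ZMod 2) : ZMod 2 :=
  ∑ e ∈ E, (if v ∈ e then (1 : ZMod 2) else 0) * z e

theorem Ph_add (E : Finset (Finset α)) (v : α) (z w : Finset α → ZMod 2) :
    Ph E v (fun e => z e + w e) = Ph E v z + Ph E v w := by
  simp [Ph, mul_add, Finset.sum_add_distrib]

theorem Ph_pair {E : Finset (Finset α)} (v : α) {x y : α} (hxy : x ≠ y) (h : {x, y} ∈ E) :
    Ph E v (fun e => if e = {x, y} then 1 else 0) =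
      (if v = x then 1 else 0) + (if v = y then 1 else 0) := by
  rw [Ph, Finset.sum_eq_single_of_mem _ h]
  · simp only [Finset.mem_insert, Finset.mem_singleton]
    by_cases h1 : v = x <;> by_cases h2 : v = y <;> simp_all
  · intro e _ he; simp [he]

theorem Ph_path {E : Finset (Finset α)} (v : α) (x : α) (N : List α) (a : α)
    (hch : List.IsChain (fun x y => x ≠ y ∧ {x, y} ∈ E) (x :: (N ++ [a]))) :
    Ph E v (pathE (x :: (N ++ [a]))) = (if v = x then 1 else 0) + (if v = a then 1 else 0) := by
  induction N generalizing x with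
  | nil =>
    simp only [List.nil_append, List.isChain_cons_cons] at hch
    have : pathE [x, a] = fun e => if e = {x, a} then 1 else 0 := by funext e; simp [pathE]
    rw [List.nil_append, this, Ph_pair v hch.1.1 hch.1.2]
  | cons y N ih =>
    simp only [List.cons_append, List.isChain_cons_cons] at hch
    have : pathE (x :: y :: (N ++ [a])) =
      fun e => (if e = {x, y} then 1 else 0) + pathE (y :: (N ++ [a])) e := by funext e; simp [pathE]
    rw [List.cons_append, this, Ph_add, Ph_pair v hch.1.1 hch.1.2, ih y hch.2]
    linear_combination CharTwo.add_self_eq_zero (if v = y then (1 : ZMod 2) else 0)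

theorem Ph_cyc {E : Finset (Finset α)} (v : α) (b : α) (N : List α) (a : α) (hab : a ≠ b)
    (he : {a, b} ∈ E)
    (hch : List.IsChain (fun x y => x ≠ y ∧ {x, y} ∈ E) (b :: (N ++ [a]))) :
    Ph E v (cyc b N a) = 0 := by
  have : cyc b N a = fun e => pathE (b :: (N ++ [a])) e + if e = {a, b} then 1 else 0 := rfl
  rw [this, Ph_add, Ph_path v b N a hch, Ph_pair v hab he]
  linear_combination CharTwo.add_self_eq_zero (if v = b then (1 : ZMod 2) else 0) +
    CharTwo.add_self_eq_zero (if v = a then (1 : ZMod 2) else 0)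

theorem path_cycle_zero {E : Finset (Finset α)} (l : List α) (hl : l.Nodup) (z : Finset α → ZMod 2)
    (hz : ∀ e ∈ E, z e ≠ 0 → pathE l e ≠ 0) (hP : ∀ v, Ph E v z = 0) : ∀ e ∈ E, z e = 0 := by
  induction l with
  | nil => intro e he; by_contra h; exact hz e he h rfl
  | cons x l ih =>
    cases l with
    | nil => intro e he; by_contra h; exact hz e he h rfl
    | cons y l =>
      apply ih hl.of_cons
      intro e he h
      have h1 := hz e he h
      by_cases hxy : e = {x, y}
      · exfalso
        have hP' := hP x
        rw [Ph, Finset.sum_eq_single_of_mem e he] at hP'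
        · simp [hxy] at hP' h; exact h hP'
        · intro e' he' hne
          by_cases hx : x ∈ e'
          · have : z e' = 0 := by
              by_contra h0
              have h2 := hz e' he' h0
              rw [pathE, if_neg (by rwa [hxy] at hne), zero_add] at h2
              exact (List.nodup_cons.1 hl).1 (pathE_mem h2 x hx)
            simp [this]
          · simp [hx]
      · rwa [pathE, if_neg hxy, zero_add] at h1

theorem cyc_cycle {E : Finset (Finset α)} {b : α} {N : List α} {a : α} (hN : N ≠ [])
    (hl : (b :: (N ++ [a])).Nodup) (z : Finset α → ZMod 2)
    (hz : ∀ e ∈ E, z e ≠ 0 → cyc b N a e ≠ 0) (hP : ∀ v, Ph E v z = 0)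
    (hC : ∀ v, Ph E v (cyc b N a) = 0) :
    (∀ e ∈ E, z e = 0) ∨ (∀ e ∈ E, z e = cyc b N a e) := by
  by_cases h : z {a, b} = 0
  · left
    refine path_cycle_zero _ hl z ?_ hP
    intro e he hze
    have := hz e he hze
    rw [cyc, if_neg (by rintro rfl; exact hze h), add_zero] at this
    exact this
  · right
    have h1 : z {a, b} = 1 := (zmod2_cases _).resolve_left h
    have := path_cycle_zero (E := E) _ hl (fun e => z e + cyc b N a e) ?_
      (fun v => by rw [Ph_add, hP, hC, add_zero])
    · intro e he
      exact (CharTwo.add_eq_zero).1 (this e he)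
    · intro e he hze
      have hne : e ≠ {a, b} := by
        rintro rfl
        apply hze
        simp only [h1, cyc_close hN hl]
        rfl
      have h2 : cyc b N a e ≠ 0 := by
        by_cases h3 : z e = 0
        · simpa [h3] using hze
        · exact hz e he h3
      rw [cyc, if_neg hne, add_zero] at h2
      exact h2

theorem chain_of_pathE {E : Finset (Finset α)} (l : List α) (hl : l.Nodup)
    (h : ∀ e : Finset α, e.card = 2 → pathE l e ≠ 0 → e ∈ E) :
    List.IsChain (fun x y => x ≠ y ∧ {x, y} ∈ E) l := by
  rw [List.isChain_iff_forall_rel_of_append_cons_cons]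
  rintro x y l1 l2 rfl
  have hxy : x ≠ y := by
    rintro rfl
    simp [List.nodup_append] at hl
  exact ⟨hxy, h _ (Finset.card_pair hxy) (by rw [pathE_one hl]; exact one_ne_zero)⟩

def HOne (T : Finset (Finset α)) : Prop := ∀ z : Finset α → ZMod 2,
      (∀ v, (∑ e ∈ edgesOf T, (if v ∈ e then (1 : ZMod 2) else 0) * z e) = 0) →
      ∃ A ⊆ T, ∀ e ∈ edgesOf T, bd A e = z e

theorem bd_mem_edges {T S : Finset (Finset α)} (hS : S ⊆ T) {e : Finset α} (he : e.card = 2)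
    (h : bd S e ≠ 0) : e ∈ edgesOf T := by
  obtain ⟨t, ht, het⟩ := bd_exists h
  exact mem_edgesOf.2 ⟨he, t, hS ht, het⟩

theorem exists_other {T S : Finset (Finset α)} (hT : ClosedS T) (hS : S ⊆ T) {e : Finset α}
    (he : e.card = 2) (h : bd S e ≠ 0) : ∃ t ∈ T, t ∉ S ∧ e ⊆ t := by
  by_contra! hc
  apply h
  have : S.filter (fun t => e ⊆ t) = T.filter (fun t => e ⊆ t) := by
    ext t
    simp only [Finset.mem_filter]
    exact ⟨fun ⟨h1, h2⟩ => ⟨hS h1, h2⟩, fun ⟨h1, h2⟩ => ⟨by by_contra h3; exact hc t h1 h3 h2, h2⟩⟩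
  rw [bd, this]
  exact hT.bd_eq e (bd_mem_edges hS he h)

theorem split_step {T : Finset (Finset α)} (hT : Surf T) (hcl : ClosedS T) (hH : HOne T)
    {S : Finset (Finset α)} (hS : S ⊆ T) {b a c : α} {N1 N2 : List α} (hN1 : N1 ≠ [])
    (hl : (b :: ((N1 ++ c :: N2) ++ [a])).Nodup)
    (hbd : ∀ e : Finset α, e.card = 2 → bd S e = cyc b (N1 ++ c :: N2) a e)
    (ht : {a, b, c} ∈ S) :
    ∃ S1 ⊆ S, S1 ≠ ∅ ∧ S1 ≠ S ∧ (∀ e : Finset α, e.card = 2 → bd S1 e = cyc b N1 c e) ∧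
      (∀ e : Finset α, e.card = 2 → bd (S \ S1) e = cyc b (c :: N2) a e) := by
  set N := N1 ++ c :: N2 with hN
  have hNne : N ≠ [] := by simp [hN]
  have hab : a ≠ b := by
    rintro rfl; simp at hl
  have hbc : b ≠ c := by
    rintro rfl; simp [hN] at hl
  have hac : a ≠ c := by
    rintro rfl; simp [hN, List.nodup_append] at hl
  have hl1 : (b :: (N1 ++ [c])).Nodup := by
    refine hl.sublist ?_
    simp [hN]
  have hl2 : (b :: ((c :: N2) ++ [a])).Nodup := by
    refine hl.sublist ?_
    simp [hN]
  have habE : {a, b} ∈ edgesOf T :=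
    mem_edgesOf.2 ⟨Finset.card_pair hab, _, hS ht, by grind⟩
  have hcbE : {c, b} ∈ edgesOf T :=
    mem_edgesOf.2 ⟨Finset.card_pair hbc.symm, _, hS ht, by grind⟩
  have cab : bd S {a, b} ≠ 0 := by
    rw [hbd _ (Finset.card_pair hab), cyc_close hNne hl]; exact one_ne_zero
  have hcb2 : cyc b N1 c {a, b} = 0 := by
    by_contra h
    have := cyc_mem h a (by simp)
    simp [hN, List.nodup_append] at hl
    grind
  have hchain : List.IsChain (fun x y => x ≠ y ∧ {x, y} ∈ edgesOf T) (b :: (N ++ [a])) := by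
    apply chain_of_pathE _ hl
    intro e he hp
    by_cases h : e = {a, b}
    · rw [h]; exact habE
    · apply bd_mem_edges hS he
      rw [hbd e he, cyc, if_neg h, add_zero]; exact hp
  have hchain1 : List.IsChain (fun x y => x ≠ y ∧ {x, y} ∈ edgesOf T) (b :: (N1 ++ [c])) := by
    refine hchain.infix ?_
    exact ⟨[], N2 ++ [a], by simp [hN]⟩
  have hP1 : ∀ v, Ph (edgesOf T) v (cyc b N1 c) = 0 := fun v =>
    Ph_cyc v b N1 c hbc.symm hcbE hchain1
  have hP : ∀ v, Ph (edgesOf T) v (cyc b N a) = 0 := fun v =>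
    Ph_cyc v b N a hab habE hchain
  obtain ⟨t', ht'T, ht'S, habt'⟩ := exists_other hcl hS (Finset.card_pair hab) cab
  have hS1 : ∃ S1 ⊆ T, (∀ e ∈ edgesOf T, bd S1 e = cyc b N1 c e) ∧ t' ∉ S1 := by
    obtain ⟨A, hA, hAe⟩ := hH _ hP1
    by_cases h : t' ∈ A
    · refine ⟨T \ A, Finset.sdiff_subset, fun e he => ?_, by simp [h]⟩
      rw [bd_sdiff hA, hcl.bd_eq e he, zero_add, hAe e he]
    · exact ⟨A, hA, hAe, h⟩
  obtain ⟨S1, hS1T, hS1e, ht'1⟩ := hS1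
  have hS1e' : ∀ e : Finset α, e.card = 2 → bd S1 e = cyc b N1 c e := by
    intro e he
    by_cases heT : e ∈ edgesOf T
    · exact hS1e e heT
    · have h1 : bd S1 e = 0 := by
        by_contra h; exact heT (bd_mem_edges hS1T he h)
      have h2 : cyc b N1 c e = 0 := by
        by_contra h
        apply heT
        by_cases h' : e = {c, b}
        · rw [h']; exact hcbE
        · rw [cyc, if_neg h', add_zero] at h
          by_contra
          apply h
          by_contra h5
          apply heT
          have h6 : bd S e ≠ 0 := by
            have e1 : pathE (b :: (N ++ [a])) e = pathE (b :: (N1 ++ [c])) e + pathE (c :: (N2 ++ [a])) e := by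
              have := pathE_append (b :: N1) c (N2 ++ [a]) e
              simpa [hN] using this
            have hex : ∃ x ∈ e, x ≠ c := by
              by_contra! hh
              have := Finset.card_le_one.2 (fun x hx y hy => (hh x hx).trans (hh y hy).symm)
              omega
            obtain ⟨x, hx, hxc⟩ := hex
            have hx1 := pathE_mem h x hx
            have e2 : pathE (c :: (N2 ++ [a])) e = 0 := by
              apply pathE_zero hx
              intro hx2
              simp [hN, List.nodup_append] at hl hx1 hx2
              grind
            have hxa : e ≠ {a, b} := by
              rintro rfl
              have := pathE_mem h a (by simp)
              simp [hN, List.nodup_append] at hl this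
              grind
            rw [hbd e he, cyc, if_neg hxa, add_zero, e1, e2, add_zero]; exact h
          exact bd_mem_edges hS he h6
      rw [h1, h2]
  have hcbS : ∀ u ∈ T, {c, b} ⊆ u → u ∈ S := by
    intro u hu hcu
    refine bd_adj hT hS (Finset.card_pair hbc.symm) ht (by grind) hu hcu ?_
    rw [hbd _ (Finset.card_pair hbc.symm)]
    by_contra h
    rw [hN, cyc_split, cyc_close hN1 hl1] at h
    apply h
    have : cyc b (c :: N2) a {c, b} = 1 := by
      have e1 : ({c, b} : Finset α) ≠ {a, b} := by
        intro h
        have : c ∈ ({a, b} : Finset α) := by rw [← h]; simp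
        simp at this
        grind
      rw [cyc, if_neg e1, List.cons_append, pathE, if_pos (Finset.pair_comm _ _),
        pathE_zero (v := b) (by simp)]
      · ring
      · simp at hl2 ⊢; tauto
    rw [this]; rfl
  have hsub : S1 ⊆ S := by
    have hA : S1 \ S ⊆ T := Finset.sdiff_subset.trans hS1T
    have hAdj : ∀ e ∈ edgesOf T, bd (S1 \ S) e ≠ 0 → cyc b N a e ≠ 0 := by
      intro e he h
      have hec := (mem_edgesOf.1 he).1
      obtain ⟨u, huA, hue⟩ := bd_exists h
      obtain ⟨w, hwT, hwA, hwe⟩ := exists_other hcl hA hec h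
      simp only [Finset.mem_sdiff, not_and, not_not] at huA hwA
      rw [← hbd e hec]
      intro h0
      have hwS : w ∉ S := fun hw => huA.2 (bd_adj hT hS hec hw hwe (hS1T huA.1) hue h0)
      have hw1 : w ∉ S1 := fun hw => hwS (hwA hw)
      have h1 : bd S1 e ≠ 0 := fun h1 => hw1 (bd_adj hT hS1T hec huA.1 hue hwT hwe h1)
      have hecb : e ≠ {c, b} := by
        rintro rfl
        exact huA.2 (hcbS u (hS1T huA.1) hue)
      rw [hS1e e he] at h1
      rw [hbd e hec, hN, cyc_split] at h0
      have h2 : cyc b (c :: N2) a e ≠ 0 := by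
        intro h2; rw [h2, add_zero] at h0; exact h1 h0
      apply hecb
      apply Finset.eq_of_subset_of_card_le
      · intro v hv
        have m1 := cyc_mem h1 v hv
        have m2 := cyc_mem h2 v hv
        simp [hN, List.nodup_append] at hl m2
        grind
      · rw [hec]; exact Finset.card_le_two
    have hAP : ∀ v, Ph (edgesOf T) v (bd (S1 \ S)) = 0 := fun v => bd_vert hT hA v
    have hA0 : S1 \ S = ∅ := by
      rcases cyc_cycle hNne hl _ hAdj hAP hP with h | h
      · rcases ker2 hT hA h with h | h
        · exact h
        · have := hS ht
          rw [← h] at this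
          exact absurd ht (Finset.mem_sdiff.1 this).2
      · have hU : S1 \ S = (S1 ∪ S) \ S := by ext x; simp; try tauto
        have hsubU : S ⊆ S1 ∪ S := Finset.subset_union_right
        rcases ker2 hT (A := S1 ∪ S) (Finset.union_subset hS1T hS) (by
          intro e he
          have h1 := h e he
          rw [hU, bd_sdiff hsubU, hbd e (mem_edgesOf.1 he).1] at h1
          simpa using h1) with h | h
        · have : ({a, b, c} : Finset α) ∈ S1 ∪ S := hsubU ht
          rw [h] at this; simp at this
        · rw [← h] at ht'T
          rcases Finset.mem_union.1 ht'T with h | h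
          · exact absurd h ht'1
          · exact absurd h ht'S
    exact Finset.sdiff_eq_empty_iff_subset.1 hA0
  have hbd2 : ∀ e : Finset α, e.card = 2 → bd (S \ S1) e = cyc b (c :: N2) a e := by
    intro e he
    rw [bd_sdiff hsub, hbd e he, hS1e' e he, hN, cyc_split]
    linear_combination CharTwo.add_self_eq_zero (cyc b N1 c e)
  refine ⟨S1, hsub, ?_, ?_, hS1e', hbd2⟩
  · rintro rfl
    have := hS1e' {c, b} (Finset.card_pair hbc.symm)
    rw [cyc_close hN1 hl1] at this
    simp [bd] at this
  · rintro rfl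
    have := hbd2 {a, b} (Finset.card_pair hab)
    rw [cyc_close (by simp) hl2] at this
    simp [bd] at this

end Comb2

end PartC

section PartD
section Disk
open Set

set_option linter.unusedSectionVars false

variable {X Y : Type*} [TopologicalSpace X] [T2Space X] [TopologicalSpace Y]

theorem exists_inv_contOn [T2Space Y] {f : Y → X} {Q : Set Y} (hQ : IsCompact Q) (hf : ContinuousOn f Q)
    (hi : InjOn f Q) (hne : Q.Nonempty) : ∃ g : X → Y, ContinuousOn g (f '' Q) ∧ ∀ y ∈ Q, g (f y) = y := by
  classical
  have : Nonempty Y := ⟨hne.some⟩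
  have hl : ∀ y ∈ Q, Function.invFunOn f Q (f y) = y := fun y hy => hi.leftInvOn_invFunOn hy
  refine ⟨Function.invFunOn f Q, ?_, hl⟩
  rw [continuousOn_iff_isClosed]
  intro t ht
  refine ⟨f '' (Q ∩ t), ((hQ.inter_right ht).image_of_continuousOn (hf.mono inter_subset_left)).isClosed, ?_⟩
  ext x
  constructor
  · rintro ⟨h1, y, hy, rfl⟩
    rw [mem_preimage, hl y hy] at h1
    exact ⟨⟨y, ⟨hy, h1⟩, rfl⟩, ⟨y, hy, rfl⟩⟩
  · rintro ⟨⟨y, ⟨hy, h1⟩, rfl⟩, h2⟩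
    refine ⟨?_, h2⟩
    rw [mem_preimage, hl y hy]; exact h1

/-- convex body in the plane -/
structure Body (Q : Set (ℝ × ℝ)) : Prop where
  cpt : IsCompact Q
  cvx : Convex ℝ Q
  ne : (interior Q).Nonempty

def IsDisk (D C : Set X) : Prop := ∃ Q : Set (ℝ × ℝ), Body Q ∧ ∃ f : ℝ × ℝ → X, ContinuousOn f Q ∧ InjOn f Q ∧
  f '' Q = D ∧ f '' frontier Q = C

theorem body_ball : Body (Metric.closedBall (0 : ℝ × ℝ) 1) :=
  ⟨isCompact_closedBall _ _, convex_closedBall _ _, ⟨0, by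
    rw [interior_closedBall _ one_ne_zero]; simp⟩⟩

theorem body_homeo {Q Q' : Set (ℝ × ℝ)} (h : Body Q) (h' : Body Q') :
    ∃ e : (ℝ × ℝ) ≃ₜ (ℝ × ℝ), e '' Q = Q' ∧ e '' frontier Q = frontier Q' := by
  obtain ⟨e, -, h1, h2⟩ := exists_homeomorph_image_eq h.cvx h.ne
    (NormedSpace.isVonNBounded_of_isBounded _ h.cpt.isBounded)
    h'.cvx h'.ne (NormedSpace.isVonNBounded_of_isBounded _ h'.cpt.isBounded)
  rw [h.cpt.isClosed.closure_eq, h'.cpt.isClosed.closure_eq] at h1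
  exact ⟨e, h1, h2⟩

theorem IsDisk.model {D C : Set X} (h : IsDisk D C) {Q : Set (ℝ × ℝ)} (hQ : Body Q) :
    ∃ f : ℝ × ℝ → X, ContinuousOn f Q ∧ InjOn f Q ∧ f '' Q = D ∧ f '' frontier Q = C := by
  obtain ⟨Q', hQ', f, hf, hi, h1, h2⟩ := h
  obtain ⟨e, e1, e2⟩ := body_homeo hQ hQ'
  have hm : MapsTo e Q Q' := by rw [← e1]; exact mapsTo_image _ _
  refine ⟨f ∘ e, hf.comp e.continuous.continuousOn hm, hi.comp e.injective.injOn hm, ?_, ?_⟩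
  · rw [image_comp, e1, h1]
  · rw [image_comp, e2, h2]

theorem alexander {h : ℝ × ℝ → ℝ × ℝ} (hc : ContinuousOn h (Metric.sphere 0 1))
    (hi : InjOn h (Metric.sphere 0 1)) (hs : h '' Metric.sphere 0 1 = Metric.sphere 0 1) :
    ∃ H : ℝ × ℝ → ℝ × ℝ, Continuous H ∧ InjOn H (Metric.closedBall 0 1) ∧
      H '' Metric.closedBall 0 1 = Metric.closedBall 0 1 ∧ ∀ x ∈ Metric.sphere (0 : ℝ × ℝ) 1, H x = h x := by
  have hn : ∀ x : ℝ × ℝ, x ≠ 0 → ‖x‖⁻¹ • x ∈ Metric.sphere (0 : ℝ × ℝ) 1 := by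
    intro x hx
    simp [norm_smul, norm_ne_zero_iff.2 hx]
  have hhn : ∀ x ∈ Metric.sphere (0 : ℝ × ℝ) 1, ‖h x‖ = 1 := by
    intro x hx
    have : h x ∈ Metric.sphere (0 : ℝ × ℝ) 1 := hs ▸ mem_image_of_mem h hx
    simpa using this
  set H : ℝ × ℝ → ℝ × ℝ := fun x => ‖x‖ • h (‖x‖⁻¹ • x) with hH
  have hnorm : ∀ x, ‖H x‖ = ‖x‖ := by
    intro x
    by_cases hx : x = 0
    · simp [hH, hx]
    · simp [hH, norm_smul, hhn _ (hn x hx)]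
  have hsp : ∀ x ∈ Metric.sphere (0 : ℝ × ℝ) 1, H x = h x := by
    intro x hx
    have : ‖x‖ = 1 := by simpa using hx
    simp [hH, this]
  refine ⟨H, ?_, ?_, ?_, hsp⟩
  · rw [continuous_iff_continuousAt]
    intro x
    by_cases hx : x = 0
    · subst hx
      have h0 : H 0 = 0 := by simp [hH]
      rw [ContinuousAt, h0, tendsto_zero_iff_norm_tendsto_zero]
      simp only [hnorm]
      simpa using (continuous_norm.tendsto (0 : ℝ × ℝ))
    · have hopen : IsOpen ({0}ᶜ : Set (ℝ × ℝ)) := isOpen_compl_singleton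
      refine ContinuousOn.continuousAt (s := {0}ᶜ) ?_ (hopen.mem_nhds hx)
      refine continuous_norm.continuousOn.smul (hc.comp ?_ (fun x hx => hn x hx))
      refine ContinuousOn.smul (continuous_norm.continuousOn.inv₀ ?_) continuousOn_id
      intro x hx
      exact norm_ne_zero_iff.2 hx
  · intro x _ y _ hxy
    have h1 : ‖x‖ = ‖y‖ := by rw [← hnorm x, ← hnorm y, hxy]
    by_cases hx : x = 0
    · subst hx
      have : ‖y‖ = 0 := by rw [← h1]; simp
      exact (norm_eq_zero.1 this).symm
    · have hx' : ‖x‖ ≠ 0 := norm_ne_zero_iff.2 hx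
      have hy : y ≠ 0 := norm_ne_zero_iff.1 (h1 ▸ hx')
      simp only [hH] at hxy
      rw [← h1] at hxy
      have h2 := smul_right_injective _ hx' hxy
      have h3 := hi (hn x hx) (by rw [h1]; exact hn y hy) h2
      exact smul_right_injective _ (inv_ne_zero hx') h3
  · ext y
    constructor
    · rintro ⟨x, hx, rfl⟩
      simpa [hnorm] using hx
    · intro hy
      by_cases hy0 : y = 0
      · exact ⟨0, by simp, by simp [hH, hy0]⟩
      · have := hn y hy0
        rw [← hs] at this
        obtain ⟨z, hz, hzy⟩ := this
        have hz1 : ‖z‖ = 1 := by simpa using hz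
        have hy' : ‖y‖ ≠ 0 := norm_ne_zero_iff.2 hy0
        refine ⟨‖y‖ • z, by simpa [norm_smul, hz1] using hy, ?_⟩
        simp only [hH, norm_smul, norm_norm, hz1, mul_one]
        rw [smul_smul, inv_mul_cancel₀ hy', one_smul, hzy, smul_smul, mul_inv_cancel₀ hy', one_smul]

theorem IsDisk.extend_ball {D C : Set X} (hD : IsDisk D C) {g : ℝ × ℝ → X}
    (hg : ContinuousOn g (Metric.sphere 0 1)) (hi : InjOn g (Metric.sphere 0 1))
    (hC : g '' Metric.sphere 0 1 = C) : ∃ f : ℝ × ℝ → X, ContinuousOn f (Metric.closedBall 0 1) ∧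
      InjOn f (Metric.closedBall 0 1) ∧ f '' Metric.closedBall 0 1 = D ∧
      ∀ x ∈ Metric.sphere (0 : ℝ × ℝ) 1, f x = g x := by
  obtain ⟨f, hf, hfi, h1, h2⟩ := hD.model body_ball
  rw [frontier_closedBall _ one_ne_zero] at h2
  have hsub : Metric.sphere (0 : ℝ × ℝ) 1 ⊆ Metric.closedBall 0 1 := Metric.sphere_subset_closedBall
  obtain ⟨k, hk, hkf⟩ := exists_inv_contOn (isCompact_closedBall _ _) hf hfi ⟨0, by simp⟩
  have hgm : ∀ x ∈ Metric.sphere (0 : ℝ × ℝ) 1, ∃ y ∈ Metric.sphere (0 : ℝ × ℝ) 1, f y = g x := by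
    intro x hx
    have : g x ∈ f '' Metric.sphere 0 1 := by rw [h2, ← hC]; exact mem_image_of_mem _ hx
    exact this
  have hkg : ∀ x ∈ Metric.sphere (0 : ℝ × ℝ) 1, k (g x) ∈ Metric.sphere (0 : ℝ × ℝ) 1 ∧ f (k (g x)) = g x := by
    intro x hx
    obtain ⟨y, hy, hyx⟩ := hgm x hx
    rw [← hyx, hkf y (hsub hy)]
    exact ⟨hy, rfl⟩
  obtain ⟨H, H1, H2, H3, H4⟩ := alexander (h := k ∘ g) (hk.comp hg (by
      intro x hx
      obtain ⟨y, hy, hyx⟩ := hgm x hx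
      exact ⟨y, hsub hy, hyx⟩)) (by
      intro x hx y hy hxy
      refine hi hx hy ?_
      rw [← (hkg x hx).2, ← (hkg y hy).2]
      exact congrArg f hxy) (by
      ext y
      constructor
      · rintro ⟨x, hx, rfl⟩
        exact (hkg x hx).1
      · intro hy
        have : f y ∈ g '' Metric.sphere 0 1 := by rw [hC, ← h2]; exact mem_image_of_mem _ hy
        obtain ⟨x, hx, hxy⟩ := this
        exact ⟨x, hx, by simp [hxy, hkf y (hsub hy)]⟩)
  have hm : MapsTo H (Metric.closedBall 0 1) (Metric.closedBall 0 1) := by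
    conv_rhs => rw [← H3]
    exact mapsTo_image _ _
  refine ⟨f ∘ H, hf.comp H1.continuousOn hm, hfi.comp H2 hm, by rw [image_comp, H3, h1], ?_⟩
  intro x hx
  simp only [Function.comp, H4 x hx]
  exact (hkg x hx).2

theorem IsDisk.extend {D C : Set X} (hD : IsDisk D C) {Q : Set (ℝ × ℝ)} (hQ : Body Q) {g : ℝ × ℝ → X}
    (hg : ContinuousOn g (frontier Q)) (hi : InjOn g (frontier Q))
    (hC : g '' frontier Q = C) : ∃ f : ℝ × ℝ → X, ContinuousOn f Q ∧
      InjOn f Q ∧ f '' Q = D ∧ ∀ x ∈ frontier Q, f x = g x := by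
  obtain ⟨e, e1, e2⟩ := body_homeo body_ball hQ
  rw [frontier_closedBall _ one_ne_zero] at e2
  have hm : MapsTo e (Metric.sphere 0 1) (frontier Q) := by rw [← e2]; exact mapsTo_image _ _
  obtain ⟨f, f1, f2, f3, f4⟩ := hD.extend_ball (g := g ∘ e) (hg.comp e.continuous.continuousOn hm)
    (hi.comp e.injective.injOn hm) (by rw [image_comp, e2, hC])
  have hm' : MapsTo e.symm Q (Metric.closedBall 0 1) := by
    intro x hx
    rw [← e1] at hx
    obtain ⟨y, hy, rfl⟩ := hx
    simpa using hy
  refine ⟨f ∘ e.symm, f1.comp e.symm.continuous.continuousOn hm', f2.comp e.symm.injective.injOn hm', ?_, ?_⟩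
  · rw [image_comp, ← f3, ← e1]
    congr 1
    ext x; simp [image_image]
  · intro x hx
    rw [← e2] at hx
    obtain ⟨y, hy, rfl⟩ := hx
    simp [f4 y hy]

/-- arcs -/
def IsArc (A : Set X) (p q : X) : Prop := ∃ α : ℝ → X, ContinuousOn α (Icc (-1) 1) ∧ InjOn α (Icc (-1) 1) ∧
  α '' Icc (-1) 1 = A ∧ α (-1) = p ∧ α 1 = q

theorem IsArc.symm {A : Set X} {p q : X} (h : IsArc A p q) : IsArc A q p := by
  obtain ⟨α, h1, h2, h3, h4, h5⟩ := h
  have hm : MapsTo (fun t : ℝ => -t) (Icc (-1) 1) (Icc (-1) 1) := by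
    intro t ht; simp only [mem_Icc] at *; constructor <;> linarith [ht.1, ht.2]
  refine ⟨fun t => α (-t), h1.comp continuous_neg.continuousOn hm, h2.comp neg_injective.injOn hm, ?_, by simpa, by simpa⟩
  rw [← h3]
  ext x
  constructor
  · rintro ⟨t, ht, rfl⟩; exact ⟨-t, hm ht, rfl⟩
  · rintro ⟨t, ht, rfl⟩; exact ⟨-t, hm ht, by simp⟩

theorem IsArc.left_mem {A : Set X} {p q : X} (h : IsArc A p q) : p ∈ A := by
  obtain ⟨α, h1, h2, h3, h4, h5⟩ := h
  rw [← h3, ← h4]; exact mem_image_of_mem _ (by norm_num)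

theorem IsArc.right_mem {A : Set X} {p q : X} (h : IsArc A p q) : q ∈ A := h.symm.left_mem

theorem IsArc.trans {A B : Set X} {p q r : X} (h : IsArc A p q) (h' : IsArc B q r) (hAB : A ∩ B ⊆ {q}) :
    IsArc (A ∪ B) p r := by
  obtain ⟨α, a1, a2, a3, a4, a5⟩ := h
  obtain ⟨β, b1, b2, b3, b4, b5⟩ := h'
  have hu : Icc (-1 : ℝ) 1 = Icc (-1) 0 ∪ Icc 0 1 := (Icc_union_Icc_eq_Icc (by norm_num) (by norm_num)).symm
  set γ : ℝ → X := fun t => if t ≤ 0 then α (2 * t + 1) else β (2 * t - 1) with hγ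
  have e1 : ∀ t, t ≤ 0 → γ t = α (2 * t + 1) := fun t ht => by simp [hγ, ht]
  have e2 : ∀ t, 0 ≤ t → γ t = β (2 * t - 1) := by
    intro t ht
    rcases ht.eq_or_lt with rfl | ht
    · simp [hγ, a5, b4]
    · simp [hγ, not_le.2 ht]
  have m1 : MapsTo (fun t : ℝ => 2 * t + 1) (Icc (-1) 0) (Icc (-1) 1) := by
    intro t ht; simp only [mem_Icc] at *; constructor <;> linarith [ht.1, ht.2]
  have m2 : MapsTo (fun t : ℝ => 2 * t - 1) (Icc 0 1) (Icc (-1) 1) := by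
    intro t ht; simp only [mem_Icc] at *; constructor <;> linarith [ht.1, ht.2]
  have key : ∀ s ∈ Icc (-1 : ℝ) 0, ∀ t ∈ Icc (0 : ℝ) 1, γ s = γ t → s = t := by
    intro s hs t ht hst
    rw [e1 s hs.2, e2 t ht.1] at hst
    have h1 : α (2 * s + 1) ∈ A := a3 ▸ mem_image_of_mem _ (m1 hs)
    have h2 : α (2 * s + 1) ∈ B := by rw [hst, ← b3]; exact mem_image_of_mem _ (m2 ht)
    have h3 : α (2 * s + 1) = q := hAB ⟨h1, h2⟩
    have h4 := a2 (m1 hs) (by norm_num : (1 : ℝ) ∈ Icc (-1 : ℝ) 1) (h3.trans a5.symm)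
    have h5 := b2 (m2 ht) (by norm_num : (-1 : ℝ) ∈ Icc (-1 : ℝ) 1) ((hst.symm.trans h3).trans b4.symm)
    simp only at h4 h5
    linarith
  refine ⟨γ, ?_, ?_, ?_, ?_, ?_⟩
  · rw [hu]
    refine ContinuousOn.union_of_isClosed ?_ ?_ isClosed_Icc isClosed_Icc
    · exact (a1.comp (by fun_prop) m1).congr (fun t ht => e1 t ht.2)
    · exact (b1.comp (by fun_prop) m2).congr (fun t ht => e2 t ht.1)
  · rw [hu]
    rintro s (hs | hs) t (ht | ht) hst
    · rw [e1 s hs.2, e1 t ht.2] at hst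
      have := a2 (m1 hs) (m1 ht) hst
      simp only at this
      linarith
    · exact key s hs t ht hst
    · exact (key t ht s hs hst.symm).symm
    · rw [e2 s hs.1, e2 t ht.1] at hst
      have := b2 (m2 hs) (m2 ht) hst
      simp only at this
      linarith
  · rw [hu, image_union, ← a3, ← b3]
    congr 1
    · ext x
      constructor
      · rintro ⟨t, ht, rfl⟩; exact ⟨_, m1 ht, (e1 t ht.2).symm⟩
      · rintro ⟨t, ht, rfl⟩
        have : (t - 1) / 2 ≤ 0 := by linarith [ht.2]
        refine ⟨(t - 1) / 2, ⟨by linarith [ht.1], this⟩, ?_⟩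
        rw [e1 _ this]; congr 1; ring
    · ext x
      constructor
      · rintro ⟨t, ht, rfl⟩; exact ⟨_, m2 ht, (e2 t ht.1).symm⟩
      · rintro ⟨t, ht, rfl⟩
        have : 0 ≤ (t + 1) / 2 := by linarith [ht.1]
        refine ⟨(t + 1) / 2, ⟨this, by linarith [ht.2]⟩, ?_⟩
        rw [e2 _ this]; congr 1; ring
  · rw [e1 _ (by norm_num), ← a4]; norm_num
  · rw [e2 _ (by norm_num), ← b5]; norm_num

/-- models -/
def MU : Set (ℝ × ℝ) := {p | 0 ≤ p.2 ∧ p.2 ≤ 1 - p.1 ^ 2}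
def MM : Set (ℝ × ℝ) := {p | -(1 - p.1 ^ 2) ≤ p.2 ∧ p.2 ≤ 1 - p.1 ^ 2}

theorem frontier_strip (u v : ℝ → ℝ) (hu : Continuous u) (hv : Continuous v) :
    frontier {p : ℝ × ℝ | u p.1 ≤ p.2 ∧ p.2 ≤ v p.1} =
      {p | u p.1 ≤ p.2 ∧ p.2 ≤ v p.1 ∧ (p.2 = u p.1 ∨ p.2 = v p.1)} ∧
    interior {p : ℝ × ℝ | u p.1 ≤ p.2 ∧ p.2 ≤ v p.1} = {p | u p.1 < p.2 ∧ p.2 < v p.1} := by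
  have hcl : IsClosed {p : ℝ × ℝ | u p.1 ≤ p.2 ∧ p.2 ≤ v p.1} :=
    (isClosed_le (hu.comp continuous_fst) continuous_snd).inter (isClosed_le continuous_snd (hv.comp continuous_fst))
  have hint : interior {p : ℝ × ℝ | u p.1 ≤ p.2 ∧ p.2 ≤ v p.1} = {p | u p.1 < p.2 ∧ p.2 < v p.1} := by
    apply Subset.antisymm
    · rintro ⟨x, y⟩ hp
      rw [mem_interior_iff_mem_nhds] at hp
      have hc : Continuous (fun e : ℝ => (x, y + e)) := by fun_prop
      have h1 := (hc.tendsto 0) (by simpa using hp)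
      rw [Filter.mem_map, Metric.mem_nhds_iff] at h1
      obtain ⟨ε, hε, h1⟩ := h1
      have h2 := h1 (show ε / 2 ∈ Metric.ball (0 : ℝ) ε by
        rw [Metric.mem_ball, dist_zero_right, Real.norm_eq_abs, abs_of_pos (by linarith)]; linarith)
      have h3 := h1 (show -(ε / 2) ∈ Metric.ball (0 : ℝ) ε by
        rw [Metric.mem_ball, dist_zero_right, Real.norm_eq_abs, abs_neg, abs_of_pos (by linarith)]; linarith)
      simp only [mem_preimage, mem_ofPred_eq] at h2 h3 ⊢
      constructor <;> linarith [h2.2, h3.1]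
    · apply interior_maximal
      · rintro p hp; exact ⟨hp.1.le, hp.2.le⟩
      · exact (isOpen_lt (hu.comp continuous_fst) continuous_snd).inter (isOpen_lt continuous_snd (hv.comp continuous_fst))
  refine ⟨?_, hint⟩
  rw [frontier, hcl.closure_eq, hint]
  ext p
  simp only [mem_sdiff, mem_ofPred_eq]
  constructor
  · rintro ⟨⟨h1, h2⟩, h3⟩
    refine ⟨h1, h2, ?_⟩
    by_contra h
    push Not at h
    exact h3 ⟨lt_of_le_of_ne h1 (Ne.symm h.1), lt_of_le_of_ne h2 h.2⟩
  · rintro ⟨h1, h2, h3⟩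
    refine ⟨⟨h1, h2⟩, ?_⟩
    rintro ⟨h4, h5⟩
    rcases h3 with h3 | h3 <;> linarith

theorem strip_MU : frontier MU = {p | 0 ≤ p.2 ∧ p.2 ≤ 1 - p.1 ^ 2 ∧ (p.2 = 0 ∨ p.2 = 1 - p.1 ^ 2)} ∧
    interior MU = {p | 0 < p.2 ∧ p.2 < 1 - p.1 ^ 2} :=
  frontier_strip (fun _ => (0 : ℝ)) (fun x : ℝ => 1 - x ^ 2) (by fun_prop) (by fun_prop)
theorem strip_MM : frontier MM = {p | -(1 - p.1 ^ 2) ≤ p.2 ∧ p.2 ≤ 1 - p.1 ^ 2 ∧ (p.2 = -(1 - p.1 ^ 2) ∨ p.2 = 1 - p.1 ^ 2)} ∧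
    interior MM = {p | -(1 - p.1 ^ 2) < p.2 ∧ p.2 < 1 - p.1 ^ 2} :=
  frontier_strip (fun x : ℝ => -(1 - x ^ 2)) (fun x : ℝ => 1 - x ^ 2) (by fun_prop) (by fun_prop)

theorem frontier_MU : frontier MU = {p | 0 ≤ p.2 ∧ p.2 ≤ 1 - p.1 ^ 2 ∧ (p.2 = 0 ∨ p.2 = 1 - p.1 ^ 2)} := strip_MU.1
theorem frontier_MM : frontier MM = {p | -(1 - p.1 ^ 2) ≤ p.2 ∧ p.2 ≤ 1 - p.1 ^ 2 ∧ (p.2 = -(1 - p.1 ^ 2) ∨ p.2 = 1 - p.1 ^ 2)} :=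
  strip_MM.1

theorem MM_convex : Convex ℝ MM := by
  rintro ⟨x, y⟩ ⟨h1, h2⟩ ⟨x', y'⟩ ⟨h3, h4⟩ a b ha hb hab
  have hb' : b = 1 - a := by linarith
  subst hb'
  simp only [MM, mem_ofPred_eq, Prod.mk_add_mk, Prod.smul_mk, smul_eq_mul] at *
  have := mul_nonneg (mul_nonneg ha hb) (sq_nonneg (x - x'))
  constructor <;> nlinarith

theorem MM_cpt : IsCompact MM := by
  refine Metric.isCompact_of_isClosed_isBounded ?_ ?_
  · exact (isClosed_le (f := fun p : ℝ × ℝ => -(1 - p.1 ^ 2)) (by fun_prop) continuous_snd).inter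
      (isClosed_le (g := fun p : ℝ × ℝ => 1 - p.1 ^ 2) continuous_snd (by fun_prop))
  · refine (Metric.isBounded_closedBall (x := (0 : ℝ × ℝ)) (r := 1)).subset ?_
    rintro ⟨x, y⟩ ⟨h1, h2⟩
    simp only at h1 h2
    rw [mem_closedBall_zero_iff, Prod.norm_def, max_le_iff, Real.norm_eq_abs, Real.norm_eq_abs, abs_le, abs_le]
    refine ⟨⟨?_, ?_⟩, ?_, ?_⟩ <;> nlinarith [sq_nonneg x]

theorem body_MM : Body MM := by
  refine ⟨MM_cpt, MM_convex, ⟨(0, 0), ?_⟩⟩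
  rw [strip_MM.2]
  norm_num

theorem MU_eq : MU = MM ∩ {p | 0 ≤ p.2} := by
  ext ⟨x, y⟩
  simp only [MU, MM, mem_ofPred_eq, mem_inter_iff]
  constructor
  · rintro ⟨h1, h2⟩; refine ⟨⟨?_, h2⟩, h1⟩; linarith
  · rintro ⟨⟨h1, h2⟩, h3⟩; exact ⟨h3, h2⟩

theorem body_MU : Body MU := by
  refine ⟨?_, ?_, ⟨(0, 1 / 2), ?_⟩⟩
  · rw [MU_eq]; exact MM_cpt.inter_right (isClosed_le (by fun_prop) (by fun_prop))
  · rw [MU_eq]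
    refine MM_convex.inter ?_
    rintro ⟨x, y⟩ h1 ⟨x', y'⟩ h2 a b ha hb hab
    simp only [mem_ofPred_eq, Prod.mk_add_mk, Prod.smul_mk, smul_eq_mul] at *
    positivity
  · rw [strip_MU.2]
    norm_num

theorem MM_abs {p : ℝ × ℝ} (h : p ∈ MM) : p.1 ∈ Icc (-1 : ℝ) 1 := by
  obtain ⟨x, y⟩ := p
  obtain ⟨h1, h2⟩ := h
  simp only at *
  constructor <;> nlinarith

theorem IsDisk.lune {D A B : Set X} {p q : X} (hD : IsDisk D (A ∪ B)) (hAB : A ∩ B ⊆ {p, q})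
    {α β : ℝ → X} (a1 : ContinuousOn α (Icc (-1) 1)) (a2 : InjOn α (Icc (-1) 1)) (a3 : α '' Icc (-1) 1 = A)
    (a4 : α (-1) = p) (a5 : α 1 = q)
    (b1 : ContinuousOn β (Icc (-1) 1)) (b2 : InjOn β (Icc (-1) 1)) (b3 : β '' Icc (-1) 1 = B)
    (b4 : β (-1) = p) (b5 : β 1 = q) :
    ∃ f : ℝ × ℝ → X, ContinuousOn f MU ∧ InjOn f MU ∧ f '' MU = D ∧
      (∀ x ∈ Icc (-1 : ℝ) 1, f (x, 0) = α x) ∧ (∀ x ∈ Icc (-1 : ℝ) 1, f (x, 1 - x ^ 2) = β x) := by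
  set F1 : Set (ℝ × ℝ) := {z | z.1 ∈ Icc (-1 : ℝ) 1 ∧ z.2 = 0} with hF1
  set F2 : Set (ℝ × ℝ) := {z | z.1 ∈ Icc (-1 : ℝ) 1 ∧ z.2 = 1 - z.1 ^ 2} with hF2
  have hfr : frontier MU = F1 ∪ F2 := by
    rw [frontier_MU]
    ext ⟨x, y⟩
    simp only [hF1, hF2, mem_ofPred_eq, mem_union, mem_Icc]
    constructor
    · rintro ⟨h1, h2, h3⟩
      have : -1 ≤ x ∧ x ≤ 1 := by constructor <;> nlinarith
      rcases h3 with h3 | h3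
      · exact Or.inl ⟨this, h3⟩
      · exact Or.inr ⟨this, h3⟩
    · rintro (⟨⟨h1, h2⟩, rfl⟩ | ⟨⟨h1, h2⟩, rfl⟩)
      · exact ⟨le_rfl, by nlinarith, Or.inl rfl⟩
      · exact ⟨by nlinarith, le_rfl, Or.inr rfl⟩
  have hend : ∀ x : ℝ, (0 : ℝ) = 1 - x ^ 2 → α x = β x := by
    intro x hx
    have : (x - 1) * (x + 1) = 0 := by nlinarith
    rcases mul_eq_zero.1 this with h | h
    · rw [show x = 1 by linarith, a5, b5]
    · rw [show x = -1 by linarith, a4, b4]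
  have hcross : ∀ x ∈ Icc (-1 : ℝ) 1, ∀ x' ∈ Icc (-1 : ℝ) 1, α x = β x' → x = x' ∧ 1 - x ^ 2 = 0 := by
    intro x hx x' hx' h
    have h1 : α x ∈ A := a3 ▸ mem_image_of_mem _ hx
    have h2 : α x ∈ B := by rw [h, ← b3]; exact mem_image_of_mem _ hx'
    rcases hAB ⟨h1, h2⟩ with h3 | h3
    · have e1 := a2 hx (by norm_num : (-1 : ℝ) ∈ Icc (-1 : ℝ) 1) (h3.trans a4.symm)
      have e2 := b2 hx' (by norm_num : (-1 : ℝ) ∈ Icc (-1 : ℝ) 1) ((h.symm.trans h3).trans b4.symm)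
      subst e1 e2; norm_num
    · have h3 : α x = q := h3
      have e1 := a2 hx (by norm_num : (1 : ℝ) ∈ Icc (-1 : ℝ) 1) (h3.trans a5.symm)
      have e2 := b2 hx' (by norm_num : (1 : ℝ) ∈ Icc (-1 : ℝ) 1) ((h.symm.trans h3).trans b5.symm)
      subst e1 e2; norm_num
  set g : ℝ × ℝ → X := fun z => if z.2 = 0 then α z.1 else β z.1 with hg
  have g1 : ∀ z ∈ F1, g z = α z.1 := fun z hz => by simp [hg, hz.2]
  have g2 : ∀ z ∈ F2, g z = β z.1 := by
    intro z hz
    by_cases h0 : z.2 = 0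
    · simp only [hg, h0, if_true]
      exact hend _ (by rw [← h0, ← hz.2])
    · simp [hg, h0]
  have m1 : MapsTo Prod.fst F1 (Icc (-1 : ℝ) 1) := fun z hz => hz.1
  have m2 : MapsTo Prod.fst F2 (Icc (-1 : ℝ) 1) := fun z hz => hz.1
  have key : ∀ z ∈ F1, ∀ w ∈ F2, g z = g w → z = w := by
    intro z hz w hw h
    rw [g1 z hz, g2 w hw] at h
    obtain ⟨e1, e2⟩ := hcross _ hz.1 _ hw.1 h
    refine Prod.ext e1 ?_
    rw [hz.2, hw.2, ← e1, e2]
  obtain ⟨f, f1, f2, f3, f4⟩ := hD.extend body_MU (g := g) (by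
      rw [hfr]
      refine ContinuousOn.union_of_isClosed ?_ ?_ ?_ ?_
      · exact (a1.comp continuous_fst.continuousOn m1).congr g1
      · exact (b1.comp continuous_fst.continuousOn m2).congr g2
      · exact (isClosed_Icc.preimage continuous_fst).inter (isClosed_eq (by fun_prop) (by fun_prop))
      · exact (isClosed_Icc.preimage continuous_fst).inter (isClosed_eq (by fun_prop) (by fun_prop))) (by
      rw [hfr]
      rintro z (hz | hz) w (hw | hw) h
      · rw [g1 z hz, g1 w hw] at h
        exact Prod.ext (a2 hz.1 hw.1 h) (hz.2.trans hw.2.symm)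
      · exact key z hz w hw h
      · exact (key w hw z hz h.symm).symm
      · rw [g2 z hz, g2 w hw] at h
        have := b2 hz.1 hw.1 h
        exact Prod.ext this (by rw [hz.2, hw.2, this])) (by
      rw [hfr, image_union, ← a3, ← b3]
      congr 1
      · ext y
        constructor
        · rintro ⟨z, hz, rfl⟩; exact ⟨z.1, hz.1, (g1 z hz).symm⟩
        · rintro ⟨x, hx, rfl⟩; exact ⟨(x, 0), ⟨hx, rfl⟩, g1 (x, 0) ⟨hx, rfl⟩⟩
      · ext y
        constructor
        · rintro ⟨z, hz, rfl⟩; exact ⟨z.1, hz.1, (g2 z hz).symm⟩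
        · rintro ⟨x, hx, rfl⟩; exact ⟨(x, 1 - x ^ 2), ⟨hx, rfl⟩, g2 (x, 1 - x ^ 2) ⟨hx, rfl⟩⟩)
  refine ⟨f, f1, f2, f3, ?_, ?_⟩
  · intro x hx
    have : (x, (0 : ℝ)) ∈ F1 := ⟨hx, rfl⟩
    rw [f4 _ (by rw [hfr]; exact Or.inl this), g1 _ this]
  · intro x hx
    have : (x, 1 - x ^ 2) ∈ F2 := ⟨hx, rfl⟩
    rw [f4 _ (by rw [hfr]; exact Or.inr this), g2 _ this]

theorem theta {D1 D2 A B1 B2 : Set X} {p q : X} (h1 : IsDisk D1 (A ∪ B1)) (h2 : IsDisk D2 (A ∪ B2))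
    (hA : IsArc A p q) (hB1 : IsArc B1 p q) (hB2 : IsArc B2 p q)
    (hAB1 : A ∩ B1 ⊆ {p, q}) (hAB2 : A ∩ B2 ⊆ {p, q}) (hD : D1 ∩ D2 ⊆ A) :
    IsDisk (D1 ∪ D2) (B1 ∪ B2) := by
  obtain ⟨α, a1, a2, a3, a4, a5⟩ := hA
  obtain ⟨β, b1, b2, b3, b4, b5⟩ := hB1
  obtain ⟨γ, c1, c2, c3, c4, c5⟩ := hB2
  obtain ⟨f1, k1, k2, k3, k4, k5⟩ := h1.lune hAB1 a1 a2 a3 a4 a5 b1 b2 b3 b4 b5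
  obtain ⟨f2, l1, l2, l3, l4, l5⟩ := h2.lune hAB2 a1 a2 a3 a4 a5 c1 c2 c3 c4 c5
  set ρ : ℝ × ℝ → ℝ × ℝ := fun z => (z.1, -z.2) with hρ
  have hρc : Continuous ρ := by fun_prop
  have hρi : Function.Injective ρ := by
    rintro ⟨x, y⟩ ⟨x', y'⟩ h
    simp only [hρ, Prod.mk.injEq, neg_inj] at h
    exact Prod.ext h.1 h.2
  set ML : Set (ℝ × ℝ) := ρ ⁻¹' MU with hML
  have hMM : MM = MU ∪ ML := by
    ext ⟨x, y⟩
    simp only [MM, MU, hML, hρ, mem_ofPred_eq, mem_union, mem_preimage]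
    constructor
    · rintro ⟨h1, h2⟩
      rcases le_total 0 y with h | h
      · exact Or.inl ⟨h, h2⟩
      · exact Or.inr ⟨by linarith, by linarith⟩
    · rintro (⟨h1, h2⟩ | ⟨h1, h2⟩)
      · exact ⟨by linarith, h2⟩
      · exact ⟨by linarith, by linarith⟩
  set f : ℝ × ℝ → X := fun z => if 0 ≤ z.2 then f1 z else f2 (ρ z) with hf
  have fU : ∀ z ∈ MU, f z = f1 z := fun z hz => by simp [hf, hz.1]
  have fL : ∀ z ∈ ML, f z = f2 (ρ z) := by
    intro z hz
    by_cases h0 : 0 ≤ z.2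
    · have h1 : 0 ≤ -z.2 := hz.1
      have h2 : z.2 = 0 := by linarith
      have hx : z.1 ∈ Icc (-1 : ℝ) 1 := MM_abs (hMM ▸ Or.inr hz : z ∈ MM)
      have e1 : z = (z.1, 0) := Prod.ext rfl h2
      have e2 : ρ z = (z.1, 0) := Prod.ext rfl (by simp [hρ, h2])
      rw [hf]; simp only [h0, if_true]
      rw [e2, l4 _ hx]
      conv_lhs => rw [e1]
      exact k4 _ hx
    · simp [hf, h0]
  have mU : ∀ x ∈ Icc (-1 : ℝ) 1, (x, (0:ℝ)) ∈ MU := by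
    intro x hx
    exact ⟨le_rfl, by simp only; nlinarith [hx.1, hx.2]⟩
  have mU' : ∀ x ∈ Icc (-1 : ℝ) 1, (x, 1 - x ^ 2) ∈ MU := by
    intro x hx
    exact ⟨by simp only; nlinarith [hx.1, hx.2], le_rfl⟩
  have hρρ : ∀ z, ρ (ρ z) = z := fun z => by simp [hρ]
  have key : ∀ z ∈ MU, ∀ w ∈ ML, f z = f w → z = w := by
    intro z hz w hw h
    rw [fU z hz, fL w hw] at h
    have h1 : f1 z ∈ A := hD ⟨k3 ▸ mem_image_of_mem _ hz, by rw [h, ← l3]; exact mem_image_of_mem _ hw⟩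
    rw [← a3] at h1
    obtain ⟨x, hx, hxz⟩ := h1
    have e1 := k2 (mU x hx) hz ((k4 x hx).trans hxz)
    have e2 := l2 (mU x hx) hw (((l4 x hx).trans hxz).trans h)
    rw [← e1, ← hρρ w, ← e2]
    simp [hρ]
  refine ⟨MM, body_MM, f, ?_, ?_, ?_, ?_⟩
  · rw [hMM]
    refine ContinuousOn.union_of_isClosed ?_ ?_ body_MU.cpt.isClosed (body_MU.cpt.isClosed.preimage hρc)
    · exact k1.congr fU
    · exact (l1.comp hρc.continuousOn (fun z hz => hz)).congr fL
  · rw [hMM]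
    rintro z (hz | hz) w (hw | hw) h
    · rw [fU z hz, fU w hw] at h; exact k2 hz hw h
    · exact key z hz w hw h
    · exact (key w hw z hz h.symm).symm
    · rw [fL z hz, fL w hw] at h; exact hρi (l2 hz hw h)
  · rw [hMM, image_union, ← k3, ← l3]
    congr 1
    · exact image_congr fU
    · ext y
      constructor
      · rintro ⟨z, hz, rfl⟩; exact ⟨ρ z, hz, (fL z hz).symm⟩
      · rintro ⟨z, hz, rfl⟩
        have : ρ z ∈ ML := by rw [hML, mem_preimage, hρρ]; exact hz
        exact ⟨ρ z, this, by rw [fL _ this, hρρ]⟩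
  · rw [frontier_MM, ← b3, ← c3]
    ext y
    constructor
    · rintro ⟨⟨x, t⟩, ⟨h1, h2, h3⟩, rfl⟩
      have hx : x ∈ Icc (-1 : ℝ) 1 := MM_abs (p := (x, t)) ⟨h1, h2⟩
      simp only at h1 h2 h3
      rcases h3 with h3 | h3
      · right
        refine ⟨x, hx, ?_⟩
        have : (x, t) ∈ ML := by
          rw [hML, mem_preimage, hρ, h3]; simp only [neg_neg]; exact mU' x hx
        rw [fL _ this, ← l5 x hx]
        simp [hρ, h3]
      · left
        refine ⟨x, hx, ?_⟩
        subst h3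
        rw [fU _ (mU' x hx), k5 x hx]
    · rintro (⟨x, hx, rfl⟩ | ⟨x, hx, rfl⟩)
      · refine ⟨(x, 1 - x ^ 2), ⟨?_, le_rfl, Or.inr rfl⟩, ?_⟩
        · simp only; nlinarith [hx.1, hx.2]
        · rw [fU _ (mU' x hx), k5 x hx]
      · refine ⟨(x, -(1 - x ^ 2)), ⟨le_rfl, ?_, Or.inl rfl⟩, ?_⟩
        · simp only; nlinarith [hx.1, hx.2]
        · have : (x, -(1 - x ^ 2)) ∈ ML := by
            rw [hML, mem_preimage, hρ]; simp only [neg_neg]; exact mU' x hx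
          rw [fL _ this, ← l5 x hx]
          simp [hρ]

end Disk

end PartD

section PartE
section Disk2
open Set

set_option linter.unusedSectionVars false

theorem int_dir {Q : Set (ℝ × ℝ)} {p : ℝ × ℝ} (hp : p ∈ interior Q) (d : ℝ × ℝ) :
    ∃ ε > 0, p + (ε : ℝ) • d ∈ Q := by
  rw [mem_interior_iff_mem_nhds] at hp
  have hc : Continuous (fun e : ℝ => p + e • d) := by fun_prop
  have h1 := (hc.tendsto 0) (by simpa using hp)
  rw [Filter.mem_map, Metric.mem_nhds_iff] at h1
  obtain ⟨ε, hε, h1⟩ := h1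
  exact ⟨ε / 2, by linarith, h1 (show ε / 2 ∈ Metric.ball (0 : ℝ) ε by
    rw [Metric.mem_ball, dist_zero_right, Real.norm_eq_abs, abs_of_pos (by linarith)]; linarith)⟩

def QE : Set (ℝ × ℝ) := {p | p.1 ^ 2 + p.2 ^ 2 ≤ 1}

theorem QE_lt : {p : ℝ × ℝ | p.1 ^ 2 + p.2 ^ 2 < 1} ⊆ interior QE := by
  apply interior_maximal
  · intro p hp; exact le_of_lt (a := p.1 ^ 2 + p.2 ^ 2) hp
  · exact isOpen_lt (f := fun p : ℝ × ℝ => p.1 ^ 2 + p.2 ^ 2) (by fun_prop) continuous_const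

theorem QE_closed : IsClosed QE :=
  isClosed_le (f := fun p : ℝ × ℝ => p.1 ^ 2 + p.2 ^ 2) (by fun_prop) continuous_const

theorem body_QE : Body QE := by
  refine ⟨Metric.isCompact_of_isClosed_isBounded QE_closed ?_, ?_, ⟨(0, 0), QE_lt (by norm_num)⟩⟩
  · refine (Metric.isBounded_closedBall (x := (0 : ℝ × ℝ)) (r := 1)).subset ?_
    rintro ⟨x, y⟩ h
    simp only [QE, mem_ofPred_eq] at h
    rw [mem_closedBall_zero_iff, Prod.norm_def, max_le_iff, Real.norm_eq_abs, Real.norm_eq_abs, abs_le, abs_le]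
    refine ⟨⟨?_, ?_⟩, ?_, ?_⟩ <;> nlinarith [sq_nonneg x, sq_nonneg y]
  · rintro ⟨x, y⟩ h1 ⟨x', y'⟩ h2 a b ha hb hab
    have hb' : b = 1 - a := by linarith
    subst hb'
    simp only [QE, mem_ofPred_eq, Prod.mk_add_mk, Prod.smul_mk, smul_eq_mul] at *
    have := mul_nonneg (mul_nonneg ha hb) (sq_nonneg (x - x'))
    have := mul_nonneg (mul_nonneg ha hb) (sq_nonneg (y - y'))
    nlinarith

theorem frontier_QE : frontier QE = {p | p.1 ^ 2 + p.2 ^ 2 = 1} := by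
  rw [frontier, QE_closed.closure_eq]
  ext p
  constructor
  · rintro ⟨h1, h2⟩
    exact le_antisymm h1 (not_lt.1 fun h => h2 (QE_lt h))
  · intro h
    have h : p.1 ^ 2 + p.2 ^ 2 = 1 := h
    refine ⟨h.le, fun hi => ?_⟩
    obtain ⟨ε, hε, h2⟩ := int_dir hi p
    simp only [QE, mem_ofPred_eq, Prod.fst_add, Prod.snd_add, Prod.smul_fst, Prod.smul_snd, smul_eq_mul] at h2
    have h3 : (1 + ε) ^ 2 * (p.1 ^ 2 + p.2 ^ 2) ≤ 1 := by rw [← sub_nonneg] at h2 ⊢; convert h2 using 1; ring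
    rw [h] at h3
    nlinarith

theorem sphere_glue {X : Type*} [TopologicalSpace X] [T2Space X] {D1 D2 C : Set X} (h1 : IsDisk D1 C)
    (h2 : IsDisk D2 C) (hD : D1 ∩ D2 ⊆ C) :
    Nonempty (↥(D1 ∪ D2) ≃ₜ ↥(Metric.sphere (0 : EuclideanSpace ℝ (Fin 3)) 1)) := by
  obtain ⟨f1, k1, k2, k3, k4⟩ := h1.model body_QE
  have hsub : frontier QE ⊆ QE := QE_closed.frontier_subset
  obtain ⟨f2, l1, l2, l3, l4⟩ := h2.extend body_QE (k1.mono hsub) (k2.mono hsub) k4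
  set S := Metric.sphere (0 : EuclideanSpace ℝ (Fin 3)) 1 with hS
  have hmem : ∀ p : EuclideanSpace ℝ (Fin 3), p ∈ S ↔ p 0 ^ 2 + p 1 ^ 2 + p 2 ^ 2 = 1 := by
    intro p
    rw [hS, EuclideanSpace.sphere_zero_eq _ zero_le_one]
    simp [Fin.sum_univ_three]
  set π : EuclideanSpace ℝ (Fin 3) → ℝ × ℝ := fun p => (p 0, p 1) with hπ
  have hπc : Continuous π := by fun_prop
  have hπQ : ∀ p ∈ S, π p ∈ QE := by
    intro p hp
    rw [hmem] at hp
    simp only [QE, hπ, mem_ofPred_eq]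
    nlinarith [sq_nonneg (p 2)]
  have hπF : ∀ p ∈ S, π p ∈ frontier QE ↔ p 2 = 0 := by
    intro p hp
    rw [hmem] at hp
    rw [frontier_QE]
    simp only [hπ, mem_ofPred_eq]
    constructor
    · intro h; have : p 2 ^ 2 = 0 := by linarith
      exact pow_eq_zero_iff (two_ne_zero) |>.1 this
    · intro h; rw [h] at hp; linarith
  have hπi : ∀ p ∈ S, ∀ q ∈ S, π p = π q → 0 ≤ p 2 * q 2 → p = q := by
    intro p hp q hq h h0
    rw [hmem] at hp hq
    simp only [hπ, Prod.mk.injEq] at h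
    have h3 : p 2 ^ 2 = q 2 ^ 2 := by rw [h.1, h.2] at hp; linarith
    have h4 : p 2 = q 2 := by
      rcases sq_eq_sq_iff_eq_or_eq_neg.1 h3 with h5 | h5
      · exact h5
      · rw [h5] at h0
        have : q 2 = 0 := by nlinarith
        rw [h5, this, neg_zero]
    ext i
    fin_cases i
    · exact h.1
    · exact h.2
    · exact h4
  set f : EuclideanSpace ℝ (Fin 3) → X := fun p => if 0 ≤ p 2 then f1 (π p) else f2 (π p) with hf
  set SU := S ∩ {p | 0 ≤ p 2} with hSU
  set SL := S ∩ {p | p 2 ≤ 0} with hSL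
  have hSS : S = SU ∪ SL := by
    rw [hSU, hSL, ← inter_union_distrib_left, eq_comm, inter_eq_left]
    intro p _
    exact le_total 0 (p 2)
  have fU : ∀ p ∈ SU, f p = f1 (π p) := fun p hp => if_pos hp.2
  have fL : ∀ p ∈ SL, f p = f2 (π p) := by
    intro p hp
    by_cases h : 0 ≤ p 2
    · have h0 : p 2 = 0 := le_antisymm hp.2 h
      rw [l4 _ ((hπF p hp.1).2 h0)]
      exact if_pos h
    · exact if_neg h
  have hc : ContinuousOn f S := by
    rw [hSS]
    refine ContinuousOn.union_of_isClosed ?_ ?_ ?_ ?_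
    · exact (k1.comp hπc.continuousOn (fun p hp => hπQ p hp.1)).congr fU
    · exact (l1.comp hπc.continuousOn (fun p hp => hπQ p hp.1)).congr fL
    · exact Metric.isClosed_sphere.inter (isClosed_le (f := fun _ : EuclideanSpace ℝ (Fin 3) => (0 : ℝ))
        (g := fun p => p 2) (by fun_prop) (by fun_prop))
    · exact Metric.isClosed_sphere.inter (isClosed_le (f := fun p : EuclideanSpace ℝ (Fin 3) => p 2)
        (g := fun p => (0 : ℝ)) (by fun_prop) (by fun_prop))
  have key : ∀ p ∈ SU, ∀ q ∈ SL, f p = f q → p = q := by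
    intro p hp q hq h
    rw [fU p hp, fL q hq] at h
    have hC : f1 (π p) ∈ C := hD ⟨k3 ▸ mem_image_of_mem _ (hπQ p hp.1),
      by rw [h, ← l3]; exact mem_image_of_mem _ (hπQ q hq.1)⟩
    rw [← k4] at hC
    obtain ⟨z, hz, hzp⟩ := hC
    have e1 := k2 (hsub hz) (hπQ p hp.1) hzp
    have e2 := l2 (hsub hz) (hπQ q hq.1) ((l4 z hz).trans (hzp.trans h))
    have e3 : p 2 = 0 := (hπF p hp.1).1 (e1 ▸ hz)
    exact hπi p hp.1 q hq.1 (e1.symm.trans e2) (by rw [e3]; simp)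
  have hi : InjOn f S := by
    rw [hSS]
    rintro p (hp | hp) q (hq | hq) h
    · rw [fU p hp, fU q hq] at h
      exact hπi p hp.1 q hq.1 (k2 (hπQ p hp.1) (hπQ q hq.1) h) (mul_nonneg hp.2 hq.2)
    · exact key p hp q hq h
    · exact (key q hq p hp h.symm).symm
    · rw [fL p hp, fL q hq] at h
      exact hπi p hp.1 q hq.1 (l2 (hπQ p hp.1) (hπQ q hq.1) h) (mul_nonneg_of_nonpos_of_nonpos hp.2 hq.2)
  have himg : f '' S = D1 ∪ D2 := by
    have hex : ∀ z ∈ QE, ∀ s : ℝ, s ^ 2 = 1 → ∃ p ∈ S, π p = z ∧ 0 ≤ s * p 2 := by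
      intro z hz s hs
      have hz : z.1 ^ 2 + z.2 ^ 2 ≤ 1 := hz
      refine ⟨!₂[z.1, z.2, s * Real.sqrt (1 - z.1 ^ 2 - z.2 ^ 2)], ?_, ?_, ?_⟩
      · rw [hmem]
        simp only [Matrix.cons_val_zero, Matrix.cons_val_one, Matrix.cons_val]
        rw [mul_pow, hs, Real.sq_sqrt (by linarith)]
        ring
      · simp [hπ]
      · simp only [Matrix.cons_val]
        rw [← mul_assoc, ← sq, hs, one_mul]
        exact Real.sqrt_nonneg _
    rw [hSS, image_union, ← k3, ← l3]
    congr 1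
    · ext y
      constructor
      · rintro ⟨p, hp, rfl⟩; exact ⟨π p, hπQ p hp.1, (fU p hp).symm⟩
      · rintro ⟨z, hz, rfl⟩
        obtain ⟨p, hp, e, h0⟩ := hex z hz 1 (by norm_num)
        have : p ∈ SU := ⟨hp, by simpa using h0⟩
        exact ⟨p, this, by rw [fU p this, e]⟩
    · ext y
      constructor
      · rintro ⟨p, hp, rfl⟩; exact ⟨π p, hπQ p hp.1, (fL p hp).symm⟩
      · rintro ⟨z, hz, rfl⟩
        obtain ⟨p, hp, e, h0⟩ := hex z hz (-1) (by norm_num)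
        have : p ∈ SL := ⟨hp, by simpa using h0⟩
        exact ⟨p, this, by rw [fL p this, e]⟩
  have hbij : BijOn f S (D1 ∪ D2) := ⟨by rw [← himg]; exact mapsTo_image _ _, hi, himg.ge⟩
  have hcomp : CompactSpace S := isCompact_iff_compactSpace.1 (isCompact_sphere _ _)
  have hcont : Continuous (hbij.equiv f) := by
    rw [continuous_induced_rng]
    exact hc.domRestrict
  exact ⟨(Continuous.homeoOfEquivCompactToT2 hcont).symm⟩

section Lin
variable {E : Type*} [NormedAddCommGroup E] [NormedSpace ℝ E]

theorem isArc_segment {a b : E} (h : a ≠ b) : IsArc (segment ℝ a b) a b := by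
  refine ⟨fun t => AffineMap.lineMap a b ((t + 1) / 2), ?_, ?_, ?_, ?_, ?_⟩
  · exact (AffineMap.lineMap_continuous.comp (by fun_prop)).continuousOn
  · intro s _ t _ hst
    have := AffineMap.lineMap_injective ℝ h hst
    linarith
  · rw [segment_eq_image_lineMap]
    ext x
    constructor
    · rintro ⟨t, ht, rfl⟩
      exact ⟨(t + 1) / 2, ⟨by linarith [ht.1], by linarith [ht.2]⟩, rfl⟩
    · rintro ⟨t, ht, rfl⟩
      exact ⟨2 * t - 1, ⟨by linarith [ht.1], by linarith [ht.2]⟩, by simp only; congr 1; ring⟩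
  · norm_num
  · norm_num

def QT : Set (ℝ × ℝ) := {p | 0 ≤ p.1 ∧ 0 ≤ p.2 ∧ p.1 + p.2 ≤ 1}

theorem QT_lt : {p : ℝ × ℝ | 0 < p.1 ∧ 0 < p.2 ∧ p.1 + p.2 < 1} ⊆ interior QT := by
  apply interior_maximal
  · intro p hp; exact ⟨hp.1.le, hp.2.1.le, hp.2.2.le⟩
  · exact (isOpen_lt continuous_const continuous_fst).inter ((isOpen_lt continuous_const continuous_snd).inter
      (isOpen_lt (f := fun p : ℝ × ℝ => p.1 + p.2) (by fun_prop) continuous_const))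

theorem QT_closed : IsClosed QT :=
  (isClosed_le continuous_const continuous_fst).inter ((isClosed_le continuous_const continuous_snd).inter
      (isClosed_le (f := fun p : ℝ × ℝ => p.1 + p.2) (by fun_prop) continuous_const))

theorem body_QT : Body QT := by
  refine ⟨Metric.isCompact_of_isClosed_isBounded QT_closed ?_, ?_, ⟨(1/3, 1/3), QT_lt (by norm_num)⟩⟩
  · refine (Metric.isBounded_closedBall (x := (0 : ℝ × ℝ)) (r := 1)).subset ?_
    rintro ⟨x, y⟩ h
    simp only [QT, mem_ofPred_eq] at h
    rw [mem_closedBall_zero_iff, Prod.norm_def, max_le_iff, Real.norm_eq_abs, Real.norm_eq_abs, abs_le, abs_le]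
    refine ⟨⟨?_, ?_⟩, ?_, ?_⟩ <;> linarith [h.1, h.2.1, h.2.2]
  · rintro ⟨x, y⟩ ⟨h1, h2, h3⟩ ⟨x', y'⟩ ⟨h4, h5, h6⟩ a b ha hb hab
    have hb' : b = 1 - a := by linarith
    subst hb'
    simp only [QT, mem_ofPred_eq, Prod.mk_add_mk, Prod.smul_mk, smul_eq_mul] at *
    refine ⟨by positivity, by positivity, by nlinarith⟩

theorem frontier_QT : frontier QT = {p | p ∈ QT ∧ (p.1 = 0 ∨ p.2 = 0 ∨ p.1 + p.2 = 1)} := by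
  rw [frontier, QT_closed.closure_eq]
  ext p
  constructor
  · rintro ⟨h1, h2⟩
    refine ⟨h1, ?_⟩
    by_contra h
    push Not at h
    exact h2 (QT_lt ⟨lt_of_le_of_ne h1.1 (Ne.symm h.1), lt_of_le_of_ne h1.2.1 (Ne.symm h.2.1), lt_of_le_of_ne h1.2.2 h.2.2⟩)
  · rintro ⟨h1, h2⟩
    refine ⟨h1, fun hi => ?_⟩
    obtain ⟨x, y⟩ := p
    rcases h2 with h | h | h
    · obtain ⟨ε, hε, h2⟩ := int_dir hi (-1, 0)
      simp only [QT, mem_ofPred_eq, Prod.mk_add_mk, Prod.smul_mk, smul_eq_mul] at h2 h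
      linarith [h2.1]
    · obtain ⟨ε, hε, h2⟩ := int_dir hi (0, -1)
      simp only [QT, mem_ofPred_eq, Prod.mk_add_mk, Prod.smul_mk, smul_eq_mul] at h2 h
      linarith [h2.2.1]
    · obtain ⟨ε, hε, h2⟩ := int_dir hi (1, 1)
      simp only [QT, mem_ofPred_eq, Prod.mk_add_mk, Prod.smul_mk, smul_eq_mul] at h2 h
      linarith [h2.2.2]

theorem hull_QT (a b c : E) : (fun p : ℝ × ℝ => a + p.1 • (b - a) + p.2 • (c - a)) '' QT = convexHull ℝ {a, b, c} := by
  apply Subset.antisymm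
  · rintro _ ⟨⟨x, y⟩, ⟨h1, h2, h3⟩, rfl⟩
    simp only at *
    have := (convex_convexHull ℝ ({a, b, c} : Set E)).sum_mem (t := Finset.univ) (w := ![1 - x - y, x, y]) (z := ![a, b, c])
      (by intro i _; fin_cases i <;> simp <;> linarith) (by simp [Fin.sum_univ_three]; ring)
      (by intro i _; apply subset_convexHull; fin_cases i <;> simp)
    simp only [Fin.sum_univ_three, Matrix.cons_val_zero, Matrix.cons_val_one, Matrix.cons_val] at this
    convert this using 1
    module
  · refine convexHull_min ?_ ?_
    · rintro x (rfl | rfl | rfl)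
      · exact ⟨(0, 0), by norm_num [QT], by simp⟩
      · exact ⟨(1, 0), by norm_num [QT], by simp⟩
      · exact ⟨(0, 1), by norm_num [QT], by simp⟩
    · rintro _ ⟨p, hp, rfl⟩ _ ⟨q, hq, rfl⟩ s t hs ht hst
      refine ⟨s • p + t • q, body_QT.cvx hp hq hs ht hst, ?_⟩
      have ht' : t = 1 - s := by linarith
      subst ht'
      simp only [Prod.fst_add, Prod.snd_add, Prod.smul_fst, Prod.smul_snd, smul_eq_mul]
      module

theorem isDisk_triangle {a b c : E} (hlin : ∀ x y : ℝ, x • (b - a) + y • (c - a) = 0 → x = 0 ∧ y = 0) :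
    IsDisk (convexHull ℝ ({a, b, c} : Set E)) (segment ℝ a b ∪ segment ℝ b c ∪ segment ℝ c a) := by
  refine ⟨QT, body_QT, fun p : ℝ × ℝ => a + p.1 • (b - a) + p.2 • (c - a), ?_, ?_, hull_QT a b c, ?_⟩
  · exact Continuous.continuousOn (by fun_prop)
  · rintro ⟨x, y⟩ _ ⟨x', y'⟩ _ h
    simp only at h
    have := hlin (x - x') (y - y') (by
      rw [add_assoc, add_assoc, add_right_inj] at h
      rw [← sub_eq_zero] at h
      rw [← h]; module)
    exact Prod.ext (by linarith [this.1]) (by linarith [this.2])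
  · rw [frontier_QT]
    ext z
    simp only [mem_union, segment_eq_image']
    constructor
    · rintro ⟨⟨x, y⟩, ⟨⟨h1, h2, h3⟩, h4⟩, rfl⟩
      simp only at *
      rcases h4 with rfl | rfl | h
      · right
        exact ⟨1 - y, ⟨by linarith, by linarith⟩, by module⟩
      · left; left
        exact ⟨x, ⟨by linarith, by linarith⟩, by module⟩
      · left; right
        obtain rfl : x = 1 - y := by linarith
        exact ⟨y, ⟨by linarith, by linarith⟩, by module⟩
    · rintro ((⟨t, ⟨h1, h2⟩, rfl⟩ | ⟨t, ⟨h1, h2⟩, rfl⟩) | ⟨t, ⟨h1, h2⟩, rfl⟩)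
      · refine ⟨(t, 0), ⟨⟨h1, le_rfl, by simpa using h2⟩, Or.inr (Or.inl rfl)⟩, by simp⟩
      · refine ⟨(1 - t, t), ⟨⟨by simp only; linarith, h1, by simp⟩, Or.inr (Or.inr (by simp))⟩, by simp only; module⟩
      · refine ⟨(0, 1 - t), ⟨⟨le_rfl, by simp only; linarith, by simp only; linarith⟩, Or.inl rfl⟩, by simp only; module⟩

theorem sum_tri {M : Type*} [AddCommMonoid M] [DecidableEq E] {a b c : E} (hab : a ≠ b) (hbc : b ≠ c) (hac : a ≠ c)
    (F : E → M) : ∑ p : ({a, b, c} : Finset E), F p = F a + (F b + F c) := by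
  rw [Finset.sum_coe_sort ({a, b, c} : Finset E) F, Finset.sum_insert (by simp [hab, hac]), Finset.sum_pair hbc]

theorem lin_of_indep [DecidableEq E] {a b c : E} (hab : a ≠ b) (hbc : b ≠ c) (hac : a ≠ c)
    (h : AffineIndependent ℝ ((↑) : ({a, b, c} : Finset E) → E)) :
    ∀ x y : ℝ, x • (b - a) + y • (c - a) = 0 → x = 0 ∧ y = 0 := by
  intro x y hxy
  have h' := (affineIndependent_iff (k := ℝ) (p := ((↑) : ({a, b, c} : Finset E) → E))).1 h Finset.univ
    (fun p => if (p : E) = a then -(x + y) else if (p : E) = b then x else y)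
  have h2 := h' (by rw [sum_tri hab hbc hac (fun p => if p = a then -(x + y) else if p = b then x else y)]; simp [hab.symm, hac.symm, hbc.symm])
    (by
      rw [sum_tri hab hbc hac (fun p => (if p = a then -(x + y) else if p = b then x else y) • p)]
      simp only [if_true, hab.symm, hac.symm, hbc.symm, if_false]
      rw [← hxy]; module)
  constructor
  · simpa [hab.symm] using h2 ⟨b, by simp⟩ (Finset.mem_univ _)
  · simpa [hac.symm, hbc.symm] using h2 ⟨c, by simp⟩ (Finset.mem_univ _)

end Lin

end Disk2

end PartE

section PartF
section DiskInd
open Set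

set_option linter.unusedSectionVars false
set_option linter.unusedSimpArgs false

variable {E : Type*} [NormedAddCommGroup E] [NormedSpace ℝ E] [DecidableEq E]

structure Geo (T : Finset (Finset E)) : Prop where
  indep : ∀ t ∈ T, AffineIndependent ℝ ((↑) : t → E)
  inter : ∀ s s' : Finset E, (∃ t ∈ T, s ⊆ t) → (∃ t ∈ T, s' ⊆ t) →
    convexHull ℝ (s : Set E) ∩ convexHull ℝ (s' : Set E) ⊆ convexHull ℝ ((s ∩ s' : Finset E) : Set E)

def sp (S : Finset (Finset E)) : Set E := ⋃ t ∈ S, convexHull ℝ (t : Set E)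

theorem mem_sp {S : Finset (Finset E)} {z : E} : z ∈ sp S ↔ ∃ t ∈ S, z ∈ convexHull ℝ (t : Set E) := by
  simp [sp]

def pathSp : List E → Set E
  | [] => ∅
  | [_] => ∅
  | x :: y :: l => segment ℝ x y ∪ pathSp (y :: l)

theorem pathSp_append (l1 : List E) (c : E) (l2 : List E) :
    pathSp (l1 ++ c :: l2) = pathSp (l1 ++ [c]) ∪ pathSp (c :: l2) := by
  induction l1 with
  | nil => simp [pathSp]
  | cons x l ih =>
    cases l with
    | nil => simp [pathSp]
    | cons y l =>
      simp only [List.cons_append, pathSp] at ih ⊢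
      rw [ih, union_assoc]

theorem pathSp_reverse (l : List E) : pathSp l.reverse = pathSp l := by
  induction l with
  | nil => rfl
  | cons x l ih =>
    cases l with
    | nil => rfl
    | cons y l =>
      rw [List.reverse_cons] at ih ⊢
      rw [List.reverse_cons, List.append_assoc, List.singleton_append, pathSp_append, ih]
      simp only [pathSp, union_empty]
      rw [segment_symm, union_comm]

theorem pathSp_mem {T : Finset (Finset E)} {l : List E} (hl : List.IsChain (fun x y => x ≠ y ∧ {x, y} ∈ edgesOf T) l)
    {z : E} (hz : z ∈ pathSp l) : ∃ u ∈ l, ∃ v ∈ l, u ≠ v ∧ ({u, v} : Finset E) ∈ edgesOf T ∧ z ∈ segment ℝ u v := by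
  induction l with
  | nil => exact hz.elim
  | cons x l ih =>
    cases l with
    | nil => exact hz.elim
    | cons y l =>
      rw [List.isChain_cons_cons] at hl
      rcases hz with hz | hz
      · exact ⟨x, by simp, y, by simp, hl.1.1, hl.1.2, hz⟩
      · obtain ⟨u, hu, v, hv, h⟩ := ih hl.2 hz
        exact ⟨u, List.mem_cons_of_mem _ hu, v, List.mem_cons_of_mem _ hv, h⟩

theorem seg_hull (u v : E) : convexHull ℝ (({u, v} : Finset E) : Set E) = segment ℝ u v := by
  simp [convexHull_pair]

theorem hull_mono {s s' : Finset E} (h : s ⊆ s') : convexHull ℝ (s : Set E) ⊆ convexHull ℝ (s' : Set E) :=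
  convexHull_mono (by exact_mod_cast h)

theorem hull_seg {s : Finset E} {u v : E} (h : s ⊆ {u, v}) : convexHull ℝ (s : Set E) ⊆ segment ℝ u v := by
  rw [← seg_hull]; exact hull_mono h

theorem hull_sing {s : Finset E} {u : E} (h : s ⊆ {u}) : convexHull ℝ (s : Set E) ⊆ {u} := by
  have := hull_mono h
  simpa using this

theorem edge_face {T : Finset (Finset E)} {e : Finset E} (h : e ∈ edgesOf T) : ∃ t ∈ T, e ⊆ t :=
  (mem_edgesOf.1 h).2

theorem Geo.path_inter {T : Finset (Finset E)} (hG : Geo T) {l : List E}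
    (hl : List.IsChain (fun x y => x ≠ y ∧ {x, y} ∈ edgesOf T) l) {s : Finset E} (hs : ∃ t ∈ T, s ⊆ t)
    {p : E} (hp : ∀ v ∈ s, v ∈ l → v = p) : convexHull ℝ (s : Set E) ∩ pathSp l ⊆ {p} := by
  rintro z ⟨h1, h2⟩
  obtain ⟨u, hu, v, hv, huv, he, hz⟩ := pathSp_mem hl h2
  rw [← seg_hull] at hz
  refine hull_sing ?_ (hG.inter _ _ hs (edge_face he) ⟨h1, hz⟩)
  intro w hw
  simp only [Finset.mem_inter, Finset.mem_insert, Finset.mem_singleton] at hw ⊢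
  rcases hw with ⟨hw1, rfl | rfl⟩
  · exact hp _ hw1 hu
  · exact hp _ hw1 hv

theorem Geo.path_inter2 {T : Finset (Finset E)} (hG : Geo T) {l : List E}
    (hl : List.IsChain (fun x y => x ≠ y ∧ {x, y} ∈ edgesOf T) l) {a b p : E} (hs : {a, b} ∈ edgesOf T)
    (hp : ∀ v, (v = a ∨ v = b) → v ∈ l → v = p) : segment ℝ a b ∩ pathSp l ⊆ {p} := by
  rw [← seg_hull]
  exact hG.path_inter hl (edge_face hs) (by simpa using hp)

theorem Geo.seg_inter {T : Finset (Finset E)} (hG : Geo T) {a b c : E} (hac : a ≠ c) 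
    (h1 : {a, b} ∈ edgesOf T) (h2 : {b, c} ∈ edgesOf T) : segment ℝ a b ∩ segment ℝ b c ⊆ {b} := by
  rw [← seg_hull, ← seg_hull]
  refine (hG.inter _ _ (edge_face h1) (edge_face h2)).trans (hull_sing ?_)
  intro w hw
  simp only [Finset.mem_inter, Finset.mem_insert, Finset.mem_singleton] at hw ⊢
  grind

theorem Geo.path_arc {T : Finset (Finset E)} (hG : Geo T) (x : E) (N : List E) (a : E)
    (hn : (x :: (N ++ [a])).Nodup)
    (hl : List.IsChain (fun x y => x ≠ y ∧ {x, y} ∈ edgesOf T) (x :: (N ++ [a]))) :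
    IsArc (pathSp (x :: (N ++ [a]))) x a := by
  induction N generalizing x with
  | nil =>
    simp only [List.nil_append, List.isChain_cons_cons] at hl
    simpa [pathSp] using isArc_segment hl.1.1
  | cons y N ih =>
    simp only [List.cons_append] at hn hl ⊢
    rw [List.isChain_cons_cons] at hl
    rw [pathSp]
    refine (isArc_segment hl.1.1).trans (ih y hn.of_cons hl.2) ?_
    refine hG.path_inter2 hl.2 hl.1.2 ?_
    rintro v (rfl | rfl) hv
    · exact absurd hv (List.nodup_cons.1 hn).1
    · rfl

theorem chain_of_bd {T S : Finset (Finset E)} (hS : S ⊆ T) {b a : E} {N : List E} (hN : N ≠ [])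
    (hl : (b :: (N ++ [a])).Nodup) (hbd : ∀ e : Finset E, e.card = 2 → bd S e = cyc b N a e) :
    List.IsChain (fun x y => x ≠ y ∧ {x, y} ∈ edgesOf T) (b :: (N ++ [a])) := by
  refine chain_of_pathE _ hl ?_
  intro e he h
  by_cases hab : e = {a, b}
  · exact absurd (hab ▸ cyc_path hN hl) h
  · refine bd_mem_edges hS he ?_
    rw [hbd e he, cyc, if_neg hab, add_zero]; exact h

theorem Geo.tri {T : Finset (Finset E)} (hG : Geo T) {a b c : E} (hab : a ≠ b) (hbc : b ≠ c) (hac : a ≠ c)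
    (ht : {a, b, c} ∈ T) :
    IsDisk (convexHull ℝ (({a, b, c} : Finset E) : Set E)) (segment ℝ a b ∪ segment ℝ b c ∪ segment ℝ c a) := by
  have := isDisk_triangle (lin_of_indep hab hbc hac (hG.indep _ ht))
  simpa using this

theorem tri_of_edge {T : Finset (Finset E)} (hT : Surf T) {a b : E} (hab : a ≠ b) {t : Finset E} (ht : t ∈ T)
    (h : {a, b} ⊆ t) : ∃ c, a ≠ c ∧ b ≠ c ∧ t = {a, b, c} := by
  have h3 := hT.card3 t ht
  have : (t \ {a, b}).card = 1 := by
    rw [Finset.card_sdiff_of_subset h, h3, Finset.card_pair hab]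
  obtain ⟨c, hc⟩ := Finset.card_eq_one.1 this
  have hcm : c ∈ t \ {a, b} := by rw [hc]; simp
  simp only [Finset.mem_sdiff, Finset.mem_insert, Finset.mem_singleton, not_or] at hcm
  refine ⟨c, fun h => hcm.2.1 h.symm, fun h => hcm.2.2 h.symm, ?_⟩
  rw [← Finset.union_sdiff_of_subset h, hc]
  ext x; simp [or_assoc]

def DiskGoal (S : Finset (Finset E)) (b : E) (N : List E) (a : E) : Prop :=
  IsDisk (sp S) (pathSp (b :: (N ++ [a])) ∪ segment ℝ a b)

theorem sp_sdiff {S A : Finset (Finset E)} (h : A ⊆ S) : sp A ∪ sp (S \ A) = sp S := by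
  ext z
  simp only [mem_union, mem_sp, Finset.mem_sdiff]
  constructor
  · rintro (⟨t, h1, h2⟩ | ⟨t, h1, h2⟩)
    · exact ⟨t, h h1, h2⟩
    · exact ⟨t, h1.1, h2⟩
  · rintro ⟨t, h1, h2⟩
    by_cases ht : t ∈ A
    · exact Or.inl ⟨t, ht, h2⟩
    · exact Or.inr ⟨t, ⟨h1, ht⟩, h2⟩

theorem sp_single (t : Finset E) : sp {t} = convexHull ℝ (t : Set E) := by simp [sp]

theorem caseY {T : Finset (Finset E)} (hT : Surf T) (hG : Geo T) (hcl : ClosedS T) (hH : HOne T)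
    {S : Finset (Finset E)} (hS : S ⊆ T) {b a c : E} {N1 N2 : List E} (hN1 : N1 ≠ [])
    (hl : (b :: ((N1 ++ c :: N2) ++ [a])).Nodup)
    (hbd : ∀ e : Finset E, e.card = 2 → bd S e = cyc b (N1 ++ c :: N2) a e)
    (ht : {a, b, c} ∈ S)
    (ih : ∀ S' ⊂ S, ∀ (b : E) (N : List E) (a : E), N ≠ [] → (b :: (N ++ [a])).Nodup →
      (∀ e : Finset E, e.card = 2 → bd S' e = cyc b N a e) → DiskGoal S' b N a) :
    DiskGoal S b (N1 ++ c :: N2) a := by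
  obtain ⟨S1, hS1, hne, hneS, h1, h2⟩ := split_step hT hcl hH hS hN1 hl hbd ht
  have hl1 : (b :: (N1 ++ [c])).Nodup := by
    refine hl.sublist ?_
    simp
  have hl2 : (b :: ((c :: N2) ++ [a])).Nodup := by
    refine hl.sublist ?_
    simp
  have hss1 : S1 ⊂ S := lt_of_le_of_ne hS1 hneS
  have hss2 : S \ S1 ⊂ S := by
    refine Finset.sdiff_ssubset hS1 (Finset.nonempty_iff_ne_empty.2 hne)
  have hd1 := ih S1 hss1 b N1 c hN1 hl1 h1
  have hd2 := ih (S \ S1) hss2 b (c :: N2) a (by simp) hl2 h2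
  have hc1 := chain_of_bd (hS1.trans hS) hN1 hl1 h1
  have hc2 := chain_of_bd (Finset.sdiff_subset.trans hS) (by simp) hl2 h2
  have hab : a ≠ b := by rintro rfl; simp at hl
  have hac : a ≠ c := by
    rintro rfl; simp at hl2
  have hbc : b ≠ c := by
    rintro rfl; simp at hl2
  have habE : {a, b} ∈ edgesOf T := mem_edgesOf.2 ⟨Finset.card_pair hab, _, hS ht, by intro x; simp; tauto⟩
  have hbcE : {b, c} ∈ edgesOf T := mem_edgesOf.2 ⟨Finset.card_pair hbc, _, hS ht, by intro x; simp; tauto⟩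
  simp only [List.cons_append] at hc2 hl2
  rw [List.isChain_cons_cons] at hc2
  have arc1 := hG.path_arc b N1 c hl1 hc1
  have arc2 := hG.path_arc c N2 a hl2.of_cons hc2.2
  have arc3 : IsArc (pathSp (c :: (N2 ++ [a])) ∪ segment ℝ a b) c b := by
    refine arc2.trans (isArc_segment hab) ?_
    rw [inter_comm]
    refine hG.path_inter2 hc2.2 habE ?_
    rintro v (rfl | rfl) hv
    · rfl
    · exact absurd hv (List.nodup_cons.1 hl2).1
  have hth := theta (A := segment ℝ b c) (B1 := pathSp (b :: (N1 ++ [c]))) (B2 := pathSp (c :: (N2 ++ [a])) ∪ segment ℝ a b)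
    (p := b) (q := c) (D1 := sp S1) (D2 := sp (S \ S1))
    (by rw [DiskGoal, union_comm, segment_symm] at hd1; exact hd1)
    (by rw [DiskGoal, List.cons_append, pathSp, union_assoc] at hd2; exact hd2)
    (isArc_segment hbc) arc1 arc3.symm ?_ ?_ ?_
  · rw [DiskGoal, ← sp_sdiff hS1]
    convert hth using 1
    have := pathSp_append (b :: N1) c (N2 ++ [a])
    simp only [List.cons_append] at this
    rw [List.append_assoc, List.cons_append, this, union_assoc]
  · obtain ⟨x, N, rfl⟩ := List.exists_cons_of_ne_nil hN1
    simp only [List.cons_append] at hc1 hl1 ⊢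
    rw [List.isChain_cons_cons] at hc1
    rw [pathSp, inter_union_distrib_left]
    refine union_subset ?_ ?_
    · rw [segment_symm]
      refine (hG.seg_inter ?_ (by rwa [Finset.pair_comm]) hc1.1.2).trans (by simp)
      rintro rfl
      simp at hl1
    · refine (hG.path_inter2 (p := c) hc1.2 hbcE ?_).trans (by simp)
      rintro v (rfl | rfl) hv
      · exact absurd hv (List.nodup_cons.1 hl1).1
      · rfl
  · rw [inter_union_distrib_left]
    refine union_subset ?_ ?_
    · refine (hG.path_inter2 (p := c) hc2.2 hbcE ?_).trans (by simp)
      rintro v (rfl | rfl) hv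
      · exact absurd hv (List.nodup_cons.1 hl2).1
      · rfl
    · rw [inter_comm]
      exact (hG.seg_inter hac habE hbcE).trans (by simp)
  · rintro z ⟨hz1, hz2⟩
    obtain ⟨t1, ht1, hz1⟩ := mem_sp.1 hz1
    obtain ⟨t2, ht2, hz2⟩ := mem_sp.1 hz2
    have ht2' := Finset.mem_sdiff.1 ht2
    refine hull_seg ?_ (hG.inter _ _ ⟨t1, hS (hS1 ht1), Finset.Subset.refl _⟩ ⟨t2, hS ht2'.1, Finset.Subset.refl _⟩ ⟨hz1, hz2⟩)
    intro v hv
    rw [Finset.mem_inter] at hv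
    obtain ⟨e1, he1, hve1, -, hb1⟩ := link_exists hT (hS1.trans hS) ht1 hv.1 (hS ht2'.1) hv.2 ht2'.2
    obtain ⟨e2, he2, hve2, -, hb2⟩ := link_exists hT (Finset.sdiff_subset.trans hS) ht2 hv.2 (hS (hS1 ht1)) hv.1
      (fun h => (Finset.mem_sdiff.1 h).2 ht1)
    rw [h1 e1 he1] at hb1
    rw [h2 e2 he2] at hb2
    have m1 := cyc_mem hb1 v hve1
    have m2 := cyc_mem hb2 v hve2
    simp only [Finset.mem_insert, Finset.mem_singleton]
    simp only [List.nodup_cons, List.nodup_append, List.mem_append, List.mem_cons, List.mem_singleton] at hl m2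
    grind

theorem filter_unique {T S : Finset (Finset E)} (hT : Surf T) (hS : S ⊆ T) {e : Finset E} (he : e.card = 2)
    (h : bd S e ≠ 0) {t t' : Finset E} (ht : t ∈ S) (ht' : t' ∈ S) (h1 : e ⊆ t) (h2 : e ⊆ t') : t = t' := by
  have hle : (S.filter (fun t => e ⊆ t)).card ≤ 2 :=
    (Finset.card_le_card (Finset.filter_subset_filter _ hS)).trans (hT.le2 e he)
  have hne2 : (S.filter (fun t => e ⊆ t)).card ≠ 2 := by
    intro h2; apply h; rw [bd, h2]; rfl
  have : (S.filter (fun t => e ⊆ t)).card ≤ 1 := by omega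
  exact Finset.card_le_one.1 this t (Finset.mem_filter.2 ⟨ht, h1⟩) t' (Finset.mem_filter.2 ⟨ht', h2⟩)

theorem bd_remove {S : Finset (Finset E)} {a b c : E} (hab : a ≠ b) (hbc : b ≠ c) (hac : a ≠ c)
    (ht : {a, b, c} ∈ S) {e : Finset E} (he : e.card = 2) :
    bd (S \ {{a, b, c}}) e = bd S e + cyc b [c] a e := by
  rw [bd_sdiff (by simpa using ht), bd_single hab hbc hac he]

theorem caseX {T : Finset (Finset E)} (hT : Surf T) (hG : Geo T)
    {S : Finset (Finset E)} (hS : S ⊆ T) {b a c : E} {N : List E} (hN : N ≠ [])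
    (hl : (b :: (N ++ [a])).Nodup) (hc : c ∉ b :: (N ++ [a]))
    (hbd : ∀ e : Finset E, e.card = 2 → bd S e = cyc b N a e)
    (ht : {a, b, c} ∈ S)
    (ih : ∀ S' ⊂ S, ∀ (b : E) (N : List E) (a : E), N ≠ [] → (b :: (N ++ [a])).Nodup →
      (∀ e : Finset E, e.card = 2 → bd S' e = cyc b N a e) → DiskGoal S' b N a) :
    DiskGoal S b N a := by
  have hab : a ≠ b := by rintro rfl; simp at hl
  have hac : a ≠ c := by rintro rfl; simp at hc
  have hbc : b ≠ c := by rintro rfl; simp at hc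
  have hsub : {({a, b, c} : Finset E)} ⊆ S := by simpa using ht
  have hl' : (c :: ((b :: N) ++ [a])).Nodup := List.nodup_cons.2 ⟨hc, hl⟩
  have hbd' : ∀ e : Finset E, e.card = 2 → bd (S \ {{a, b, c}}) e = cyc c (b :: N) a e := by
    intro e he
    rw [bd_remove hab hbc hac ht he, hbd e he, cyc_ext b N a c]
  have hd := ih (S \ {{a, b, c}}) (Finset.sdiff_ssubset hsub (by simp)) c (b :: N) a (by simp) hl' hbd'
  have hch := chain_of_bd hS hN hl hbd
  have habE : {a, b} ∈ edgesOf T := mem_edgesOf.2 ⟨Finset.card_pair hab, _, hS ht, by intro x; simp; tauto⟩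
  have hbcE : {b, c} ∈ edgesOf T := mem_edgesOf.2 ⟨Finset.card_pair hbc, _, hS ht, by intro x; simp; tauto⟩
  have hcaE : {c, a} ∈ edgesOf T := mem_edgesOf.2 ⟨Finset.card_pair hac.symm, _, hS ht, by intro x; simp; tauto⟩
  have arcA : IsArc (segment ℝ b c ∪ segment ℝ c a) b a :=
    (isArc_segment hbc).trans (isArc_segment hac.symm) (hG.seg_inter hab.symm hbcE hcaE)
  have hth := theta (A := segment ℝ b c ∪ segment ℝ c a) (B1 := segment ℝ a b) (B2 := pathSp (b :: (N ++ [a])))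
    (p := b) (q := a) (D1 := convexHull ℝ (({a, b, c} : Finset E) : Set E)) (D2 := sp (S \ {{a, b, c}}))
    (by convert hG.tri hab hbc hac (hS ht) using 1; ext; simp only [mem_union]; tauto)
    (by
      rw [DiskGoal, List.cons_append, pathSp] at hd
      convert hd using 1
      rw [segment_symm ℝ b c, segment_symm ℝ c a]
      ext; simp only [mem_union]; tauto)
    arcA (isArc_segment hab).symm (hG.path_arc b N a hl hch) ?_ ?_ ?_
  · rw [DiskGoal, ← sp_sdiff hsub, sp_single, union_comm (pathSp _)]
    exact hth
  · rw [union_inter_distrib_right]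
    refine union_subset ?_ ?_
    · rw [inter_comm]
      exact (hG.seg_inter hac habE hbcE).trans (by simp)
    · exact (hG.seg_inter hbc.symm hcaE habE).trans (by simp)
  · rw [union_inter_distrib_right]
    refine union_subset ?_ ?_
    · refine (hG.path_inter2 (p := b) hch hbcE ?_).trans (by simp)
      rintro v (rfl | rfl) hv
      · rfl
      · exact absurd hv hc
    · refine (hG.path_inter2 (p := a) hch hcaE ?_).trans (by simp)
      rintro v (rfl | rfl) hv
      · exact absurd hv hc
      · rfl
  · rintro z ⟨hz1, hz2⟩
    obtain ⟨t2, ht2, hz2⟩ := mem_sp.1 hz2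
    have ht2' := Finset.mem_sdiff.1 ht2
    have hz := hG.inter _ _ ⟨_, hS ht, Finset.Subset.refl _⟩ ⟨t2, hS ht2'.1, Finset.Subset.refl _⟩ ⟨hz1, hz2⟩
    have hnot : ¬ ({a, b} : Finset E) ⊆ t2 := by
      intro h
      have h0 : bd S {a, b} ≠ 0 := by
        rw [hbd _ (Finset.card_pair hab), cyc_close hN hl]; exact one_ne_zero
      have := filter_unique hT hS (Finset.card_pair hab) h0 ht2'.1 ht h (by intro x; simp; tauto)
      exact ht2'.2 (by simp [this])
    have : a ∉ t2 ∨ b ∉ t2 := by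
      by_contra! h
      exact hnot (by intro x; simp only [Finset.mem_insert, Finset.mem_singleton]; rintro (rfl | rfl); exacts [h.1, h.2])
    rcases this with h | h
    · left
      refine hull_seg ?_ hz
      intro v hv
      simp only [Finset.mem_inter, Finset.mem_insert, Finset.mem_singleton] at hv ⊢
      grind
    · right
      refine hull_seg ?_ hz
      intro v hv
      simp only [Finset.mem_inter, Finset.mem_insert, Finset.mem_singleton] at hv ⊢
      grind

theorem disk_ind {T : Finset (Finset E)} (hT : Surf T) (hG : Geo T) (hcl : ClosedS T) (hH : HOne T)
    (S : Finset (Finset E)) : S ⊆ T → ∀ (b : E) (N : List E) (a : E), N ≠ [] → (b :: (N ++ [a])).Nodup →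
      (∀ e : Finset E, e.card = 2 → bd S e = cyc b N a e) → DiskGoal S b N a := by
  induction S using Finset.strongInduction with
  | H S ih =>
    intro hS b N a hN hl hbd
    have ih' : ∀ S' ⊂ S, ∀ (b : E) (N : List E) (a : E), N ≠ [] → (b :: (N ++ [a])).Nodup →
      (∀ e : Finset E, e.card = 2 → bd S' e = cyc b N a e) → DiskGoal S' b N a :=
      fun S' h => ih S' h (h.subset.trans hS)
    have hab : a ≠ b := by rintro rfl; simp at hl
    have h0 : bd S {a, b} ≠ 0 := by
      rw [hbd _ (Finset.card_pair hab), cyc_close hN hl]; exact one_ne_zero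
    obtain ⟨t, ht, habt⟩ := bd_exists h0
    obtain ⟨c, hac, hbc, rfl⟩ := tri_of_edge hT hab (hS ht) habt
    by_cases hc : c ∈ N
    · obtain ⟨N1, N2, rfl⟩ := List.append_of_mem hc
      by_cases hN1 : N1 = []
      · subst hN1
        by_cases hN2 : N2 = []
        · subst hN2
          simp only [List.nil_append] at *
          have hsub : {({a, b, c} : Finset E)} ⊆ S := by simpa using ht
          have hz : S \ {{a, b, c}} = ∅ := by
            rcases ker2 hT (A := S \ {{a, b, c}}) (Finset.sdiff_subset.trans hS) (by
              intro e he
              have he2 := (mem_edgesOf.1 he).1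
              rw [bd_remove hab hbc hac ht he2, hbd e he2]
              exact CharTwo.add_self_eq_zero _) with h | h
            · exact h
            · have := hS ht
              rw [← h] at this
              simp at this
          have hS1 : S = {{a, b, c}} := Finset.Subset.antisymm (Finset.sdiff_eq_empty_iff_subset.1 hz) hsub
          rw [DiskGoal, hS1, sp_single]
          convert hG.tri hab hbc hac (hS ht) using 1
          simp only [List.cons_append, List.nil_append, pathSp]
          ext; simp only [mem_union, mem_empty_iff_false]; tauto
        · have := caseY hT hG hcl hH hS (b := a) (a := b) (c := c) (N1 := N2.reverse) (N2 := []) (by simpa using hN2)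
            (by
              have := List.nodup_reverse.2 hl
              simpa using this)
            (by
              intro e he
              rw [hbd e he, ← cyc_reverse]
              simp) (by rw [Finset.insert_comm]; exact ht) ih'
          rw [DiskGoal] at this ⊢
          rw [segment_symm ℝ a b, ← pathSp_reverse]
          simpa using this
      · exact caseY hT hG hcl hH hS hN1 hl hbd ht ih'
    · refine caseX hT hG hS hN hl ?_ hbd ht ih'
      simp [hc, hac.symm, hbc.symm]

theorem sphere_of {T : Finset (Finset E)} (hT : Surf T) (hG : Geo T) (hcl : ClosedS T) (hH : HOne T)
    (hne : T.Nonempty) : Nonempty (↥(sp T) ≃ₜ ↥(Metric.sphere (0 : EuclideanSpace ℝ (Fin 3)) 1)) := by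
  obtain ⟨t, ht⟩ := hne
  obtain ⟨a, b, c, hab, hac, hbc, rfl⟩ := Finset.card_eq_three.1 (hT.card3 t ht)
  have hsub : {({a, b, c} : Finset E)} ⊆ T := by simpa using ht
  have hd := disk_ind hT hG hcl hH (T \ {{a, b, c}}) Finset.sdiff_subset b [c] a (by simp)
    (by simp [hab.symm, hbc, hac.symm])
    (by
      intro e he
      rw [bd_remove hab hbc hac ht he]
      by_cases h : bd T e = 0
      · rw [h, zero_add]
      · exact absurd (hcl.bd_eq e (bd_mem_edges (Finset.Subset.refl _) he h)) h)
  have hC : pathSp (b :: ([c] ++ [a])) ∪ segment ℝ a b = segment ℝ a b ∪ segment ℝ b c ∪ segment ℝ c a := by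
    simp only [List.cons_append, List.nil_append, pathSp]
    ext; simp only [mem_union, mem_empty_iff_false]; tauto
  rw [DiskGoal, hC] at hd
  rw [← sp_sdiff hsub, sp_single]
  refine sphere_glue (hG.tri hab hbc hac ht) hd ?_
  rintro z ⟨hz1, hz2⟩
  obtain ⟨t2, ht2, hz2⟩ := mem_sp.1 hz2
  have ht2' := Finset.mem_sdiff.1 ht2
  have hz := hG.inter _ _ ⟨_, ht, Finset.Subset.refl _⟩ ⟨t2, ht2'.1, Finset.Subset.refl _⟩ ⟨hz1, hz2⟩
  have : a ∉ t2 ∨ b ∉ t2 ∨ c ∉ t2 := by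
    by_contra! h
    have hs : ({a, b, c} : Finset E) ⊆ t2 := by
      intro x; simp only [Finset.mem_insert, Finset.mem_singleton]; rintro (rfl | rfl | rfl); exacts [h.1, h.2.1, h.2.2]
    have := Finset.eq_of_subset_of_card_le hs (by rw [hT.card3 _ ht, hT.card3 _ ht2'.1])
    exact ht2'.2 (by simp [this])
  rcases this with h | h | h
  · left; right
    refine hull_seg ?_ hz
    intro v hv
    simp only [Finset.mem_inter, Finset.mem_insert, Finset.mem_singleton] at hv ⊢
    grind
  · right
    refine hull_seg ?_ hz
    intro v hv
    simp only [Finset.mem_inter, Finset.mem_insert, Finset.mem_singleton] at hv ⊢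
    grind
  · left; left
    refine hull_seg ?_ hz
    intro v hv
    simp only [Finset.mem_inter, Finset.mem_insert, Finset.mem_singleton] at hv ⊢
    grind

end DiskInd

end PartF

section PartG
section LocalTop
open Set Topology

set_option linter.unusedSectionVars false
set_option linter.unusedSimpArgs false

def CC (C : Set (ℝ × ℝ)) : Prop := Convex ℝ C ∧ ∀ p ∈ C, ∀ q : ℝ × ℝ, p.2 ≤ q.2 → q ∈ C

theorem cc_univ : CC univ := ⟨convex_univ, fun _ _ _ _ => mem_univ _⟩

theorem cc_half : CC HalfPlane := by
  refine ⟨?_, ?_⟩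
  · intro p hp q hq a b ha hb _
    have hp' : 0 ≤ p.2 := hp
    have hq' : 0 ≤ q.2 := hq
    show 0 ≤ (a • p + b • q).2
    simp; positivity
  · intro p hp q h
    exact le_trans (b := p.2) hp h

theorem punct_conn {C : Set (ℝ × ℝ)} (hC : CC C) {p : ℝ × ℝ} (hp : p ∈ C) {r : ℝ} (hr : 0 < r) :
    IsPreconnected ((Metric.ball p r ∩ C) \ {p}) := by
  have hD : Convex ℝ (Metric.ball p r ∩ C) := (convex_ball p r).inter hC.1
  have hb : ∀ q : ℝ × ℝ, q ∈ Metric.ball p r ↔ |q.1 - p.1| < r ∧ |q.2 - p.2| < r := by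
    intro q
    rw [Metric.mem_ball, Prod.dist_eq, max_lt_iff, Real.dist_eq, Real.dist_eq]
  have h1 : Convex ℝ {q : ℝ × ℝ | q.1 < p.1} := convex_halfSpace_lt (LinearMap.fst ℝ ℝ ℝ).isLinear _
  have h2 : Convex ℝ {q : ℝ × ℝ | p.1 < q.1} := convex_halfSpace_gt (LinearMap.fst ℝ ℝ ℝ).isLinear _
  have h3 : Convex ℝ {q : ℝ × ℝ | p.2 < q.2} := convex_halfSpace_gt (LinearMap.snd ℝ ℝ ℝ).isLinear _
  have h4 : Convex ℝ {q : ℝ × ℝ | q.2 < p.2} := convex_halfSpace_lt (LinearMap.snd ℝ ℝ ℝ).isLinear _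
  have c1 := (hD.inter h1).isPreconnected
  have c2 := (hD.inter h2).isPreconnected
  have c3 := (hD.inter h3).isPreconnected
  have c4 := (hD.inter h4).isPreconnected
  have hr2 : |r / 2| < r := by rw [abs_of_pos (by linarith)]; linarith
  have m1 : (p.1 - r / 2, p.2 + r / 2) ∈ Metric.ball p r ∩ C := by
    refine ⟨(hb _).2 ⟨by simpa using hr2, by simpa using hr2⟩, hC.2 p hp _ (by simp; linarith)⟩
  have m2 : (p.1 + r / 2, p.2 + r / 2) ∈ Metric.ball p r ∩ C := by
    refine ⟨(hb _).2 ⟨by simpa using hr2, by simpa using hr2⟩, hC.2 p hp _ (by simp; linarith)⟩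
  have u1 := IsPreconnected.union (p.1 - r / 2, p.2 + r / 2) (by exact ⟨m1, by simp; linarith⟩) (by exact ⟨m1, by simp; linarith⟩) c1 c3
  have u2 := IsPreconnected.union (p.1 + r / 2, p.2 + r / 2) (by exact Or.inr ⟨m2, by simp; linarith⟩) (by exact ⟨m2, by simp; linarith⟩) u1 c2
  have key : (Metric.ball p r ∩ C) \ {p} = ((Metric.ball p r ∩ C ∩ {q : ℝ × ℝ | q.1 < p.1} ∪ Metric.ball p r ∩ C ∩ {q : ℝ × ℝ | p.2 < q.2}) ∪
     Metric.ball p r ∩ C ∩ {q : ℝ × ℝ | p.1 < q.1}) ∪ Metric.ball p r ∩ C ∩ {q : ℝ × ℝ | q.2 < p.2} := by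
    ext q
    simp only [mem_sdiff, mem_union, mem_inter_iff, mem_singleton_iff, mem_ofPred_eq]
    have : q = p ↔ q.1 = p.1 ∧ q.2 = p.2 := Prod.ext_iff
    rw [this]
    constructor
    · rintro ⟨h, h'⟩
      rcases lt_trichotomy q.1 p.1 with h1 | h1 | h1 <;> rcases lt_trichotomy q.2 p.2 with h2 | h2 | h2 <;> tauto
    · rintro (((⟨h, h'⟩ | ⟨h, h'⟩) | ⟨h, h'⟩) | ⟨h, h'⟩) <;> refine ⟨h, fun h2 => ?_⟩ <;> linarith [h2.1, h2.2]
  rw [key]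
  by_cases he : (Metric.ball p r ∩ C ∩ {q : ℝ × ℝ | q.2 < p.2}).Nonempty
  · obtain ⟨q, hq, hq2⟩ := he
    have hq2' : q.2 < p.2 := hq2
    have m3 : (p.1 - r / 2, q.2) ∈ Metric.ball p r ∩ C := by
      refine ⟨(hb _).2 ⟨by simpa using hr2, ((hb q).1 hq.1).2⟩, hC.2 q hq.2 _ (by simp)⟩
    exact IsPreconnected.union (p.1 - r / 2, q.2) (Or.inl (Or.inl ⟨m3, by simp; linarith⟩)) ⟨m3, by simpa using hq2'⟩ u2 c4
  · rw [not_nonempty_iff_eq_empty.1 he, union_empty]; exact u2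

structure Chart (X : Set (Pt n)) (x : Pt n) (C : Set (ℝ × ℝ)) where
  U : Set (Pt n)
  W : Set (ℝ × ℝ)
  h : Pt n → ℝ × ℝ
  g : ℝ × ℝ → Pt n
  hU : U ∈ 𝓝[X] x
  hUX : U ⊆ X
  hW : IsOpen W
  hc : ContinuousOn h U
  gc : ContinuousOn g (W ∩ C)
  hm : ∀ u ∈ U, h u ∈ W ∩ C
  gm : ∀ w ∈ W ∩ C, g w ∈ U
  gh : ∀ u ∈ U, g (h u) = u
  hg : ∀ w ∈ W ∩ C, h (g w) = w

theorem chart_mk {X : Set (Pt n)} {x : Pt n} (C W : Set (ℝ × ℝ)) (hW : IsOpen W) (U : Set (Pt n)) (hUX : U ⊆ X) (hU : U ∈ 𝓝[X] x)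
    (f : ↥U ≃ₜ ↥(W ∩ C)) : Nonempty (Chart X x C) := by
  classical
  refine ⟨⟨U, W, fun u => if hu : u ∈ U then (f ⟨u, hu⟩ : ℝ × ℝ) else 0,
    fun w => if hw : w ∈ W ∩ C then (f.symm ⟨w, hw⟩ : Pt n) else 0, hU, hUX, hW, ?_, ?_, ?_, ?_, ?_, ?_⟩⟩
  · rw [continuousOn_iff_continuous_domRestrict]
    have : Continuous (fun u : U => (f u : ℝ × ℝ)) := continuous_subtype_val.comp f.continuous
    convert this using 1
    funext u
    simp
  · rw [continuousOn_iff_continuous_domRestrict]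
    have : Continuous (fun w : ↥(W ∩ C) => (f.symm w : Pt n)) := continuous_subtype_val.comp f.symm.continuous
    convert this using 1
    funext u
    exact dif_pos u.2
  · intro u hu
    simp only [hu, dif_pos]; exact (f ⟨u, hu⟩).2
  · intro w hw
    simp only [hw, dif_pos]; exact (f.symm ⟨w, hw⟩).2
  · intro u hu
    have := (f ⟨u, hu⟩).2
    simp [hu, this]
  · intro w hw
    have := (f.symm ⟨w, hw⟩).2
    simp [hw, this]

theorem chart_planar {K : SimplicialComplex ℝ (Pt n)} {x : Pt n} (h : HasPlanarNbhd K x) : Nonempty (Chart K.space x univ) := by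
  obtain ⟨U, hU, hUx, V, hV, ⟨f⟩⟩ := h
  exact chart_mk univ V hV U hU hUx (f.trans (Homeomorph.setCongr (by simp)))

theorem chart_half {K : SimplicialComplex ℝ (Pt n)} {x : Pt n} (h : HasHalfPlanarNbhd K x) : Nonempty (Chart K.space x HalfPlane) := by
  obtain ⟨U, hU, hUx, V, hV, ⟨f⟩⟩ := h
  obtain ⟨W, hW, rfl⟩ := isOpen_induced_iff.1 hV
  have e1 : ↥(Subtype.val ⁻¹' W : Set ↥HalfPlane) ≃ₜ ↥(W ∩ HalfPlane) :=
    (Topology.IsEmbedding.subtypeVal.homeomorphImage _).trans (Homeomorph.setCongr (by rw [Subtype.image_preimage_coe, inter_comm]))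
  exact chart_mk HalfPlane W hW U hU hUx (f.trans e1)

theorem chart_of {K : SimplicialComplex ℝ (Pt n)} {x : Pt n} (h : IsLocallyPlanarPt K x) :
    ∃ C, CC C ∧ Nonempty (Chart K.space x C) := by
  rcases h.2 with h | h
  · exact ⟨_, cc_univ, chart_planar h⟩
  · exact ⟨_, cc_half, chart_half h⟩

theorem Chart.conn {X : Set (Pt n)} {x : Pt n} {C : Set (ℝ × ℝ)} (c : Chart X x C) (hC : CC C) (hx : x ∈ X) {O : Set (Pt n)}
    (hO : O ∈ 𝓝[X] x) : ∃ N ⊆ O ∩ X, N ∈ 𝓝[X] x ∧ IsPreconnected (N \ {x}) ∧ (N \ {x}).Nonempty := by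
  have hxU : x ∈ c.U := mem_of_mem_nhdsWithin hx c.hU
  have hp := c.hm x hxU
  have hO' : O ∈ 𝓝[c.U] x := nhdsWithin_mono _ c.hUX hO
  have h1 : c.g ⁻¹' (O ∩ c.U) ∈ 𝓝[c.W ∩ C] (c.h x) := by
    have := c.gc (c.h x) hp
    have h2 := this.tendsto_nhdsWithin (t := c.U) c.gm
    rw [c.gh x hxU] at h2
    exact h2 (Filter.inter_mem hO' self_mem_nhdsWithin)
  rw [nhdsWithin_inter_of_mem (mem_nhdsWithin_of_mem_nhds (c.hW.mem_nhds hp.1))] at h1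
  obtain ⟨r1, hr1, h1⟩ := Metric.mem_nhdsWithin_iff.1 h1
  obtain ⟨r2, hr2, h2⟩ := Metric.mem_nhds_iff.1 (c.hW.mem_nhds hp.1)
  set r := min r1 r2
  have hr : 0 < r := lt_min hr1 hr2
  have hBW : Metric.ball (c.h x) r ∩ C ⊆ c.W ∩ C := fun q hq =>
    ⟨h2 (Metric.ball_subset_ball (min_le_right _ _) hq.1), hq.2⟩
  have hBO : ∀ q ∈ Metric.ball (c.h x) r ∩ C, c.g q ∈ O ∩ c.U := fun q hq =>
    h1 ⟨Metric.ball_subset_ball (min_le_left _ _) hq.1, hq.2⟩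
  have hN : (c.g '' (Metric.ball (c.h x) r ∩ C)) \ {x} = c.g '' ((Metric.ball (c.h x) r ∩ C) \ {c.h x}) := by
    ext y
    constructor
    · rintro ⟨⟨q, hq, rfl⟩, hy⟩
      refine ⟨q, ⟨hq, ?_⟩, rfl⟩
      rintro rfl
      exact hy (c.gh x hxU)
    · rintro ⟨q, ⟨hq, hq'⟩, rfl⟩
      refine ⟨⟨q, hq, rfl⟩, fun h => hq' ?_⟩
      have h3 : c.g q = x := h
      show q = c.h x
      rw [← c.hg q (hBW hq), h3]
  refine ⟨c.g '' (Metric.ball (c.h x) r ∩ C), ?_, ?_, ?_, ?_⟩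
  · rintro _ ⟨q, hq, rfl⟩
    exact ⟨(hBO q hq).1, c.hUX (hBO q hq).2⟩
  · have h3 : c.h ⁻¹' (Metric.ball (c.h x) r) ∈ 𝓝[c.U] x := c.hc x hxU (Metric.ball_mem_nhds _ hr)
    have h4 : 𝓝[c.U] x = 𝓝[X] x := by
      apply le_antisymm (nhdsWithin_mono _ c.hUX)
      rw [← nhdsWithin_inter_of_mem' (t := c.U) c.hU]
      exact nhdsWithin_mono _ inter_subset_right
    rw [← h4]
    filter_upwards [h3, self_mem_nhdsWithin] with y hy hyU
    exact ⟨c.h y, ⟨hy, (c.hm y hyU).2⟩, c.gh y hyU⟩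
  · rw [hN]
    exact (punct_conn hC hp.2 hr).image _ (c.gc.mono (sdiff_subset.trans hBW))
  · rw [hN]
    refine Nonempty.image _ ⟨((c.h x).1, (c.h x).2 + r / 2), ⟨?_, hC.2 _ hp.2 _ (by simp; linarith)⟩, ?_⟩
    · rw [Metric.mem_ball, Prod.dist_eq]
      simp [abs_of_pos hr, hr]
    · intro h
      have := congrArg Prod.snd (show _ = c.h x from h)
      simp at this
      linarith

theorem seg_acc {X : Set (Pt n)} {x p : Pt n} (hs : segment ℝ x p ⊆ X) (hp : p ≠ x) {N : Set (Pt n)} (hN : N ∈ 𝓝[X] x) :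
    ∃ t : ℝ, 0 < t ∧ t ≤ 1 ∧ x + t • (p - x) ∈ N ∧ x + t • (p - x) ∈ segment ℝ x p ∧ x + t • (p - x) ≠ x := by
  have hc : Continuous (fun t : ℝ => x + t • (p - x)) := by fun_prop
  have h1 : Filter.Tendsto (fun t : ℝ => x + t • (p - x)) (𝓝[Icc 0 1] 0) (𝓝[X] x) := by
    have h2 := (hc.continuousWithinAt (s := Icc (0:ℝ) 1) (x := 0)).tendsto_nhdsWithin (t := X) (by
      intro t ht
      apply hs
      rw [segment_eq_image']
      exact ⟨t, ht, rfl⟩)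
    simpa using h2
  obtain ⟨ε, hε, h3⟩ := Metric.mem_nhdsWithin_iff.1 (h1 hN)
  have hm : 0 < min (ε / 2) 1 := lt_min (by linarith) one_pos
  refine ⟨min (ε / 2) 1, hm, min_le_right _ _, ?_, ?_, ?_⟩
  · refine h3 ⟨?_, hm.le, min_le_right _ _⟩
    rw [Metric.mem_ball, dist_zero_right, Real.norm_eq_abs, abs_of_pos hm]
    exact lt_of_le_of_lt (min_le_left _ _) (by linarith)
  · rw [segment_eq_image']
    exact ⟨_, ⟨hm.le, min_le_right _ _⟩, rfl⟩
  · intro h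
    rw [add_eq_left, smul_eq_zero] at h
    rcases h with h | h
    · exact hm.ne' h
    · exact hp (sub_eq_zero.1 h)

theorem cut {K : SimplicialComplex ℝ (Pt n)} {x : Pt n} (h : IsLocallyPlanarPt K x) {O F1 F2 : Set (Pt n)}
    (hO : O ∈ 𝓝 x) (h1 : IsClosed F1) (h2 : IsClosed F2) (hF : O ∩ K.space ⊆ F1 ∪ F2) (h12 : F1 ∩ F2 ⊆ {x})
    {p q : Pt n} (hp : p ≠ x) (hq : q ≠ x) (sp1 : segment ℝ x p ⊆ K.space) (sq1 : segment ℝ x q ⊆ K.space)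
    (sp2 : segment ℝ x p ⊆ F1) (sq2 : segment ℝ x q ⊆ F2) : False := by
  obtain ⟨C, hC, ⟨c⟩⟩ := chart_of h
  obtain ⟨N, hNO, hN, hconn, -⟩ := c.conn hC h.1 (mem_nhdsWithin_of_mem_nhds hO)
  rw [isPreconnected_closed_iff] at hconn
  obtain ⟨t, -, -, ht1, ht2, ht3⟩ := seg_acc sp1 hp hN
  obtain ⟨u, -, -, hu1, hu2, hu3⟩ := seg_acc sq1 hq hN
  obtain ⟨z, hz1, hz2⟩ := hconn F1 F2 h1 h2 (fun y hy => hF (hNO hy.1)) ⟨_, ⟨ht1, ht3⟩, sp2 ht2⟩ ⟨_, ⟨hu1, hu3⟩, sq2 hu2⟩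
  exact hz1.2 (h12 hz2)

end LocalTop

end PartG

section PartH
section Local2
open Set Topology

set_option linter.unusedSectionVars false
set_option linter.unusedSimpArgs false

variable [DecidableEq (Pt n)] {K : SimplicialComplex ℝ (Pt n)}

noncomputable def tris (hfin : K.faces.Finite) : Finset (Finset (Pt n)) := hfin.toFinset.filter (fun t => t.card = 3)

theorem mem_tris {hfin : K.faces.Finite} {t : Finset (Pt n)} : t ∈ tris hfin ↔ t ∈ K.faces ∧ t.card = 3 := by
  simp [tris]

theorem star_nhds (hfin : K.faces.Finite) {x : Pt n} {e : Finset (Pt n)}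
    (h : ∀ s ∈ K.faces, x ∈ convexHull ℝ (s : Set (Pt n)) → e ⊆ s) :
    {y | ∀ s ∈ K.faces, y ∈ convexHull ℝ (s : Set (Pt n)) → e ⊆ s} ∈ 𝓝 x := by
  have : ∀ᶠ y in 𝓝 x, ∀ s ∈ K.faces, y ∈ convexHull ℝ (s : Set (Pt n)) → e ⊆ s := by
    rw [Filter.eventually_all_finite hfin]
    intro s hs
    by_cases he : e ⊆ s
    · exact Filter.Eventually.of_forall fun _ _ => he
    · have hx : x ∉ convexHull ℝ (s : Set (Pt n)) := fun hx => he (h s hs hx)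
      have hcl : IsClosed (convexHull ℝ (s : Set (Pt n))) := s.finite_toSet.isClosed_convexHull ℝ
      filter_upwards [hcl.isOpen_compl.mem_nhds hx] with y hy hy'
      exact absurd hy' hy
  exact this

theorem Kinter {s s' : Finset (Pt n)} (hs : s ∈ K.faces) (hs' : s' ∈ K.faces) :
    convexHull ℝ (s : Set (Pt n)) ∩ convexHull ℝ (s' : Set (Pt n)) ⊆ convexHull ℝ ((s ∩ s' : Finset (Pt n)) : Set (Pt n)) := by
  rw [Finset.coe_inter]
  exact K.inter_subset_convexHull hs hs'

theorem vert_star {v : Pt n} (hv : {v} ∈ K.faces) : ∀ s ∈ K.faces, v ∈ convexHull ℝ (s : Set (Pt n)) → {v} ⊆ s := by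
  intro s hs h
  rw [Finset.singleton_subset_iff]
  exact (SimplicialComplex.vertex_mem_convexHull_iff hv hs).1 h

theorem mid_ne {a b : Pt n} (hab : a ≠ b) : midpoint ℝ a b ≠ a ∧ midpoint ℝ a b ≠ b := by
  refine ⟨fun h => hab ?_, fun h => hab ?_⟩
  · exact ((midpoint_eq_left_iff ℝ).1 h)
  · exact ((midpoint_eq_right_iff ℝ).1 h)

theorem edge_star {a b : Pt n} (hab : a ≠ b) (he : {a, b} ∈ K.faces) :
    ∀ s ∈ K.faces, midpoint ℝ a b ∈ convexHull ℝ (s : Set (Pt n)) → {a, b} ⊆ s := by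
  intro s hs h
  have h1 : midpoint ℝ a b ∈ convexHull ℝ ((({a, b} : Finset (Pt n)) : Set (Pt n))) := by
    rw [seg_hull]; exact midpoint_mem_segment a b
  have h2 := Kinter he hs ⟨h1, h⟩
  by_contra hn
  have : ({a, b} ∩ s : Finset (Pt n)) ⊆ {a} ∨ ({a, b} ∩ s : Finset (Pt n)) ⊆ {b} := by
    by_cases ha : a ∈ s
    · left
      have hb : b ∉ s := fun hb => hn (by intro z hz; simp at hz; rcases hz with rfl | rfl <;> assumption)
      intro z hz
      simp at hz ⊢
      rcases hz with ⟨rfl | rfl, hz⟩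
      · rfl
      · exact absurd hz hb
    · right
      intro z hz
      simp at hz ⊢
      rcases hz with ⟨rfl | rfl, hz⟩
      · exact absurd hz ha
      · rfl
  rcases this with h3 | h3
  · exact (mid_ne hab).1 (hull_sing h3 h2)
  · exact (mid_ne hab).2 (hull_sing h3 h2)

theorem face_seg {s : Finset (Pt n)} (hs : s ∈ K.faces) {x p : Pt n} (hx : x ∈ convexHull ℝ (s : Set (Pt n)))
    (hp : p ∈ convexHull ℝ (s : Set (Pt n))) : segment ℝ x p ⊆ K.space :=
  ((convex_convexHull ℝ _).segment_subset hx hp).trans (SimplicialComplex.convexHull_subset_space hs)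

theorem vert_edge (hfin : K.faces.Finite) (hlp : LocallyPlanar K) {v : Pt n} (hv : {v} ∈ K.faces) :
    ∃ w, w ≠ v ∧ {v, w} ∈ K.faces := by
  have hvX : v ∈ K.space := K.vertices_subset_space hv
  by_contra hno
  push Not at hno
  obtain ⟨C, hC, ⟨c⟩⟩ := chart_of (hlp v hvX)
  obtain ⟨N, hNO, -, -, ⟨y, hy, hyv⟩⟩ := c.conn hC hvX (mem_nhdsWithin_of_mem_nhds (star_nhds hfin (vert_star hv)))
  obtain ⟨h1, h2⟩ := hNO hy
  obtain ⟨s, hs, hys⟩ := SimplicialComplex.mem_space_iff.1 h2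
  have hvs := h1 s hs hys
  apply hyv
  refine hull_sing (s := s) ?_ hys
  intro w hw
  by_contra hwv
  rw [Finset.mem_singleton] at hwv
  refine hno w hwv (K.down_closed hs ?_ (by simp))
  intro z hz
  simp at hz
  rcases hz with rfl | rfl
  · exact hvs (by simp)
  · exact hw

theorem edge_tri (hfin : K.faces.Finite) (hdim : TwoDimensional K) (hlp : LocallyPlanar K) {e : Finset (Pt n)} (he : e ∈ K.faces)
    (hc : e.card = 2) : ∃ t ∈ K.faces, t.card = 3 ∧ e ⊆ t := by
  obtain ⟨a, b, hab, rfl⟩ := Finset.card_eq_two.1 hc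
  by_contra hno
  push Not at hno
  have hxe : midpoint ℝ a b ∈ convexHull ℝ ((({a, b} : Finset (Pt n)) : Set (Pt n))) := by
    rw [seg_hull]; exact midpoint_mem_segment a b
  have hae : a ∈ convexHull ℝ ((({a, b} : Finset (Pt n)) : Set (Pt n))) := subset_convexHull _ _ (by simp)
  have hbe : b ∈ convexHull ℝ ((({a, b} : Finset (Pt n)) : Set (Pt n))) := subset_convexHull _ _ (by simp)
  have hxX : midpoint ℝ a b ∈ K.space := SimplicialComplex.convexHull_subset_space he hxe
  refine cut (hlp _ hxX) (star_nhds hfin (edge_star hab he)) (F1 := segment ℝ (midpoint ℝ a b) a) (F2 := segment ℝ (midpoint ℝ a b) b)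
    ?_ ?_ ?_ ?_ (mid_ne hab).1.symm (mid_ne hab).2.symm (face_seg he hxe hae) (face_seg he hxe hbe) subset_rfl subset_rfl
  · rw [← seg_hull]; exact (Finset.finite_toSet _).isClosed_convexHull ℝ
  · rw [← seg_hull]; exact (Finset.finite_toSet _).isClosed_convexHull ℝ
  · rintro y ⟨h1, h2⟩
    obtain ⟨s, hs, hys⟩ := SimplicialComplex.mem_space_iff.1 h2
    have h3 := h1 s hs hys
    have h4 := hdim s hs
    have h5 : s.card ≠ 3 := fun h => hno s hs h h3
    have h6 := Finset.eq_of_subset_of_card_le h3 (by omega)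
    rw [← h6, seg_hull, segment_eq_image'] at hys
    obtain ⟨t, ht, rfl⟩ := hys
    rw [segment_eq_image', segment_eq_image']
    rcases le_total t (1/2) with h | h
    · left
      refine ⟨1 - 2 * t, ⟨by linarith, by linarith [ht.1]⟩, ?_⟩
      simp only [midpoint_eq_smul_add, invOf_eq_inv]
      module
    · right
      refine ⟨2 * t - 1, ⟨by linarith, by linarith [ht.2]⟩, ?_⟩
      simp only [midpoint_eq_smul_add, invOf_eq_inv]
      module
  · rintro y ⟨h1, h2⟩
    rw [segment_eq_image'] at h1 h2
    obtain ⟨t, ht, rfl⟩ := h1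
    obtain ⟨u, hu, h⟩ := h2
    have h3 : (u + t) • (b - a) = 0 := by
      have : (2⁻¹ * (u + t)) • (b - a) = (midpoint ℝ a b + u • (b - midpoint ℝ a b)) - (midpoint ℝ a b + t • (a - midpoint ℝ a b)) := by
        simp only [midpoint_eq_smul_add, invOf_eq_inv]
        module
      simp only at h
      rw [h, sub_self, smul_eq_zero] at this
      rcases this with h4 | h4
      · rw [show u + t = 0 by linarith, zero_smul]
      · rw [h4, smul_zero]
    rw [smul_eq_zero] at h3
    rcases h3 with h3 | h3
    · have : t = 0 := by linarith [hu.1, ht.1]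
      simp [this]
    · exact absurd (sub_eq_zero.1 h3).symm hab

theorem face_tri (hfin : K.faces.Finite) (hdim : TwoDimensional K) (hlp : LocallyPlanar K) {s : Finset (Pt n)} (hs : s ∈ K.faces) :
    ∃ t ∈ tris hfin, s ⊆ t := by
  have h1 := hdim s hs
  have h0 := (K.nonempty_of_mem_faces hs).card_pos
  have : s.card = 1 ∨ s.card = 2 ∨ s.card = 3 := by omega
  rcases this with h | h | h
  · obtain ⟨v, rfl⟩ := Finset.card_eq_one.1 h
    obtain ⟨w, hw, he⟩ := vert_edge hfin hlp hs
    obtain ⟨t, ht, h3, h4⟩ := edge_tri hfin hdim hlp he (Finset.card_pair hw.symm)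
    exact ⟨t, mem_tris.2 ⟨ht, h3⟩, fun z hz => h4 (by simp at hz; simp [hz])⟩
  · obtain ⟨t, ht, h3, h4⟩ := edge_tri hfin hdim hlp hs h
    exact ⟨t, mem_tris.2 ⟨ht, h3⟩, h4⟩
  · exact ⟨s, mem_tris.2 ⟨hs, h⟩, subset_rfl⟩

theorem sp_tris (hfin : K.faces.Finite) (hdim : TwoDimensional K) (hlp : LocallyPlanar K) : sp (tris hfin) = K.space := by
  ext y
  rw [mem_sp, SimplicialComplex.mem_space_iff]
  constructor
  · rintro ⟨t, ht, hy⟩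
    exact ⟨t, (mem_tris.1 ht).1, hy⟩
  · rintro ⟨s, hs, hy⟩
    obtain ⟨t, ht, hst⟩ := face_tri hfin hdim hlp hs
    exact ⟨t, ht, hull_mono hst hy⟩

theorem geo_tris (hfin : K.faces.Finite) : Geo (tris hfin) := by
  refine ⟨fun t ht => K.indep (mem_tris.1 ht).1, ?_⟩
  rintro s s' ⟨t, ht, hst⟩ ⟨t', ht', hst'⟩
  rcases s.eq_empty_or_nonempty with rfl | hs
  · simp
  rcases s'.eq_empty_or_nonempty with rfl | hs'
  · simp
  exact Kinter (K.down_closed (mem_tris.1 ht).1 hst hs) (K.down_closed (mem_tris.1 ht').1 hst' hs')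

theorem edges_tris (hfin : K.faces.Finite) (hdim : TwoDimensional K) (hlp : LocallyPlanar K) :
    ((edgesOf (tris hfin) : Finset (Finset (Pt n))) : Set (Finset (Pt n))) = {e | e ∈ K.faces ∧ e.card = 2} := by
  ext e
  rw [Finset.mem_coe, mem_edgesOf]
  constructor
  · rintro ⟨h2, t, ht, het⟩
    exact ⟨K.down_closed (mem_tris.1 ht).1 het (Finset.card_pos.1 (by omega)), h2⟩
  · rintro ⟨he, h2⟩
    exact ⟨h2, face_tri hfin hdim hlp he⟩

theorem verts_tris (hfin : K.faces.Finite) (hdim : TwoDimensional K) (hlp : LocallyPlanar K) :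
    ((vertsOf (tris hfin) : Finset (Pt n)) : Set (Pt n)) = K.vertices := by
  ext v
  rw [Finset.mem_coe, mem_vertsOf, SimplicialComplex.mem_vertices]
  constructor
  · rintro ⟨t, ht, hv⟩
    exact K.down_closed (mem_tris.1 ht).1 (by simpa using hv) (by simp)
  · intro hv
    obtain ⟨t, ht, h⟩ := face_tri hfin hdim hlp hv
    exact ⟨t, ht, by simpa using h⟩

theorem euler_tris (hfin : K.faces.Finite) (hdim : TwoDimensional K) (hlp : LocallyPlanar K) :
    eulerChar K = ((vertsOf (tris hfin)).card : ℤ) - (edgesOf (tris hfin)).card + (tris hfin).card := by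
  unfold eulerChar
  rw [← edges_tris hfin hdim hlp, ← verts_tris hfin hdim hlp]
  have : {t : Finset (Pt n) | t ∈ K.faces ∧ t.card = 3} = ((tris hfin : Finset (Finset (Pt n))) : Set (Finset (Pt n))) := by
    ext t; rw [Finset.mem_coe, mem_tris]; rfl
  rw [this, Set.ncard_coe_finset, Set.ncard_coe_finset, Set.ncard_coe_finset]

theorem hulls_closed (A : Finset (Finset (Pt n))) : IsClosed (sp A) := by
  unfold sp
  exact A.finite_toSet.isClosed_biUnion (fun t _ => t.finite_toSet.isClosed_convexHull ℝ)

theorem tris_link (hfin : K.faces.Finite) (hdim : TwoDimensional K) (hlp : LocallyPlanar K) :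
    ∀ v, ∀ A ⊆ tris hfin, (∀ t ∈ A, ∀ t' ∈ tris hfin, v ∈ t → v ∈ t' → 2 ≤ (t ∩ t').card → t' ∈ A) →
      (∃ t ∈ A, v ∈ t) → ∀ t ∈ tris hfin, v ∈ t → t ∈ A := by
  intro v A hA hcl ⟨t0, ht0, hv0⟩ t1 ht1 hv1
  by_contra hn
  have hvf : {v} ∈ K.faces := K.down_closed (mem_tris.1 ht1).1 (by simpa using hv1) (by simp)
  have hvX : v ∈ K.space := K.vertices_subset_space hvf
  have other : ∀ t ∈ tris hfin, v ∈ t → ∃ w ∈ t, w ≠ v := by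
    intro t ht hv
    exact Finset.exists_mem_ne (by rw [(mem_tris.1 ht).2]; norm_num) v
  obtain ⟨w0, hw0, hw0v⟩ := other t0 (hA ht0) hv0
  obtain ⟨w1, hw1, hw1v⟩ := other t1 ht1 hv1
  have mem : ∀ (t : Finset (Pt n)) w, w ∈ t → w ∈ convexHull ℝ (t : Set (Pt n)) := fun t w h => subset_convexHull _ _ h
  have mA : t0 ∈ A.filter (fun t => v ∈ t) := by simp [ht0, hv0]
  have mB : t1 ∈ ((tris hfin) \ A).filter (fun t => v ∈ t) := by simp [ht1, hv1, hn]
  refine cut (hlp v hvX) (star_nhds hfin (vert_star hvf)) (hulls_closed (A.filter (fun t => v ∈ t)))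
    (hulls_closed (((tris hfin) \ A).filter (fun t => v ∈ t))) ?_ ?_ hw0v hw1v
    (face_seg (mem_tris.1 (hA ht0)).1 (mem _ _ hv0) (mem _ _ hw0)) (face_seg (mem_tris.1 ht1).1 (mem _ _ hv1) (mem _ _ hw1))
    ?_ ?_
  · rintro y ⟨h1, h2⟩
    rw [← sp_tris hfin hdim hlp, mem_sp] at h2
    obtain ⟨t, ht, hy⟩ := h2
    have hvt := h1 t (mem_tris.1 ht).1 hy
    rw [Finset.singleton_subset_iff] at hvt
    by_cases h : t ∈ A
    · left; exact mem_sp.2 ⟨t, by simp [h, hvt], hy⟩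
    · right; exact mem_sp.2 ⟨t, by simp [h, ht, hvt], hy⟩
  · rintro y ⟨h1, h2⟩
    obtain ⟨t, ht, hy⟩ := mem_sp.1 h1
    obtain ⟨t', ht', hy'⟩ := mem_sp.1 h2
    simp only [Finset.mem_filter, Finset.mem_sdiff] at ht ht'
    have h3 := Kinter (mem_tris.1 (hA ht.1)).1 (mem_tris.1 ht'.1.1).1 ⟨hy, hy'⟩
    have h4 : ¬ 2 ≤ (t ∩ t').card := fun h => ht'.1.2 (hcl t ht.1 t' ht'.1.1 ht.2 ht'.2 h)
    refine hull_sing ?_ h3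
    have h5 : {v} ⊆ t ∩ t' := by simp [ht.2, ht'.2]
    rw [← Finset.eq_of_subset_of_card_le h5 (by simp; omega)]
  · exact fun y hy => mem_sp.2 ⟨t0, mA, (convex_convexHull ℝ _).segment_subset (mem _ _ hv0) (mem _ _ hw0) hy⟩
  · exact fun y hy => mem_sp.2 ⟨t1, mB, (convex_convexHull ℝ _).segment_subset (mem _ _ hv1) (mem _ _ hw1) hy⟩

theorem tris_conn (hfin : K.faces.Finite) (hdim : TwoDimensional K) (hlp : LocallyPlanar K) (hconn : IsPreconnected K.space) :
    ∀ W ⊆ vertsOf (tris hfin), W.Nonempty → (∀ t ∈ tris hfin, ∀ u ∈ t, u ∈ W → t ⊆ W) → W = vertsOf (tris hfin) := by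
  intro W hW ⟨w, hw⟩ hcl
  apply Finset.Subset.antisymm hW
  intro v hv
  obtain ⟨t0, ht0, hw0⟩ := mem_vertsOf.1 (hW hw)
  obtain ⟨t1, ht1, hv1⟩ := mem_vertsOf.1 hv
  by_contra hvW
  have h0 := hcl t0 ht0 w hw0 hw
  have h1 : ¬ t1 ⊆ W := fun h => hvW (h hv1)
  rw [isPreconnected_closed_iff] at hconn
  have mem : ∀ (t : Finset (Pt n)) w, w ∈ t → w ∈ convexHull ℝ (t : Set (Pt n)) := fun t w h => subset_convexHull _ _ h
  have hX := sp_tris hfin hdim hlp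
  have hcc := hconn (sp ((tris hfin).filter (fun t => t ⊆ W))) (sp ((tris hfin).filter (fun t => ¬ t ⊆ W)))
    (hulls_closed _) (hulls_closed _)
  obtain ⟨z, -, hz1, hz2⟩ : (K.space ∩ (sp ((tris hfin).filter (fun t => t ⊆ W)) ∩ sp ((tris hfin).filter (fun t => ¬ t ⊆ W)))).Nonempty := by
    refine hcc ?_ ⟨w, ?_, ?_⟩ ⟨v, ?_, ?_⟩
    · rw [← hX]
      intro y hy
      obtain ⟨t, ht, hy⟩ := mem_sp.1 hy
      by_cases h : t ⊆ W
      · left; exact mem_sp.2 ⟨t, by simp [h, ht], hy⟩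
      · right; exact mem_sp.2 ⟨t, by simp [h, ht], hy⟩
    · rw [← hX]; exact mem_sp.2 ⟨t0, ht0, mem _ _ hw0⟩
    · exact mem_sp.2 ⟨t0, by simp [ht0, h0], mem _ _ hw0⟩
    · rw [← hX]; exact mem_sp.2 ⟨t1, ht1, mem _ _ hv1⟩
    · exact mem_sp.2 ⟨t1, by simp [ht1, h1], mem _ _ hv1⟩
  obtain ⟨t, ht, hy⟩ := mem_sp.1 hz1
  obtain ⟨t', ht', hy'⟩ := mem_sp.1 hz2
  simp only [Finset.mem_filter] at ht ht'
  have h3 := Kinter (mem_tris.1 ht.1).1 (mem_tris.1 ht'.1).1 ⟨hy, hy'⟩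
  have h4 : t ∩ t' = ∅ := by
    rw [Finset.eq_empty_iff_forall_notMem]
    intro u hu
    rw [Finset.mem_inter] at hu
    exact ht'.2 (hcl t' ht'.1 u hu.2 (ht.2 hu.1))
  rw [h4] at h3
  simp at h3

end Local2

end PartH

section PartI
section Local3
open Set Topology

set_option linter.unusedSectionVars false
set_option linter.unusedSimpArgs false

variable [DecidableEq (Pt n)] {K : SimplicialComplex ℝ (Pt n)}

theorem tri_third {t : Finset (Pt n)} {a b : Pt n} (hab : a ≠ b) (h3 : t.card = 3) (h : {a, b} ⊆ t) :
    ∃ c, c ≠ a ∧ c ≠ b ∧ t = {a, b, c} := by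
  obtain ⟨c, hc⟩ := Finset.card_eq_one.1 (show (t \ {a, b}).card = 1 by
    rw [Finset.card_sdiff_of_subset h, h3, Finset.card_pair hab])
  have hc' : c ∈ t \ {a, b} := by rw [hc]; simp
  simp at hc'
  refine ⟨c, hc'.2.1, hc'.2.2, ?_⟩
  rw [← Finset.union_sdiff_of_subset h, hc]
  ext z; simp [or_assoc]

def LinI (a b c : Pt n) : Prop := ∀ x y : ℝ, x • (b - a) + y • (c - a) = 0 → x = 0 ∧ y = 0

theorem linI_face {a b c : Pt n} (hab : a ≠ b) (hca : c ≠ a) (hcb : c ≠ b) (h : {a, b, c} ∈ K.faces) : LinI a b c :=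
  lin_of_indep hab hcb.symm hca.symm (K.indep h)

theorem LinI.inj {a b c : Pt n} (h : LinI a b c) {x y x' y' : ℝ} (e : a + x • (b - a) + y • (c - a) = a + x' • (b - a) + y' • (c - a)) :
    x = x' ∧ y = y' := by
  have := h (x - x') (y - y') (by
    have h2 : (x - x') • (b - a) + (y - y') • (c - a) = (a + x • (b - a) + y • (c - a)) - (a + x' • (b - a) + y' • (c - a)) := by module
    rw [h2, e, sub_self])
  exact ⟨by linarith [this.1], by linarith [this.2]⟩

theorem LinI.zero {a b c : Pt n} (h : LinI a b c) {x y : ℝ} (e : a + x • (b - a) + y • (c - a) ∈ segment ℝ a b) : y = 0 := by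
  rw [segment_eq_image'] at e
  obtain ⟨u, -, hu⟩ := e
  exact (h.inj (x' := u) (y' := 0) (by rw [← hu]; simp)).2

theorem in_tri {a b c : Pt n} {x y : ℝ} (hx : 0 ≤ x) (hy : 0 ≤ y) (hxy : x + y ≤ 1) :
    a + x • (b - a) + y • (c - a) ∈ convexHull ℝ ((({a, b, c} : Finset (Pt n)) : Set (Pt n))) := by
  have : ((({a, b, c} : Finset (Pt n)) : Set (Pt n))) = {a, b, c} := by simp
  rw [this, ← hull_QT]
  exact ⟨(x, y), ⟨hx, hy, hxy⟩, rfl⟩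

theorem of_tri {a b c y : Pt n} (h : y ∈ convexHull ℝ ((({a, b, c} : Finset (Pt n)) : Set (Pt n)))) :
    ∃ p q : ℝ, 0 ≤ p ∧ 0 ≤ q ∧ p + q ≤ 1 ∧ y = a + p • (b - a) + q • (c - a) := by
  have : ((({a, b, c} : Finset (Pt n)) : Set (Pt n))) = {a, b, c} := by simp
  rw [this, ← hull_QT] at h
  obtain ⟨⟨p, q⟩, hpq, rfl⟩ := h
  exact ⟨p, q, hpq.1, hpq.2.1, hpq.2.2, rfl⟩

theorem mid_eq (a b : Pt n) : midpoint ℝ a b = a + (1 / 2 : ℝ) • (b - a) := by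
  simp only [midpoint_eq_smul_add, invOf_eq_inv]
  module

theorem tri_inter {a b c d : Pt n} (hcd : c ≠ d) (h : {a, b, c} ∈ K.faces) (h' : {a, b, d} ∈ K.faces) (hc : c ≠ a ∧ c ≠ b) {y : Pt n}
    (hy : y ∈ convexHull ℝ ((({a, b, c} : Finset (Pt n)) : Set (Pt n))))
    (hy' : y ∈ convexHull ℝ ((({a, b, d} : Finset (Pt n)) : Set (Pt n)))) : y ∈ segment ℝ a b := by
  have h1 := Kinter h h' ⟨hy, hy'⟩
  refine hull_seg ?_ h1
  intro z hz
  simp only [Finset.mem_inter, Finset.mem_insert, Finset.mem_singleton] at hz ⊢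
  obtain ⟨hz1, hz2⟩ := hz
  grind

theorem three_false {a b c1 c2 c3 : Pt n} (hab : a ≠ b) (h1 : {a, b, c1} ∈ K.faces) (h2 : {a, b, c2} ∈ K.faces)
    (h3 : {a, b, c3} ∈ K.faces) (n1 : c1 ≠ a ∧ c1 ≠ b) (n2 : c2 ≠ a ∧ c2 ≠ b) (n3 : c3 ≠ a ∧ c3 ≠ b) (h12 : c1 ≠ c2) (h13 : c1 ≠ c3) (h23 : c2 ≠ c3)
    (hlp : LocallyPlanar K) : False := by
  have l1 := linI_face hab n1.1 n1.2 h1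
  have l2 := linI_face hab n2.1 n2.2 h2
  have l3 := linI_face hab n3.1 n3.2 h3
  set x := midpoint ℝ a b with hx
  have hx3 : x ∈ convexHull ℝ ((({a, b, c3} : Finset (Pt n)) : Set (Pt n))) := by
    have := in_tri (a := a) (b := b) (c := c3) (x := 1/2) (y := 0) (by norm_num) le_rfl (by norm_num)
    rw [hx, mid_eq]; simpa using this
  have hc3 : c3 ∈ convexHull ℝ ((({a, b, c3} : Finset (Pt n)) : Set (Pt n))) := subset_convexHull _ _ (by simp)
  have hxX : x ∈ K.space := SimplicialComplex.convexHull_subset_space h3 hx3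
  obtain ⟨C, -, ⟨ch⟩⟩ := chart_of (hlp x hxX)
  let ψ : ℝ × ℝ → Pt n := fun q => a + (1 / 2 + q.1) • (b - a) + (max q.2 0) • (c1 - a) + (max (-q.2) 0) • (c2 - a)
  have ψc : Continuous ψ := by unfold ψ; fun_prop
  let Q : Set (ℝ × ℝ) := {q | |q.1| ≤ 1/4 ∧ |q.2| ≤ 1/4}
  have hQ : Q ∈ 𝓝 (0 : ℝ × ℝ) := by
    refine Filter.mem_of_superset (Metric.ball_mem_nhds (0 : ℝ × ℝ) (ε := 1/4) (by norm_num)) ?_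
    intro q hq
    rw [Metric.mem_ball, Prod.dist_eq, max_lt_iff, Real.dist_eq, Real.dist_eq] at hq
    simp at hq
    exact ⟨by rw [one_div]; exact hq.1.le, by rw [one_div]; exact hq.2.le⟩
  have ψpos : ∀ q : ℝ × ℝ, 0 ≤ q.2 → ψ q = a + (1 / 2 + q.1) • (b - a) + q.2 • (c1 - a) := by
    intro q hq
    simp [ψ, hq]
  have ψneg : ∀ q : ℝ × ℝ, q.2 ≤ 0 → ψ q = a + (1 / 2 + q.1) • (b - a) + (-q.2) • (c2 - a) := by
    intro q hq
    simp [ψ, hq]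
  have mpos : ∀ q ∈ Q, 0 ≤ q.2 → ψ q ∈ convexHull ℝ ((({a, b, c1} : Finset (Pt n)) : Set (Pt n))) := by
    intro q hq h0
    obtain ⟨ha, hb⟩ := hq
    rw [abs_le] at ha hb
    rw [ψpos q h0]
    exact in_tri (by linarith) h0 (by linarith)
  have mneg : ∀ q ∈ Q, q.2 ≤ 0 → ψ q ∈ convexHull ℝ ((({a, b, c2} : Finset (Pt n)) : Set (Pt n))) := by
    intro q hq h0
    obtain ⟨ha, hb⟩ := hq
    rw [abs_le] at ha hb
    rw [ψneg q h0]
    exact in_tri (by linarith) (by linarith) (by linarith)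
  have ψX : ∀ q ∈ Q, ψ q ∈ K.space := by
    intro q hq
    rcases le_total 0 q.2 with h | h
    · exact SimplicialComplex.convexHull_subset_space h1 (mpos q hq h)
    · exact SimplicialComplex.convexHull_subset_space h2 (mneg q hq h)
  have ψ0 : ψ 0 = x := by
    rw [ψpos 0 (by simp), hx, mid_eq]; simp
  have mixed : ∀ q ∈ Q, ∀ q' ∈ Q, 0 ≤ q.2 → q'.2 ≤ 0 → ψ q = ψ q' → q = q' := by
    intro q hq q' hq' h0 h0' he
    have hs := tri_inter h12 h1 h2 n1 (mpos q hq h0) (by rw [he]; exact mneg q' hq' h0')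
    have hs' := hs
    rw [ψpos q h0] at hs
    rw [he, ψneg q' h0'] at hs'
    have e1 := l1.zero hs
    have e2 := l2.zero hs'
    rw [ψpos q h0, ψneg q' h0', e1, e2] at he
    have e3 := (l1.inj (y := 0) (y' := 0) (by simpa using he)).1
    exact Prod.ext (by linarith) (by linarith)
  have ψinj : InjOn ψ Q := by
    intro q hq q' hq' he
    rcases le_total 0 q.2 with h | h <;> rcases le_total 0 q'.2 with h' | h'
    · rw [ψpos q h, ψpos q' h'] at he
      have := l1.inj he
      exact Prod.ext (by linarith [this.1]) (by linarith [this.2])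
    · exact mixed q hq q' hq' h h' he
    · exact (mixed q' hq' q hq h' h he.symm).symm
    · rw [ψneg q h, ψneg q' h'] at he
      have := l2.inj he
      exact Prod.ext (by linarith [this.1]) (by linarith [this.2])
  have hQ' : Q ∩ ψ ⁻¹' ch.U ∈ 𝓝 (0 : ℝ × ℝ) := by
    have ht : Filter.Tendsto ψ (𝓝[Q] 0) (𝓝[K.space] x) := by
      have := (ψc.continuousWithinAt (s := Q) (x := 0)).tendsto_nhdsWithin (t := K.space) ψX
      rwa [ψ0] at this
    have h4 := ht ch.hU
    rw [nhdsWithin_eq_nhds.2 hQ] at h4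
    exact Filter.inter_mem hQ h4
  have hi := iod (ch.h ∘ ψ) 0 (Q ∩ ψ ⁻¹' ch.U) hQ' (ch.hc.comp ψc.continuousOn (fun q hq => hq.2)) (by
    intro q hq q' hq' he
    refine ψinj hq.1 hq'.1 ?_
    have := congrArg ch.g he
    simpa only [Function.comp, ch.gh _ hq.2, ch.gh _ hq'.2] using this)
  rw [Function.comp_apply, ψ0] at hi
  have hxU : x ∈ ch.U := mem_of_mem_nhdsWithin hxX ch.hU
  have h4 := ch.hc x hxU hi
  have hN : ch.U ∩ ch.h ⁻¹' ((ch.h ∘ ψ) '' (Q ∩ ψ ⁻¹' ch.U)) ∈ 𝓝[K.space] x := by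
    have h5 : 𝓝[ch.U] x = 𝓝[K.space] x := by
      apply le_antisymm (nhdsWithin_mono _ ch.hUX)
      rw [← nhdsWithin_inter_of_mem' (t := ch.U) ch.hU]
      exact nhdsWithin_mono _ inter_subset_right
    rw [← h5]
    exact Filter.inter_mem self_mem_nhdsWithin h4
  have hc3x : c3 ≠ x := by
    intro h
    have := l3.zero (x := 0) (y := 1) (by
      have h6 : a + (0:ℝ) • (b - a) + (1:ℝ) • (c3 - a) = c3 := by module
      rw [h6, h]; exact midpoint_mem_segment a b)
    norm_num at this
  obtain ⟨u, hu0, hu1, ⟨hyU, q, ⟨hqQ, hqU⟩, hq⟩, hys, -⟩ := seg_acc (face_seg h3 hx3 hc3) hc3x hN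
  have hyq : ψ q = x + u • (c3 - x) := by
    have := congrArg ch.g hq
    simpa only [Function.comp, ch.gh _ hqU, ch.gh _ hyU] using this
  have hy3 := (convex_convexHull ℝ _).segment_subset hx3 hc3 hys
  have hseg : x + u • (c3 - x) ∈ segment ℝ a b := by
    rw [← hyq] at hy3 ⊢
    rcases le_total 0 q.2 with h | h
    · exact tri_inter h13 h1 h3 n1 (mpos q hqQ h) hy3
    · exact tri_inter h23 h2 h3 n2 (mneg q hqQ h) hy3
  have h7 : x + u • (c3 - x) = a + ((1 - u) / 2) • (b - a) + u • (c3 - a) := by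
    rw [hx, mid_eq]; module
  rw [h7] at hseg
  exact hu0.ne' (l3.zero hseg)

theorem tris_le2 (hfin : K.faces.Finite) (hlp : LocallyPlanar K) :
    ∀ e : Finset (Pt n), e.card = 2 → ((tris hfin).filter (fun t => e ⊆ t)).card ≤ 2 := by
  intro e he
  obtain ⟨a, b, hab, rfl⟩ := Finset.card_eq_two.1 he
  by_contra hc
  push Not at hc
  obtain ⟨t1, t2, t3, m1, m2, m3, h12, h13, h23⟩ := Finset.two_lt_card_iff.1 hc
  simp only [Finset.mem_filter, mem_tris] at m1 m2 m3
  obtain ⟨c1, x1, y1, rfl⟩ := tri_third hab m1.1.2 m1.2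
  obtain ⟨c2, x2, y2, rfl⟩ := tri_third hab m2.1.2 m2.2
  obtain ⟨c3, x3, y3, rfl⟩ := tri_third hab m3.1.2 m3.2
  exact three_false hab m1.1.1 m2.1.1 m3.1.1 ⟨x1, y1⟩ ⟨x2, y2⟩ ⟨x3, y3⟩ (by rintro rfl; exact h12 rfl)
    (by rintro rfl; exact h13 rfl) (by rintro rfl; exact h23 rfl) hlp

theorem surf_tris (hfin : K.faces.Finite) (hdim : TwoDimensional K) (hlp : LocallyPlanar K) (hconn : IsPreconnected K.space) :
    Surf (tris hfin) :=
  ⟨fun _ ht => (mem_tris.1 ht).2, tris_le2 hfin hlp, tris_link hfin hdim hlp, tris_conn hfin hdim hlp hconn⟩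

theorem tris_nonempty (hfin : K.faces.Finite) (hdim : TwoDimensional K) (hlp : LocallyPlanar K) (hne : K.faces.Nonempty) :
    (tris hfin).Nonempty := by
  obtain ⟨s, hs⟩ := hne
  obtain ⟨t, ht, -⟩ := face_tri hfin hdim hlp hs
  exact ⟨t, ht⟩

theorem rev_dir (hfin : K.faces.Finite) (hdim : TwoDimensional K) (hne : K.faces.Nonempty)
    (hconn : IsConnected K.space) (hlp : LocallyPlanar K) (hχ : eulerChar K = 2) :
    Nonempty (↥K.space ≃ₜ ↥(Metric.sphere (0 : EuclideanSpace ℝ (Fin 3)) 1)) := by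
  have hT := surf_tris hfin hdim hlp hconn.isPreconnected
  have hn := tris_nonempty hfin hdim hlp hne
  rw [euler_tris hfin hdim hlp] at hχ
  obtain ⟨hcl, hH⟩ := euler_two hT hn hχ
  have := sphere_of hT (geo_tris hfin) hcl hH hn
  rwa [sp_tris hfin hdim hlp] at this

theorem one_false {a b c : Pt n} (hfin : K.faces.Finite) (hdim : TwoDimensional K) (hlp : LocallyPlanar K) (hab : a ≠ b) (h : {a, b, c} ∈ K.faces) (n1 : c ≠ a ∧ c ≠ b)
    (huniq : ∀ t ∈ tris hfin, {a, b} ⊆ t → t = {a, b, c}) (hpl : HasPlanarNbhd K (midpoint ℝ a b)) : False := by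
  have l1 := linI_face hab n1.1 n1.2 h
  obtain ⟨ch⟩ := chart_planar hpl
  set x := midpoint ℝ a b with hx
  have hxt : x ∈ convexHull ℝ ((({a, b, c} : Finset (Pt n)) : Set (Pt n))) := by
    have := in_tri (a := a) (b := b) (c := c) (x := 1/2) (y := 0) (by norm_num) le_rfl (by norm_num)
    rw [hx, mid_eq]; simpa using this
  have he : {a, b} ∈ K.faces := K.down_closed h (by intro z; simp; tauto) (by simp)
  have hxX : x ∈ K.space := SimplicialComplex.convexHull_subset_space h hxt
  have hxU : x ∈ ch.U := mem_of_mem_nhdsWithin hxX ch.hU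
  let L : ℝ × ℝ →ₗ[ℝ] Pt n := (LinearMap.fst ℝ ℝ ℝ).smulRight (b - a) + (LinearMap.snd ℝ ℝ ℝ).smulRight (c - a)
  have hL : ∀ p q : ℝ, L (p, q) = p • (b - a) + q • (c - a) := fun p q => by simp [L]
  have hLk : LinearMap.ker L = ⊥ := by
    rw [LinearMap.ker_eq_bot']
    rintro ⟨p, q⟩ h0
    rw [hL] at h0
    exact Prod.ext (l1 p q h0).1 (l1 p q h0).2
  obtain ⟨R, hR⟩ := L.exists_leftInverse_of_injective hLk
  have hRL : ∀ q, R (L q) = q := fun q => by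
    rw [← LinearMap.comp_apply, hR]; rfl
  have Rc : Continuous R := R.continuous_of_finiteDimensional
  have key : ∀ p q : ℝ, R (a + p • (b - a) + q • (c - a) - a) = (p, q) := by
    intro p q
    rw [← hRL (p, q), hL]; congr 1; module
  let O := {y : Pt n | ∀ s ∈ K.faces, y ∈ convexHull ℝ (s : Set (Pt n)) → {a, b} ⊆ s}
  have hO : O ∈ 𝓝 x := star_nhds hfin (edge_star hab he)
  have hin : ∀ y ∈ O ∩ K.space, y ∈ convexHull ℝ ((({a, b, c} : Finset (Pt n)) : Set (Pt n))) := by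
    rintro y ⟨h1, h2⟩
    rw [← sp_tris hfin hdim hlp, mem_sp] at h2
    obtain ⟨t, ht, hy⟩ := h2
    rw [huniq t ht (h1 t (mem_tris.1 ht).1 hy)] at hy
    exact hy
  have hW : ch.W ∩ univ ∈ 𝓝 (ch.h x) := by
    have := ch.hm x hxU
    rw [inter_univ] at this ⊢
    exact ch.hW.mem_nhds this
  have hW' : (ch.W ∩ univ) ∩ ch.g ⁻¹' O ∈ 𝓝 (ch.h x) := by
    refine Filter.inter_mem hW ?_
    have := ch.gc.continuousAt hW
    apply this
    rw [ch.gh x hxU]; exact hO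
  have hi := iod (fun w => R (ch.g w - a)) (ch.h x) _ hW'
    (Rc.comp_continuousOn ((ch.gc.mono inter_subset_left).sub continuousOn_const)) (by
      intro w hw w' hw' hww
      obtain ⟨p, q, -, -, -, e1⟩ := of_tri (hin _ ⟨hw.2, ch.hUX (ch.gm w hw.1)⟩)
      obtain ⟨p', q', -, -, -, e2⟩ := of_tri (hin _ ⟨hw'.2, ch.hUX (ch.gm w' hw'.1)⟩)
      simp only [e1, e2, key] at hww
      rw [Prod.mk.injEq] at hww
      have : ch.g w = ch.g w' := by rw [e1, e2, hww.1, hww.2]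
      rw [← ch.hg w hw.1, this, ch.hg w' hw'.1])
  have hx0 : R (ch.g (ch.h x) - a) = (1/2, 0) := by
    rw [ch.gh x hxU, ← key, hx, mid_eq]; simp
  simp only [hx0] at hi
  obtain ⟨ε, hε, w, hw, hw2⟩ := int_dir (mem_interior_iff_mem_nhds.2 hi) (0, -1)
  obtain ⟨p, q, -, hq, -, e1⟩ := of_tri (hin _ ⟨hw.2, ch.hUX (ch.gm w hw.1)⟩)
  simp only [e1, key] at hw2
  have := congrArg Prod.snd hw2
  simp at this
  linarith

theorem closed_tris (hfin : K.faces.Finite) (hdim : TwoDimensional K) (hlp : LocallyPlanar K)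
    (hpl : ∀ x ∈ K.space, HasPlanarNbhd K x) : ClosedS (tris hfin) := by
  intro e he
  obtain ⟨h2, t, ht, het⟩ := mem_edgesOf.1 he
  have hle := tris_le2 hfin hlp e h2
  have hpos : 0 < ((tris hfin).filter (fun t => e ⊆ t)).card := Finset.card_pos.2 ⟨t, by simp [ht, het]⟩
  have hne1 : ((tris hfin).filter (fun t => e ⊆ t)).card ≠ 1 := by
    intro h1
    obtain ⟨t', ht'⟩ := Finset.card_eq_one.1 h1
    obtain ⟨a, b, hab, rfl⟩ := Finset.card_eq_two.1 h2
    obtain ⟨c, hca, hcb, rfl⟩ := tri_third hab (mem_tris.1 ht).2 het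
    have hsub : ∀ s ∈ tris hfin, {a, b} ⊆ s → s = t' := by
      intro s hs hes
      have : s ∈ (tris hfin).filter (fun t => {a, b} ⊆ t) := by simp only [Finset.mem_filter]; exact ⟨hs, hes⟩
      rw [ht'] at this; simpa using this
    refine one_false hfin hdim hlp hab (mem_tris.1 ht).1 ⟨hca, hcb⟩ (fun s hs hes => ?_) (hpl _ ?_)
    · rw [hsub s hs hes, ← hsub _ ht het]
    · refine SimplicialComplex.convexHull_subset_space (mem_tris.1 ht).1 (hull_mono het ?_)
      rw [seg_hull]; exact midpoint_mem_segment a b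
  show ((tris hfin).filter (fun t => e ⊆ t)).card = 2
  omega

end Local3

end PartI

section PartJ
section Fwd
open Set Topology

set_option linter.unusedSectionVars false
set_option linter.unusedSimpArgs false

variable [DecidableEq (Pt n)] {K : SimplicialComplex ℝ (Pt n)}

theorem mid_avoid_aux {w o m y : Pt n} (hwo : w ≠ o) (hm : m = w + (1 / 2 : ℝ) • (o - w))
    (hy : y ∈ segment ℝ w m) : y ≠ o := by
  rw [segment_eq_image'] at hy
  obtain ⟨t, ht, rfl⟩ := hy
  intro h
  have h2 : (1 - t / 2) • (o - w) = 0 := by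
    have h3 : o - w = (t / 2) • (o - w) := by
      conv_lhs => rw [← h]
      simp only [hm]
      module
    rw [sub_smul, one_smul, ← h3, sub_self]
  rcases smul_eq_zero.1 h2 with h3 | h3
  · have := ht.2
    linarith
  · exact hwo (sub_eq_zero.1 h3).symm

theorem mid_avoid {u v w y : Pt n} {s : Finset (Pt n)} (huv : u ≠ v)
    (hw : w ∈ ({u, v} : Finset (Pt n))) (hy : y ∈ segment ℝ w (midpoint ℝ u v)) (hws : w ∉ s)
    (h1 : y ∈ convexHull ℝ ((({u, v} ∩ s : Finset (Pt n))) : Set (Pt n))) : False := by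
  rw [Finset.mem_insert, Finset.mem_singleton] at hw
  rcases hw with rfl | rfl
  · refine mid_avoid_aux huv (mid_eq w v) hy (hull_sing (u := v) ?_ h1)
    intro z hz
    simp only [Finset.mem_inter, Finset.mem_insert, Finset.mem_singleton] at hz ⊢
    rcases hz with ⟨rfl | rfl, hz⟩
    · exact absurd hz hws
    · rfl
  · rw [midpoint_comm] at hy
    refine mid_avoid_aux huv.symm (mid_eq w u) hy (hull_sing (u := u) ?_ h1)
    intro z hz
    simp only [Finset.mem_inter, Finset.mem_insert, Finset.mem_singleton] at hz ⊢
    rcases hz with ⟨rfl | rfl, hz⟩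
    · rfl
    · exact absurd hz hws


theorem sphere_minus (p : ↥(Metric.sphere (0 : EuclideanSpace ℝ (Fin 3)) 1)) :
    Nonempty (↥({p}ᶜ : Set ↥(Metric.sphere (0 : EuclideanSpace ℝ (Fin 3)) 1)) ≃ₜ ℝ × ℝ) := by
  have : Fact (Module.finrank ℝ (EuclideanSpace ℝ (Fin 3)) = 2 + 1) := ⟨by simp⟩
  have e1 := (stereographic' 2 p).toHomeomorphSourceTarget
  have e2 := (EuclideanSpace.equiv (Fin 2) ℝ).toHomeomorph.trans Homeomorph.finTwoArrow
  exact ⟨(Homeomorph.setCongr (stereographic'_source p).symm).trans (e1.trans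
    ((Homeomorph.setCongr (stereographic'_target p)).trans ((Homeomorph.Set.univ _).trans e2)))⟩

theorem space_minus (f : ↥K.space ≃ₜ ↥(Metric.sphere (0 : EuclideanSpace ℝ (Fin 3)) 1)) {x : Pt n} (hx : x ∈ K.space) :
    Nonempty (↥(K.space \ {x}) ≃ₜ ℝ × ℝ) := by
  obtain ⟨e⟩ := sphere_minus (f ⟨x, hx⟩)
  have e1 := f.symm.image ({f ⟨x, hx⟩}ᶜ)
  have e2 := (Topology.IsEmbedding.subtypeVal (p := fun y => y ∈ K.space)).homeomorphImage (f.symm '' ({f ⟨x, hx⟩}ᶜ))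
  have h : Subtype.val '' (f.symm '' ({f ⟨x, hx⟩}ᶜ)) = K.space \ {x} := by
    ext y
    constructor
    · rintro ⟨_, ⟨q, hq, rfl⟩, rfl⟩
      refine ⟨(f.symm q).2, fun h => hq ?_⟩
      have h2 : f.symm q = ⟨x, hx⟩ := Subtype.ext h
      show q = f ⟨x, hx⟩
      rw [← h2, f.apply_symm_apply]
    · rintro ⟨hy, hyx⟩
      refine ⟨⟨y, hy⟩, ⟨f ⟨y, hy⟩, fun h => hyx ?_, f.symm_apply_apply _⟩, rfl⟩
      exact congrArg Subtype.val (f.injective h)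
  exact ⟨((Homeomorph.setCongr h).symm.trans (e2.symm.trans e1.symm)).trans e⟩

theorem planar_of (f : ↥K.space ≃ₜ ↥(Metric.sphere (0 : EuclideanSpace ℝ (Fin 3)) 1)) : ∀ x ∈ K.space, HasPlanarNbhd K x := by
  intro x hx
  have hne : f.symm (-(f ⟨x, hx⟩)) ≠ ⟨x, hx⟩ := by
    intro h
    have h2 := congrArg f h
    rw [f.apply_symm_apply] at h2
    exact ne_neg_of_mem_unit_sphere ℝ _ h2.symm
  set z := f.symm (-(f ⟨x, hx⟩)) with hz
  obtain ⟨e⟩ := space_minus f z.2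
  refine ⟨K.space \ {(z : Pt n)}, sdiff_subset, ?_, univ, isOpen_univ, ⟨e.trans (Homeomorph.Set.univ _).symm⟩⟩
  have : ({(z : Pt n)}ᶜ : Set (Pt n)) ∈ 𝓝 x := isOpen_compl_singleton.mem_nhds (by
    intro h
    exact hne (Subtype.ext (Eq.symm h)))
  exact Filter.inter_mem self_mem_nhdsWithin (mem_nhdsWithin_of_mem_nhds this)

theorem conn_of (f : ↥K.space ≃ₜ ↥(Metric.sphere (0 : EuclideanSpace ℝ (Fin 3)) 1)) : IsConnected K.space := by
  have h1 : IsConnected (Metric.sphere (0 : EuclideanSpace ℝ (Fin 3)) 1) := by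
    apply isConnected_sphere _ _ zero_le_one
    rw [← Module.finrank_eq_rank]
    simp
  rw [isConnected_iff_connectedSpace] at h1 ⊢
  exact f.symm.surjective.connectedSpace f.symm.continuous

theorem carrier_ex {x : Pt n} (hx : x ∈ K.space) : ∃ s ∈ K.faces, x ∈ convexHull ℝ (s : Set (Pt n)) ∧
    ∀ s' ∈ K.faces, x ∈ convexHull ℝ (s' : Set (Pt n)) → s ⊆ s' := by
  have hex : ∃ k, ∃ s ∈ K.faces, x ∈ convexHull ℝ (s : Set (Pt n)) ∧ s.card = k := by
    obtain ⟨s, hs, hxs⟩ := SimplicialComplex.mem_space_iff.1 hx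
    exact ⟨_, s, hs, hxs, rfl⟩
  classical
  obtain ⟨s, hs, hxs, hk⟩ := Nat.find_spec hex
  refine ⟨s, hs, hxs, fun s' hs' hxs' => ?_⟩
  have h1 := Kinter hs hs' ⟨hxs, hxs'⟩
  have h2 : (s ∩ s').Nonempty := by
    have := convexHull_nonempty_iff.1 ⟨x, h1⟩
    exact_mod_cast this
  have h3 := Nat.find_min' hex ⟨s ∩ s', K.down_closed hs Finset.inter_subset_left h2, h1, rfl⟩
  have h4 := Finset.eq_of_subset_of_card_le (Finset.inter_subset_left (s₁ := s) (s₂ := s')) (by omega)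
  rw [← h4]; exact Finset.inter_subset_right

def stO (K : SimplicialComplex ℝ (Pt n)) (v : Pt n) : Set (Pt n) :=
  {y | ∀ s ∈ K.faces, y ∈ convexHull ℝ (s : Set (Pt n)) → {v} ⊆ s}

theorem stO_open (hfin : K.faces.Finite) (v : Pt n) : IsOpen (stO K v) := by
  rw [isOpen_iff_mem_nhds]
  intro x hx
  exact star_nhds hfin hx

theorem stO_cocycle (hfin : K.faces.Finite) {c : Finset (Pt n) → ZMod 2} (hco : ∀ t ∈ tris hfin, ∑ e ∈ t.powersetCard 2, c e = 0)
    {u v w x : Pt n} (hx : x ∈ K.space) (hu : x ∈ stO K u) (hv : x ∈ stO K v) (hw : x ∈ stO K w) :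
    (if u = v then 0 else c {u, v}) + (if v = w then 0 else c {v, w}) = (if u = w then 0 else c {u, w}) := by
  obtain ⟨s, hs, hxs⟩ := SimplicialComplex.mem_space_iff.1 hx
  have h1 := hu s hs hxs
  have h2 := hv s hs hxs
  have h3 := hw s hs hxs
  rw [Finset.singleton_subset_iff] at h1 h2 h3
  have two : ∀ z : ZMod 2, z + z = 0 := fun z => CharTwo.add_self_eq_zero z
  by_cases huv : u = v
  · subst huv; simp
  by_cases hvw : v = w
  · subst hvw; simp
  by_cases huw : u = w
  · subst huw
    rw [if_neg huv, if_neg hvw, if_pos rfl, Finset.pair_comm v u, two]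
  rw [if_neg huv, if_neg hvw, if_neg huw]
  have ht : {u, v, w} ∈ tris hfin := by
    refine mem_tris.2 ⟨K.down_closed hs ?_ (by simp), Finset.card_eq_three.2 ⟨u, v, w, huv, huw, hvw, rfl⟩⟩
    intro z hz
    simp at hz
    rcases hz with rfl | rfl | rfl <;> assumption
  have h4 := hco _ ht
  have m2 : ({v, w} : Finset (Pt n)) ≠ {u, w} := by
    intro h
    have : v ∈ ({u, w} : Finset (Pt n)) := by rw [← h]; simp
    simp only [Finset.mem_insert, Finset.mem_singleton] at this
    rcases this with h | h
    · exact huv h.symm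
    · exact hvw h
  have m3 : ({u, v} : Finset (Pt n)) ≠ {u, w} := by
    intro h
    have : v ∈ ({u, w} : Finset (Pt n)) := by rw [← h]; simp
    simp only [Finset.mem_insert, Finset.mem_singleton] at this
    rcases this with h | h
    · exact huv h.symm
    · exact hvw h
  have m1 : ({u, v} : Finset (Pt n)) ≠ {v, w} := by
    intro h
    have : u ∈ ({v, w} : Finset (Pt n)) := by rw [← h]; simp
    simp only [Finset.mem_insert, Finset.mem_singleton] at this
    tauto
  have i1 : ({u, v} : Finset (Pt n)) ∉ ({{v, w}, {u, w}} : Finset (Finset (Pt n))) := by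
    simp only [Finset.mem_insert, Finset.mem_singleton]
    tauto
  have i2 : ({v, w} : Finset (Pt n)) ∉ ({{u, w}} : Finset (Finset (Pt n))) := by
    simpa only [Finset.mem_singleton] using m2
  have h5 : ({u, v, w} : Finset (Pt n)).powersetCard 2 = {{u, v}, {v, w}, {u, w}} := by
    symm
    apply Finset.eq_of_subset_of_card_le
    · intro e he
      simp only [Finset.mem_insert, Finset.mem_singleton] at he
      rw [Finset.mem_powersetCard]
      rcases he with rfl | rfl | rfl
      · exact ⟨by intro z; simp; tauto, Finset.card_pair huv⟩
      · exact ⟨by intro z; simp; tauto, Finset.card_pair hvw⟩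
      · exact ⟨by intro z; simp; tauto, Finset.card_pair huw⟩
    · rw [Finset.card_powersetCard, Finset.card_eq_three.2 ⟨u, v, w, huv, huw, hvw, rfl⟩,
        Finset.card_insert_of_notMem i1, Finset.card_insert_of_notMem i2, Finset.card_singleton]
      decide
  rw [h5, Finset.sum_insert i1, Finset.sum_insert i2, Finset.sum_singleton] at h4
  have := two (c {u, w})
  linear_combination h4 - this

theorem cocycle_sec (φ : ℝ × ℝ → Pt n) (hφ : Continuous φ) (O : Pt n → Set (Pt n)) (hO : ∀ v, IsOpen (O v)) 
    (hcov : ∀ x, ∃ v, φ x ∈ O v) (d : Pt n → Pt n → ZMod 2) (d0 : ∀ u, d u u = 0)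
    (hd : ∀ x u v w, φ x ∈ O u → φ x ∈ O v → φ x ∈ O w → d u v + d v w = d u w) :
    ∃ k : Pt n → ℝ × ℝ → ZMod 2, (∀ v, ContinuousOn (k v) (φ ⁻¹' (O v))) ∧
      ∀ x u v, φ x ∈ O u → φ x ∈ O v → d u v = k u x + k v x := by
  choose idx hidx using hcov
  let Z : FiberBundleCore (Pt n) (ℝ × ℝ) (ZMod 2) :=
    { baseSet := fun v => φ ⁻¹' (O v)
      isOpen_baseSet := fun v => (hO v).preimage hφ
      indexAt := idx
      mem_baseSet_at := hidx
      coordChange := fun u v _ z => z + d u v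
      coordChange_self := fun u x hx z => by simp [d0]
      continuousOn_coordChange := fun u v => by fun_prop
      coordChange_comp := fun u v w x hx z => by
        rw [add_assoc, hd x u v w hx.1.1 hx.1.2 hx.2] }
  have hcov : IsCoveringMap Z.proj := IsFiberBundle.isCoveringMap fun x => ⟨Z.localTriv (idx x), hidx x⟩
  obtain ⟨s, ⟨-, hs⟩, -⟩ := hcov.existsUnique_continuousMap_lifts (ContinuousMap.id (ℝ × ℝ)) 0 (⟨0, (0 : ZMod 2)⟩ : Z.TotalSpace) rfl
  have hs' : ∀ x, (s x).proj = x := fun x => congrFun hs x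
  refine ⟨fun v x => (Z.localTriv v (s x)).2, fun v => ?_, fun x u v hu hv => ?_⟩
  · have h1 : ContinuousOn (Z.localTriv v) (Z.localTriv v).source := (Z.localTriv v).continuousOn_toFun
    refine continuous_snd.comp_continuousOn (h1.comp s.continuous.continuousOn ?_)
    intro x hx
    rw [(Z.localTriv v).mem_source]
    show (s x).proj ∈ φ ⁻¹' (O v)
    rw [hs' x]; exact hx
  · simp only [FiberBundleCore.localTriv_apply]
    have e := hs' x
    have h1 := hidx x
    have h2 := hd x (idx x) u v h1 hu hv
    have key : ∀ y p q r : ZMod 2, p + q = r → q = (y + p) + (y + r) := by decide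
    have e' : idx (s x).1 = idx x := by rw [e]
    have h3 := key (s x).2 (d (idx x) u) (d u v) (d (idx x) v) h2
    rw [← e'] at h3
    exact h3

theorem cocycle_triv (hfin : K.faces.Finite) (hdim : TwoDimensional K) (hlp : LocallyPlanar K) (hne : K.faces.Nonempty)
    (f : ↥K.space ≃ₜ ↥(Metric.sphere (0 : EuclideanSpace ℝ (Fin 3)) 1)) (c : Finset (Pt n) → ZMod 2)
    (hco : ∀ t ∈ tris hfin, ∑ e ∈ t.powersetCard 2, c e = 0) :
    ∃ g : Pt n → ZMod 2, ∀ e ∈ edgesOf (tris hfin), c e = ∑ v ∈ e, g v := by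
  obtain ⟨t, ht⟩ := tris_nonempty hfin hdim hlp hne
  obtain ⟨ht1, ht2⟩ := mem_tris.1 ht
  obtain ⟨a, b, d, hab, had, hbd, rfl⟩ := Finset.card_eq_three.1 ht2
  obtain ⟨x0, hx0, hx0n⟩ : ∃ x0 ∈ K.space, ∀ e ∈ K.faces, e.card = 2 → x0 ∉ convexHull ℝ (e : Set (Pt n)) := by
    have hin := in_tri (a := a) (b := b) (c := d) (x := 1/3) (y := 1/3) (by norm_num) (by norm_num) (by norm_num)
    refine ⟨_, SimplicialComplex.convexHull_subset_space ht1 hin, ?_⟩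
    intro e he he2 hx
    have h1 := Kinter he ht1 ⟨hx, hin⟩
    have l1 : LinI a b d := linI_face hab had.symm hbd.symm ht1
    have hcard : (e ∩ {a, b, d}).card ≤ 2 := by
      rw [← he2]; exact Finset.card_le_card Finset.inter_subset_left
    have hmiss : ∃ z ∈ ({a, b, d} : Finset (Pt n)), z ∉ e ∩ {a, b, d} := by
      by_contra hno
      push Not at hno
      have := Finset.card_le_card (show ({a, b, d} : Finset (Pt n)) ⊆ e ∩ {a, b, d} from hno)
      omega
    obtain ⟨z, hz, hze⟩ := hmiss
    have hsub : ∀ y ∈ e ∩ {a, b, d}, y ≠ z ∧ (y = a ∨ y = b ∨ y = d) := by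
      intro y hy
      refine ⟨fun h => hze (h ▸ hy), ?_⟩
      simpa using (Finset.mem_inter.1 hy).2
    simp only [Finset.mem_insert, Finset.mem_singleton] at hz
    rcases hz with rfl | rfl | rfl
    · have h2 := hull_seg (u := b) (v := d) (s := e ∩ {z, b, d}) (by
        intro y hy; have := hsub y hy; simp; tauto) h1
      rw [segment_eq_image'] at h2
      obtain ⟨u, -, hu⟩ := h2
      have h3 : b + u • (d - b) = z + (1 - u) • (b - z) + u • (d - z) := by module
      have := l1.inj (h3.symm.trans hu)
      linarith [this.1, this.2]
    · have h2 := hull_seg (u := a) (v := d) (s := e ∩ {a, z, d}) (by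
        intro y hy; have := hsub y hy; simp; tauto) h1
      rw [segment_eq_image'] at h2
      obtain ⟨u, -, hu⟩ := h2
      have h3 : a + u • (d - a) = a + (0:ℝ) • (z - a) + u • (d - a) := by module
      have := l1.inj (h3.symm.trans hu)
      linarith [this.1, this.2]
    · have h2 := hull_seg (u := a) (v := b) (s := e ∩ {a, b, z}) (by
        intro y hy; have := hsub y hy; simp; tauto) h1
      have := l1.zero h2
      norm_num at this
  obtain ⟨F⟩ := space_minus f hx0
  let φ : ℝ × ℝ → Pt n := fun q => (F.symm q : Pt n)
  have hφ : Continuous φ := continuous_subtype_val.comp F.symm.continuous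
  have hφX : ∀ q, φ q ∈ K.space := fun q => (F.symm q).2.1
  obtain ⟨k, kc, hk⟩ := cocycle_sec φ hφ (stO K) (stO_open hfin) (by
      intro q
      obtain ⟨s, hs, -, hmin⟩ := carrier_ex (hφX q)
      obtain ⟨v, hv⟩ := K.nonempty_of_mem_faces hs
      exact ⟨v, fun s' hs' hx => by rw [Finset.singleton_subset_iff]; exact hmin s' hs' hx hv⟩)
    (fun u v => if u = v then 0 else c {u, v}) (by simp)
    (fun q u v w hu hv hw => stO_cocycle hfin hco (hφX q) hu hv hw)
  classical
  let ψ : Pt n → ℝ × ℝ := fun y => if hy : y ∈ K.space \ {x0} then F ⟨y, hy⟩ else 0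
  have hψ : ContinuousOn ψ (K.space \ {x0}) := by
    rw [continuousOn_iff_continuous_domRestrict]
    convert F.continuous using 1
    funext y
    exact dif_pos y.2
  have hφψ : ∀ y ∈ K.space \ {x0}, φ (ψ y) = y := by
    intro y hy
    simp only [ψ, φ, dif_pos hy, F.symm_apply_apply]
  refine ⟨fun v => k v (ψ v), ?_⟩
  intro e he
  obtain ⟨he2, t', ht', het'⟩ := mem_edgesOf.1 he
  have hef : e ∈ K.faces := K.down_closed (mem_tris.1 ht').1 het' (Finset.card_pos.1 (by omega))
  obtain ⟨u, v, huv, rfl⟩ := Finset.card_eq_two.1 he2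
  rw [Finset.sum_pair huv]
  have hxe : midpoint ℝ u v ∈ convexHull ℝ ((({u, v} : Finset (Pt n)) : Set (Pt n))) := by
    rw [seg_hull]; exact midpoint_mem_segment u v
  have hE : convexHull ℝ ((({u, v} : Finset (Pt n)) : Set (Pt n))) ⊆ K.space \ {x0} := fun y hy =>
    ⟨SimplicialComplex.convexHull_subset_space hef hy, fun h => hx0n _ hef he2 (by
      have h' : y = x0 := h
      rwa [h'] at hy)⟩
  have half : ∀ w ∈ ({u, v} : Finset (Pt n)), midpoint ℝ u v ∈ stO K w ∧ k w (ψ (midpoint ℝ u v)) = k w (ψ w) := by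
    intro w hw
    have hwE : w ∈ convexHull ℝ ((({u, v} : Finset (Pt n)) : Set (Pt n))) := subset_convexHull _ _ hw
    have hwf : {w} ∈ K.faces := K.down_closed hef (by simpa using hw) (by simp)
    have hsegE : segment ℝ w (midpoint ℝ u v) ⊆ convexHull ℝ ((({u, v} : Finset (Pt n)) : Set (Pt n))) :=
      (convex_convexHull ℝ _).segment_subset hwE hxe
    have hst : segment ℝ w (midpoint ℝ u v) ⊆ stO K w := by
      intro y hy s hs hys
      have h1 := Kinter hef hs ⟨hsegE hy, hys⟩
      by_contra hws
      rw [Finset.singleton_subset_iff] at hws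
      exact mid_avoid huv hw hy hws h1
    refine ⟨hst (right_mem_segment ℝ _ _), ?_⟩
    have hpre : IsPreconnected (k w '' (ψ '' segment ℝ w (midpoint ℝ u v))) := by
      refine ((convex_segment w (midpoint ℝ u v)).isPreconnected.image ψ (hψ.mono (hsegE.trans hE))).image _ ((kc w).mono ?_)
      rintro _ ⟨y, hy, rfl⟩
      show φ (ψ y) ∈ stO K w
      rw [hφψ y (hE (hsegE hy))]
      exact hst hy
    exact hpre.subsingleton ⟨_, ⟨_, right_mem_segment ℝ _ _, rfl⟩, rfl⟩ ⟨_, ⟨_, left_mem_segment ℝ _ _, rfl⟩, rfl⟩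
  have hu := half u (by simp)
  have hv := half v (by simp)
  have h9 := hk (ψ (midpoint ℝ u v)) u v (by rw [hφψ _ (hE hxe)]; exact hu.1) (by rw [hφψ _ (hE hxe)]; exact hv.1)
  simp only [if_neg huv] at h9
  rw [h9, hu.2, hv.2]

theorem fwd_dir (hfin : K.faces.Finite) (hdim : TwoDimensional K) (hne : K.faces.Nonempty)
    (f : ↥K.space ≃ₜ ↥(Metric.sphere (0 : EuclideanSpace ℝ (Fin 3)) 1)) :
    IsConnected K.space ∧ LocallyPlanar K ∧ eulerChar K = 2 := by
  have hpl := planar_of f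
  have hlp : LocallyPlanar K := fun x hx => ⟨hx, Or.inl (hpl x hx)⟩
  have hcn := conn_of f
  refine ⟨hcn, hlp, ?_⟩
  rw [euler_tris hfin hdim hlp]
  exact euler_of_cocycle (surf_tris hfin hdim hlp hcn.isPreconnected) (tris_nonempty hfin hdim hlp hne)
    (closed_tris hfin hdim hlp hpl) (fun c hc => cocycle_triv hfin hdim hlp hne f c hc)

end Fwd

end PartJ

/-- `|K|` is homeomorphic to the unit sphere `S²` iff `|K|` is connected, `K` is
locally planar and `χ(K) = 2`. -/
theorem homeo_sphere_iff (K : SimplicialComplex ℝ (Pt n))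
    (hfin : K.faces.Finite) (hdim : TwoDimensional K) (hne : K.faces.Nonempty) :
    Nonempty (↥K.space ≃ₜ ↥(Metric.sphere (0 : EuclideanSpace ℝ (Fin 3)) 1)) ↔
      (IsConnected K.space ∧ LocallyPlanar K ∧ eulerChar K = 2) := by
  classical
  constructor
  · rintro ⟨f⟩
    exact fwd_dir hfin hdim hne f
  · rintro ⟨h1, h2, h3⟩
    exact rev_dir hfin hdim hne h1 h2 h3

end PaperAlg
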